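/- Let c>0, and let H be a graph with congestion at most c/(9+15c). Then there exists ε>0 such that every ε-sparse, (ε|G|^{1-c}, ε|G|^{1-c})-coherent graph G with |G|>1 contains H. -/

import Mathlib

noncomputable section

namespace PurePairs

open SimpleGraph

variable {V W : Type*}

/-- A pure pair in `G`: a pair of disjoint vertex sets that are complete
or anticomplete to each other. -/
def PurePair (G : SimpleGraph V) (A B : Set V) : Prop :=
  Disjoint A B ∧
    ((∀ a ∈ A, ∀ b ∈ B, G.Adj a b) ∨ (∀ a ∈ A, ∀ b ∈ B, ¬ G.Adj a b))

/-- `G` contains `H`: some induced subgraph of `G` is isomorphic to `H`. -/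
def Contains (G : SimpleGraph V) (H : SimpleGraph W) : Prop :=
  Nonempty (H ↪g G)

/-- The congestion of a graph `H`: the maximum (here: supremum, together with `0`)
of `1 - (|J|-1)/|E(J)|` over all subgraphs `J` of `H` with at least one edge.
If `H` has no edges this is `0`. -/
def congestion (H : SimpleGraph V) : ℝ :=
  sSup ({0} ∪ {x : ℝ | ∃ J : H.Subgraph, J.edgeSet.Nonempty ∧
    x = 1 - ((J.verts.ncard : ℝ) - 1) / (J.edgeSet.ncard : ℝ)})

/-- `A` is anticomplete to `B`: no edges between them. -/
def Anticomplete (G : SimpleGraph V) (A B : Set V) : Prop :=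
  ∀ a ∈ A, ∀ b ∈ B, ¬ G.Adj a b

/-- `A` covers `B`: every vertex of `B` has a neighbour in `A`. -/
def Covers (G : SimpleGraph V) (A B : Set V) : Prop :=
  ∀ b ∈ B, ∃ a ∈ A, G.Adj a b

/-- `G` is `ε`-sparse: every vertex has degree less than `ε|G|`. -/
def EpsSparse (G : SimpleGraph V) [Fintype V] (ε : ℝ) : Prop :=
  ∀ v : V, ((G.neighborSet v).ncard : ℝ) < ε * (Fintype.card V : ℝ)

/-- `G` is `(γ,δ)`-coherent: there is no pair of disjoint anticomplete sets `A`, `B`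
with `|A| ≥ γ` and `|B| ≥ δ`. -/
def Coherent (G : SimpleGraph V) (γ δ : ℝ) : Prop :=
  ¬ ∃ A B : Set V, Disjoint A B ∧ Anticomplete G A B ∧
      γ ≤ (A.ncard : ℝ) ∧ δ ≤ (B.ncard : ℝ)

/-- `N(X)`: the set of vertices with a neighbour in `X`. -/
def nbhd (G : SimpleGraph V) (X : Set V) : Set V :=
  {v | ∃ x ∈ X, G.Adj x v}

/-- A blockade: a family of nonempty pairwise disjoint vertex sets indexed by a
finite set of integers. -/
def IsBlockade (I : Finset ℤ) (A : ℤ → Set V) : Prop :=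
  (∀ i ∈ I, (A i).Nonempty) ∧
    ∀ i ∈ I, ∀ j ∈ I, i ≠ j → Disjoint (A i) (A j)

/-- The blockade `(A i : i ∈ I)` is `(γ,δ)`-divergent. -/
def Divergent (G : SimpleGraph V) (I : Finset ℤ) (A : ℤ → Set V) (γ δ : ℝ) : Prop :=
  ∃ i ∈ I, ∃ j ∈ I, i ≠ j ∧ ∃ X ⊆ A i, ∃ Y ⊆ A j,
    γ * ((A i).ncard : ℝ) ≤ (X.ncard : ℝ) ∧ δ * ((A j).ncard : ℝ) ≤ (Y.ncard : ℝ) ∧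
    Anticomplete G X Y

/-- The blockade `(A i : i ∈ I)` is `τ`-expanding. -/
def Expanding (G : SimpleGraph V) (I : Finset ℤ) (A : ℤ → Set V) (τ : ℝ) : Prop :=
  ∀ i ∈ I, ∀ j ∈ I, i ≠ j → ∀ X ⊆ A i,
    min (τ * (X.ncard : ℝ) / ((A i).ncard : ℝ)) (1/4)
      ≤ (((nbhd G X) ∩ A j).ncard : ℝ) / ((A j).ncard : ℝ)

/-- The linkage of the blockade `(A i : i ∈ I)` is at most `lam`. -/
def LinkageLE (G : SimpleGraph V) (I : Finset ℤ) (A : ℤ → Set V) (lam : ℝ) : Prop :=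
  ∀ i ∈ I, ∀ j ∈ I, i ≠ j → ∀ v ∈ A i,
    ((G.neighborSet v ∩ A j).ncard : ℝ) ≤ lam * ((A j).ncard : ℝ)

/-- The shrinkage of the blockade `(A i : i ∈ I)` is at most `σ`, i.e. its width is at
least `|G|^{1-σ}`. -/
def ShrinkageLE [Fintype V] (I : Finset ℤ) (A : ℤ → Set V) (σ : ℝ) : Prop :=
  ∀ i ∈ I, (Fintype.card V : ℝ) ^ (1 - σ) ≤ ((A i).ncard : ℝ)

/-- `(L 0, …, L k)` is a levelling in `G`. -/
def IsLevelling (G : SimpleGraph V) (L : ℕ → Set V) (k : ℕ) : Prop :=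
  1 ≤ k ∧ (L 0).ncard = 1 ∧
  (∀ i ≤ k, ∀ j ≤ k, i ≠ j → Disjoint (L i) (L j)) ∧
  (∀ i, 1 ≤ i → i ≤ k → Covers G (L (i-1)) (L i)) ∧
  (∀ i, 2 ≤ i → i ≤ k → ∀ h, h + 2 ≤ i → Anticomplete G (L h) (L i))

/-- The levelling `(L 0, …, L k)` reaches `C`, i.e. `(L 0, …, L k, C)` is a levelling. -/
def Reaches (G : SimpleGraph V) (L : ℕ → Set V) (k : ℕ) (C : Set V) : Prop :=
  IsLevelling G (fun i => if i = k + 1 then C else L i) (k + 1)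

/-- The levelling `(L 0, …, L k)` is `(B i : i ∈ I)`-rainbow. -/
def RainbowLevelling (I : Finset ℤ) (B : ℤ → Set V) (L : ℕ → Set V) (k : ℕ) : Prop :=
  ∃ q : ℕ → ℤ, (∀ i ≤ k, q i ∈ I ∧ L i ⊆ B (q i)) ∧
    ∀ i ≤ k, ∀ j ≤ k, q i = q j → i = j

/-- The levelling `(L 0, …, L k)` grades the blockade `(C j : j ∈ J)` (in some order). -/
def Grades (G : SimpleGraph V) (L : ℕ → Set V) (k : ℕ) (J : Finset ℤ) (C : ℤ → Set V) :
    Prop :=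
  Reaches G L k (⋃ j ∈ J, C j) ∧
  ∃ e : ℕ → ℤ, (∀ g < J.card, e g ∈ J) ∧
    (∀ g < J.card, ∀ h < J.card, e g = e h → g = h) ∧
    ∀ g < J.card, ∃ Y ⊆ L k,
      (∀ h, g ≤ h → h < J.card → Covers G Y (C (e h))) ∧
      (∀ h, h < g → Anticomplete G Y (C (e h)))

/-- The levelling `(L 0, …, L k)` grades the blockade `(C j : j ∈ J)` forwards. -/
def GradesFwd (G : SimpleGraph V) (L : ℕ → Set V) (k : ℕ) (J : Finset ℤ) (C : ℤ → Set V) :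
    Prop :=
  Reaches G L k (⋃ j ∈ J, C j) ∧
  ∀ j ∈ J, ∃ Y ⊆ L k,
    (∀ i ∈ J, j ≤ i → Covers G Y (C i)) ∧
    (∀ i ∈ J, i < j → Anticomplete G Y (C i))

/-- The levelling `(L 0, …, L k)` grades the blockade `(C j : j ∈ J)` backwards. -/
def GradesBwd (G : SimpleGraph V) (L : ℕ → Set V) (k : ℕ) (J : Finset ℤ) (C : ℤ → Set V) :
    Prop :=
  Reaches G L k (⋃ j ∈ J, C j) ∧
  ∀ j ∈ J, ∃ Y ⊆ L k,
    (∀ i ∈ J, i ≤ j → Covers G Y (C i)) ∧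
    (∀ i ∈ J, j < i → Anticomplete G Y (C i))

/-- Two levellings are parallel. -/
def Parallel (G : SimpleGraph V) (L : ℕ → Set V) (k : ℕ) (M : ℕ → Set V) (m : ℕ) : Prop :=
  L 0 = M 0 ∧
  Disjoint (⋃ j ∈ Finset.Icc 1 m, M j) (⋃ i ∈ Finset.Icc 1 k, L i) ∧
  Anticomplete G (⋃ j ∈ Finset.Icc 1 m, M j) (⋃ i ∈ Finset.Icc 1 k, L i)

/-- `(L, M, C)` is a bi-levelling, where `L` has height `k` and `M` has height `m`:
`C` is a blockade, `L, M` are parallel levellings both reaching the union of the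
blocks of `C`, and `L` grades `C` forwards. Its height is `k + m` and its length is
the length of `C`. -/
def IsBiLevelling (G : SimpleGraph V) (L : ℕ → Set V) (k : ℕ) (M : ℕ → Set V) (m : ℕ)
    (J : Finset ℤ) (C : ℤ → Set V) : Prop :=
  IsBlockade J C ∧ IsLevelling G L k ∧ IsLevelling G M m ∧ Parallel G L k M m ∧
    Reaches G M m (⋃ j ∈ J, C j) ∧ GradesFwd G L k J C

/-- A bi-grading: a bi-levelling in which `M` also grades `C` backwards. -/
def IsBiGrading (G : SimpleGraph V) (L : ℕ → Set V) (k : ℕ) (M : ℕ → Set V) (m : ℕ)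
    (J : Finset ℤ) (C : ℤ → Set V) : Prop :=
  IsBiLevelling G L k M m J C ∧ GradesBwd G M m J C

/-- The bi-levelling `(L, M, C)` is `(A i : i ∈ I)`-rainbow: each block of `C`, each
level of `L`, and each level of `M` other than `M 0 = L 0` is included in a block of
`A`, and distinct such sets lie in distinct blocks. -/
def RainbowBiLevelling (I : Finset ℤ) (A : ℤ → Set V)
    (L : ℕ → Set V) (k : ℕ) (M : ℕ → Set V) (m : ℕ)
    (J : Finset ℤ) (C : ℤ → Set V) : Prop :=
  ∃ (qc : ℤ → ℤ) (ql qm : ℕ → ℤ),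
    (∀ j ∈ J, qc j ∈ I ∧ C j ⊆ A (qc j)) ∧
    (∀ i ≤ k, ql i ∈ I ∧ L i ⊆ A (ql i)) ∧
    (∀ i, 1 ≤ i → i ≤ m → qm i ∈ I ∧ M i ⊆ A (qm i)) ∧
    (∀ j ∈ J, ∀ j' ∈ J, qc j = qc j' → j = j') ∧
    (∀ i ≤ k, ∀ i' ≤ k, ql i = ql i' → i = i') ∧
    (∀ i, 1 ≤ i → i ≤ m → ∀ i', 1 ≤ i' → i' ≤ m → qm i = qm i' → i = i') ∧
    (∀ j ∈ J, ∀ i ≤ k, qc j ≠ ql i) ∧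
    (∀ j ∈ J, ∀ i, 1 ≤ i → i ≤ m → qc j ≠ qm i) ∧
    (∀ i ≤ k, ∀ i', 1 ≤ i' → i' ≤ m → ql i ≠ qm i')

/-- Each block of `(C j : j ∈ J)` lies in a block of `(A i : i ∈ I)`; the `A`-size of
`C` is at least `η` when every block of `C` has size at least `η` times the size of the
block of `A` containing it. -/
def SizeGE (I : Finset ℤ) (A : ℤ → Set V) (J : Finset ℤ) (C : ℤ → Set V) (η : ℝ) : Prop :=
  ∀ j ∈ J, ∀ i ∈ I, C j ⊆ A i → η * ((A i).ncard : ℝ) ≤ ((C j).ncard : ℝ)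

/-- A `(B i : i ∈ I)`-rainbow induced path `p 0 - p 1 - ⋯ - p n` in `G`. -/
def RainbowPath (G : SimpleGraph V) (I : Finset ℤ) (B : ℤ → Set V)
    (n : ℕ) (p : ℕ → V) : Prop :=
  (∀ i ≤ n, ∀ j ≤ n, p i = p j → i = j) ∧
  (∀ i < n, G.Adj (p i) (p (i+1))) ∧
  (∀ i j, i + 1 < j → j ≤ n → ¬ G.Adj (p i) (p j)) ∧
  ∃ q : ℕ → ℤ, (∀ i ≤ n, q i ∈ I ∧ p i ∈ B (q i)) ∧
    ∀ i ≤ n, ∀ j ≤ n, q i = q j → i = j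

/-- A `(B i : i ∈ I)`-rainbow copy of `H` in `G`: an induced copy of `H` with each
vertex in a different block. -/
def RainbowCopy (G : SimpleGraph V) (I : Finset ℤ) (B : ℤ → Set V)
    (H : SimpleGraph W) : Prop :=
  ∃ (f : H ↪g G) (q : W → ℤ), Function.Injective q ∧ ∀ w : W, q w ∈ I ∧ f w ∈ B (q w)

/-- `(N,K,σ,lam,c)` forces `H`. -/
def Forces (H : SimpleGraph W) (N K : ℕ) (σ lam c : ℝ) : Prop :=
  ∀ {V : Type} [Fintype V] (G : SimpleGraph V),
    Coherent G ((Fintype.card V : ℝ) ^ (1 - c)) ((Fintype.card V : ℝ) ^ (1 - c)) →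
    N ≤ Fintype.card V →
    ∀ (I : Finset ℤ) (A : ℤ → Set V), IsBlockade I A → I.card = K →
      ShrinkageLE I A σ → LinkageLE G I A lam →
      RainbowCopy G I A H

/-- `p 0 - ⋯ - p n` is a handle of length `n` that can be added to (the graph induced
on) `S` inside the ambient graph `H`: an induced path of `H[S ∪ p]` of length at least
two whose ends lie in `S`, whose internal vertices avoid `S` and have degree two in
`H[S ∪ p]`. -/
def IsHandle (H : SimpleGraph V) (S : Set V) (n : ℕ) (p : ℕ → V) : Prop :=
  2 ≤ n ∧
  (∀ i ≤ n, ∀ j ≤ n, p i = p j → i = j) ∧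
  p 0 ∈ S ∧ p n ∈ S ∧
  (∀ i, 0 < i → i < n → p i ∉ S) ∧
  (∀ i < n, H.Adj (p i) (p (i+1))) ∧
  (∀ i j, i + 1 < j → j ≤ n → ¬ H.Adj (p i) (p j)) ∧
  (∀ i, 0 < i → i < n → ∀ w, (w ∈ S ∨ ∃ j ≤ n, w = p j) → H.Adj (p i) w →
    w = p (i-1) ∨ w = p (i+1))

/-- The vertex sets `S` such that the induced subgraph `H[S]` can be built, starting
from the two-vertex graph with no edges, by repeatedly adding handles of length at
least `β`. -/
inductive BuildableOn (H : SimpleGraph V) (β : ℕ) : Set V → Prop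
  | base (u v : V) (huv : u ≠ v) (hadj : ¬ H.Adj u v) : BuildableOn H β {u, v}
  | handle (S : Set V) (n : ℕ) (p : ℕ → V) (hS : BuildableOn H β S)
      (hh : IsHandle H S n p) (hn : β ≤ n) :
      BuildableOn H β (S ∪ {w | ∃ j ≤ n, w = p j})

/-- `H` is `β`-buildable. -/
def Buildable [Fintype V] (H : SimpleGraph V) (β : ℕ) : Prop :=
  BuildableOn H β Set.univ

/-- The vertex sets `S` such that the induced subgraph `H[S]` can be built, starting
from the null graph, by repeatedly adding a subleaf or a handle of length at least
`β`. -/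
inductive WeaklyBuildableOn (H : SimpleGraph V) (β : ℕ) : Set V → Prop
  | empty : WeaklyBuildableOn H β ∅
  | subleaf (S : Set V) (v : V) (hv : v ∉ S) (hdeg : (S ∩ H.neighborSet v).ncard ≤ 1)
      (hS : WeaklyBuildableOn H β S) : WeaklyBuildableOn H β (insert v S)
  | handle (S : Set V) (n : ℕ) (p : ℕ → V) (hS : WeaklyBuildableOn H β S)
      (hh : IsHandle H S n p) (hn : β ≤ n) :
      WeaklyBuildableOn H β (S ∪ {w | ∃ j ≤ n, w = p j})

/-- `H` is weakly `β`-buildable. -/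
def WeaklyBuildable [Fintype V] (H : SimpleGraph V) (β : ℕ) : Prop :=
  WeaklyBuildableOn H β Set.univ

/-!
Put `R = ⌊1 / c⌋`. A graph of small congestion has few edges in every subgraph, so when no vertex of
degree at most one is left, all but few vertices have degree two, and a long path through such
vertices is a handle of length `3 * R + 3`. Deleting these pieces one after the other shows that `H`
is weakly `(3 * R + 3)`-buildable.

Conversely `G` contains every weakly `(3 * R + 3)`-buildable graph. Cut the `n` vertices of `G` into
boundedly many blocks of equal size; subblocks of size at least `n ^ (1 - σ)`, with `σ` small, are
still sparsely linked and coherent. An induced copy of `H`, with vertices in distinct blocks, is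
constructed along the building sequence of `H`, after passing to such subblocks that leave room for
the next piece:

* Covers can be made private: given a set that covers many blocks, pass to subblocks each of which
  is covered by a part of it that has no neighbours in the others. This gives subleaves.
* Among many blocks some have subblocks that expand to each other by a factor close to
  `n ^ (c - σ)`. As `R * (c - σ) > 1 - c`, the levels of a levelling rooted at a vertex grow to size
  `n ^ (1 - c)` within `R` steps, and by coherence the last one then reaches almost all of every
  other block. Private covers turn this into a fan: induced paths of equal length at most `R + 1`
  from the vertex to all points of many blocks.
* Two such fans, followed by a third with its centre at a vertex in one of their end blocks, and
  lengthening by further private covers, join all nonadjacent points of distinct blocks by induced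
  paths of one prescribed length `≥ 3 * R + 3`. This gives handles.
-/

/-! ### Degrees and neighbourhoods relative to finite vertex sets -/

section RelativeDegree

open scoped Finset

variable {G : SimpleGraph V}

open Classical in
/-- The number of neighbours of `x` in the finite set `Z`. -/
def degIn (G : SimpleGraph V) (x : V) (Z : Finset V) : ℕ := #{z ∈ Z | G.Adj x z}

open Classical in
/-- The part of the neighbourhood `nbhd G X` that lies in the finite set `Z`. -/
def nbhdIn (G : SimpleGraph V) (X Z : Finset V) : Finset V := {z ∈ Z | ∃ x ∈ X, G.Adj x z}

open Classical in
/-- The vertices of `X` having at most a proportion `κ` of the set `C` as neighbours. -/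
def sparseTo (G : SimpleGraph V) (κ : ℝ) (C X : Finset V) : Finset V :=
  {x ∈ X | (degIn G x C : ℝ) ≤ κ * #C}

open Classical in
lemma degIn_eq_sum (x : V) (Z : Finset V) :
    (degIn G x Z : ℝ) = ∑ z ∈ Z, if G.Adj x z then (1 : ℝ) else 0 := by
  simp [degIn]

lemma sum_degIn_comm (X Z : Finset V) :
    ∑ x ∈ X, (degIn G x Z : ℝ) = ∑ z ∈ Z, (degIn G z X : ℝ) := by
  classical
  simp only [degIn_eq_sum]
  rw [Finset.sum_comm]
  simp only [G.adj_comm]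

open Classical in
lemma degIn_mono (x : V) {Y Z : Finset V} (h : Y ⊆ Z) : degIn G x Y ≤ degIn G x Z :=
  Finset.card_le_card (Finset.filter_subset_filter _ h)

open Classical in
lemma degIn_sdiff_add_degIn (x : V) {B X : Finset V} (hB : B ⊆ X) :
    degIn G x (X \ B) + degIn G x B = degIn G x X := by
  rw [degIn, degIn, ← Finset.card_union_of_disjoint
    (Finset.disjoint_filter_filter Finset.sdiff_disjoint), ← Finset.filter_union,
    Finset.sdiff_union_of_subset hB, degIn]

open Classical in
lemma nbhdIn_subset (X Z : Finset V) : nbhdIn G X Z ⊆ Z := Finset.filter_subset _ _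

open Classical in
lemma mem_nbhdIn {X Z : Finset V} {z : V} : z ∈ nbhdIn G X Z ↔ z ∈ Z ∧ ∃ x ∈ X, G.Adj x z :=
  Finset.mem_filter

@[gcongr]
lemma nbhdIn_mono {X X' Z Z' : Finset V} (hX : X ⊆ X') (hZ : Z ⊆ Z') :
    nbhdIn G X Z ⊆ nbhdIn G X' Z' := fun _ hz ↦ by
  obtain ⟨hzZ, x, hx, hxz⟩ := mem_nbhdIn.1 hz
  exact mem_nbhdIn.2 ⟨hZ hzZ, x, hX hx, hxz⟩

lemma nbhdIn_union [DecidableEq V] (X Y Z : Finset V) :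
    nbhdIn G (X ∪ Y) Z = nbhdIn G X Z ∪ nbhdIn G Y Z := by
  ext z
  simp only [mem_nbhdIn, Finset.mem_union, or_and_right, exists_or, and_or_left]

lemma covers_nbhdIn (X Z : Finset V) : Covers G X (nbhdIn G X Z) :=
  fun _ hz ↦ (mem_nbhdIn.1 hz).2

open Classical in
lemma card_nbhdIn_le_sum (X Z : Finset V) :
    (#(nbhdIn G X Z) : ℝ) ≤ ∑ x ∈ X, (degIn G x Z : ℝ) := by
  have hsub : nbhdIn G X Z ⊆ X.biUnion fun x ↦ {z ∈ Z | G.Adj x z} := fun z hz ↦ by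
    obtain ⟨hzZ, x, hx, hxz⟩ := mem_nbhdIn.1 hz
    exact Finset.mem_biUnion.2 ⟨x, hx, Finset.mem_filter.2 ⟨hzZ, hxz⟩⟩
  exact_mod_cast (Finset.card_le_card hsub).trans Finset.card_biUnion_le

lemma mem_sparseTo {κ : ℝ} {C X : Finset V} {x : V} :
    x ∈ sparseTo G κ C X ↔ x ∈ X ∧ (degIn G x C : ℝ) ≤ κ * #C :=
  Finset.mem_filter

lemma sparseTo_subset (κ : ℝ) (C X : Finset V) : sparseTo G κ C X ⊆ X := Finset.filter_subset _ _

lemma card_filter_lt_le_of_sum_le {ι : Type*} {T : Finset ι} {f : ι → ℝ} {a b : ℝ}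
    (hf : ∀ t ∈ T, 0 ≤ f t) (ha : 0 < a) (h : ∑ t ∈ T, f t ≤ b * a) :
    (#{t ∈ T | a < f t} : ℝ) ≤ b := by
  refine le_of_mul_le_mul_right (le_trans ?_ h) ha
  calc (#{t ∈ T | a < f t} : ℝ) * a
      = ∑ t ∈ T with a < f t, a := by rw [Finset.sum_const, nsmul_eq_mul]
    _ ≤ ∑ t ∈ T with a < f t, f t :=
        Finset.sum_le_sum fun t ht ↦ (Finset.mem_filter.1 ht).2.le
    _ ≤ ∑ t ∈ T, f t :=
        Finset.sum_le_sum_of_subset_of_nonneg (Finset.filter_subset _ _) fun t ht _ ↦ hf t ht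

lemma card_filter_exists_le {ι δ : Type*} {T : Finset ι} {E : Finset δ} {p : δ → ι → Prop}
    [∀ e, DecidablePred (p e)] [DecidablePred fun t ↦ ∃ e ∈ E, p e t] {b K : ℝ} (hb : 0 ≤ b)
    (hE : (#E : ℝ) ≤ K) (h : ∀ e ∈ E, (#{t ∈ T | p e t} : ℝ) ≤ b) :
    (#{t ∈ T | ∃ e ∈ E, p e t} : ℝ) ≤ K * b := by
  classical
  have hsub : {t ∈ T | ∃ e ∈ E, p e t} ⊆ E.biUnion fun e ↦ {t ∈ T | p e t} := by
    intro t ht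
    obtain ⟨htT, e, he, hp⟩ := Finset.mem_filter.1 ht
    exact Finset.mem_biUnion.2 ⟨e, he, Finset.mem_filter.2 ⟨htT, hp⟩⟩
  calc (#{t ∈ T | ∃ e ∈ E, p e t} : ℝ)
      ≤ ∑ e ∈ E, (#{t ∈ T | p e t} : ℝ) := by
        exact_mod_cast (Finset.card_le_card hsub).trans Finset.card_biUnion_le
    _ ≤ #E * b := by simpa only [nsmul_eq_mul] using Finset.sum_le_card_nsmul _ _ _ h
    _ ≤ K * b := mul_le_mul_of_nonneg_right hE hb

lemma card_filter_lt_degIn_le {C T : Finset V} {lam κ : ℝ} (hκ : 0 < κ) (hC : C.Nonempty)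
    (h : ∀ y ∈ C, (degIn G y T : ℝ) ≤ lam * #T) :
    (#{t ∈ T | κ * #C < degIn G t C} : ℝ) ≤ lam / κ * #T := by
  have : (0 : ℝ) < #C := by exact_mod_cast hC.card_pos
  refine card_filter_lt_le_of_sum_le (fun _ _ ↦ Nat.cast_nonneg _) (by positivity) ?_
  calc ∑ t ∈ T, (degIn G t C : ℝ) = ∑ y ∈ C, (degIn G y T : ℝ) := sum_degIn_comm _ _
    _ ≤ #C * (lam * #T) := by simpa only [nsmul_eq_mul] using Finset.sum_le_card_nsmul _ _ _ h
    _ = lam / κ * #T * (κ * #C) := by field_simp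

end RelativeDegree

/-! ### Light sets with large neighbourhoods -/

section LightSets

open scoped Finset

variable {G : SimpleGraph V} {T X Z : Finset V} {x : V} {s : V → ℝ} {D S b : ℝ}

open Classical in
lemma card_nbhdIn_insert (Z T : Finset V) (x : V) :
    #(nbhdIn G (insert x Z) T) = #(nbhdIn G Z T) + degIn G x (T \ nbhdIn G Z T) := by
  rw [degIn, ← Finset.card_union_of_disjoint]
  · congr 1
    ext z
    simp only [mem_nbhdIn, Finset.mem_insert, Finset.mem_union, Finset.mem_filter,
      Finset.mem_sdiff, exists_eq_or_imp]
    grind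
  · exact Finset.disjoint_left.2 fun z hz hz' ↦
      (Finset.mem_sdiff.1 (Finset.mem_filter.1 hz').1).2 hz

open Classical in
lemma degIn_sdiff_nbhdIn_eq_zero (hx : x ∈ Z) : degIn G x (T \ nbhdIn G Z T) = 0 := by
  refine Finset.card_eq_zero.2 (Finset.filter_eq_empty_iff.2 fun z hz hxz ↦ ?_)
  obtain ⟨hzT, hz⟩ := Finset.mem_sdiff.1 hz
  exact hz (mem_nbhdIn.2 ⟨hzT, x, hx, hxz⟩)

open Classical in
-- Averaging: otherwise `∑ x ∈ X, degIn G x R ≤ D / 4 * #T`, where `R` is the unreached part of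
-- `T`; but double counting bounds this sum below by `D * #R > D / 2 * #T`.
lemma exists_lt_degIn_sdiff (hD : 0 < D) (hS : 0 < S) (hT : T.Nonempty)
    (hdeg : ∀ t ∈ T, D ≤ degIn G t X) (htot : ∑ x ∈ X, s x ≤ S)
    (hZ : (#(nbhdIn G Z T) : ℝ) < #T / 2) :
    ∃ x ∈ X, D / (4 * S) * s x * #T < degIn G x (T \ nbhdIn G Z T) := by
  by_contra! hcon
  set R := T \ nbhdIn G Z T
  have : (0 : ℝ) < #T := by exact_mod_cast hT.card_pos
  have hR : (#T : ℝ) / 2 < #R := by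
    have hcard : (#R : ℝ) + #(nbhdIn G Z T) = #T := by
      exact_mod_cast Finset.card_sdiff_add_card_eq_card (nbhdIn_subset Z T)
    linarith
  have hlower : D * #R ≤ ∑ x ∈ X, (degIn G x R : ℝ) := by
    rw [sum_degIn_comm, mul_comm, ← nsmul_eq_mul]
    exact Finset.card_nsmul_le_sum _ _ _ fun t ht ↦ hdeg t (Finset.mem_sdiff.1 ht).1
  have hupper : ∑ x ∈ X, (degIn G x R : ℝ) ≤ D / 4 * #T :=
    calc ∑ x ∈ X, (degIn G x R : ℝ) ≤ ∑ x ∈ X, D / (4 * S) * s x * #T := Finset.sum_le_sum hcon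
      _ = D / (4 * S) * (∑ x ∈ X, s x) * #T := by rw [Finset.mul_sum, Finset.sum_mul]
      _ ≤ D / (4 * S) * S * #T := by gcongr
      _ = D / 4 * #T := by field_simp
  nlinarith

-- `Z` is a maximal set whose neighbourhood in `T` is large in proportion to its weight.
lemma exists_light_subset_large_nbhdIn (hb : 0 ≤ b) (hD : 0 ≤ D) (hS : 0 < S)
    (hs : ∀ x ∈ X, 0 ≤ s x) (hsb : ∀ x ∈ X, s x ≤ b) (htot : ∑ x ∈ X, s x ≤ S)
    (hdeg : ∀ t ∈ T, D ≤ degIn G t X) :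
    ∃ Z ⊆ X, ∑ x ∈ Z, s x ≤ 2 * b ∧ min (1 / 2) (D / (4 * S) * b) * #T ≤ #(nbhdIn G Z T) := by
  classical
  set α := D / (4 * S)
  have hα : 0 ≤ α := by positivity
  let F : Finset (Finset V) := {Z ∈ X.powerset |
    ∑ x ∈ Z, s x ≤ 2 * b ∧ α * (∑ x ∈ Z, s x) * #T ≤ #(nbhdIn G Z T)}
  have hF {Z} : Z ∈ F ↔ Z ⊆ X ∧ ∑ x ∈ Z, s x ≤ 2 * b ∧
      α * (∑ x ∈ Z, s x) * #T ≤ #(nbhdIn G Z T) := by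
    rw [Finset.mem_filter, Finset.mem_powerset]
  obtain ⟨Z, hZF, hZmax⟩ := F.exists_max_image Finset.card ⟨∅, hF.2 (by simpa using hb)⟩
  obtain ⟨hZX, hZs, hZT⟩ := hF.1 hZF
  refine ⟨Z, hZX, hZs, ?_⟩
  by_cases hhalf : (#T : ℝ) / 2 ≤ #(nbhdIn G Z T)
  · calc min (1 / 2) (α * b) * #T ≤ 1 / 2 * #T := by gcongr; exact min_le_left _ _
      _ ≤ #(nbhdIn G Z T) := by linarith
  by_cases hheavy : b ≤ ∑ x ∈ Z, s x
  · calc min (1 / 2) (α * b) * #T ≤ α * b * #T := by gcongr; exact min_le_right _ _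
      _ ≤ α * (∑ x ∈ Z, s x) * #T := by gcongr
      _ ≤ #(nbhdIn G Z T) := hZT
  have hT : T.Nonempty := Finset.nonempty_iff_ne_empty.2 fun h ↦ hhalf (by simp [h])
  rcases eq_or_ne D 0 with rfl | hD0
  · simp [α]
  obtain ⟨x, hxX, hx⟩ := exists_lt_degIn_sdiff (hD.lt_of_ne' hD0) hS hT hdeg htot (not_le.1 hhalf)
  have hxZ : x ∉ Z := fun hxZ ↦ by
    rw [degIn_sdiff_nbhdIn_eq_zero hxZ] at hx
    have := hs x hxX
    exact hx.not_ge (by push_cast; positivity)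
  have hins : insert x Z ∈ F := by
    refine hF.2 ⟨Finset.insert_subset hxX hZX, ?_, ?_⟩
    · rw [Finset.sum_insert hxZ]
      linarith [hsb x hxX]
    · rw [Finset.sum_insert hxZ, card_nbhdIn_insert]
      push_cast
      linear_combination hZT + hx.le
  have := hZmax _ hins
  rw [Finset.card_insert_of_notMem hxZ] at this
  omega

end LightSets

/-! ### Making covers private -/

section CoverWeight

open scoped Finset

variable {G : SimpleGraph V} {X T B C S : Finset V} {x y : V} {lam κ μ : ℝ}

open Classical in
/-- The cover of `T` by `X` fractionally: each `t ∈ T` spreads weight `1` evenly over its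
neighbours in `X`, and `coverWeight G X T x` is the total weight received by `x`. -/
def coverWeight (G : SimpleGraph V) (X T : Finset V) (x : V) : ℝ :=
  ∑ t ∈ T with G.Adj t x, 1 / (degIn G t X : ℝ)

open Classical in
/-- The total `coverWeight` of the neighbours of `y` in `X`: how much of the cover of `T` by `X`
is lost if `y` has to become anticomplete to it. -/
def coverLoad (G : SimpleGraph V) (X T : Finset V) (y : V) : ℝ :=
  ∑ x ∈ X with G.Adj x y, coverWeight G X T x

lemma coverWeight_nonneg : 0 ≤ coverWeight G X T x := Finset.sum_nonneg fun _ _ ↦ by positivity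

lemma coverLoad_nonneg : 0 ≤ coverLoad G X T y := Finset.sum_nonneg fun _ _ ↦ coverWeight_nonneg

lemma sum_coverWeight (X T B : Finset V) :
    ∑ x ∈ B, coverWeight G X T x = ∑ t ∈ T, (degIn G t B : ℝ) / degIn G t X := by
  classical
  simp only [coverWeight, Finset.sum_filter, degIn_eq_sum _ B, Finset.sum_div, ite_div, zero_div]
  exact Finset.sum_comm

lemma sum_coverWeight_le_card : ∑ x ∈ X, coverWeight G X T x ≤ #T := by
  rw [sum_coverWeight]
  simpa using Finset.sum_le_card_nsmul T _ (1 : ℝ) fun t _ ↦ div_self_le_one (degIn G t X : ℝ)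

lemma sum_coverLoad (X T C : Finset V) :
    ∑ y ∈ C, coverLoad G X T y = ∑ x ∈ X, coverWeight G X T x * degIn G x C := by
  classical
  simp only [coverLoad, Finset.sum_filter, degIn_eq_sum, Finset.mul_sum, mul_ite, mul_one,
    mul_zero]
  exact Finset.sum_comm

lemma card_filter_lt_coverLoad_le (hμ : 0 < μ) (hT : T.Nonempty)
    (hlam : ∀ x ∈ X, (degIn G x S : ℝ) ≤ lam * #S) (hlam0 : 0 ≤ lam) :
    (#{y ∈ S | μ * #T < coverLoad G X T y} : ℝ) ≤ lam / μ * #S := by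
  have : (0 : ℝ) < #T := by exact_mod_cast hT.card_pos
  refine card_filter_lt_le_of_sum_le (fun _ _ ↦ coverLoad_nonneg) (by positivity) ?_
  calc ∑ y ∈ S, coverLoad G X T y = ∑ x ∈ X, coverWeight G X T x * degIn G x S :=
        sum_coverLoad X T S
    _ ≤ ∑ x ∈ X, coverWeight G X T x * (lam * #S) :=
        Finset.sum_le_sum fun x hx ↦ mul_le_mul_of_nonneg_left (hlam x hx) coverWeight_nonneg
    _ = (∑ x ∈ X, coverWeight G X T x) * (lam * #S) := by rw [Finset.sum_mul]
    _ ≤ #T * (lam * #S) := by gcongr; exact sum_coverWeight_le_card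
    _ = lam / μ * #S * (μ * #T) := by field_simp

lemma card_filter_degIn_lt_two_mul_le (hB : B ⊆ X) :
    (#{t ∈ T | degIn G t X < 2 * degIn G t B} : ℝ) ≤ 2 * ∑ x ∈ B, coverWeight G X T x := by
  calc (#{t ∈ T | degIn G t X < 2 * degIn G t B} : ℝ)
      = ∑ t ∈ T with degIn G t X < 2 * degIn G t B, 1 := by simp
    _ ≤ ∑ t ∈ T with degIn G t X < 2 * degIn G t B, 2 * ((degIn G t B : ℝ) / degIn G t X) := by
        refine Finset.sum_le_sum fun t ht ↦ ?_
        have hlt := (Finset.mem_filter.1 ht).2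
        have hpos : 0 < degIn G t X := by
          have := degIn_mono (G := G) t hB
          omega
        rw [← mul_div_assoc, one_le_div (by exact_mod_cast hpos)]
        exact_mod_cast hlt.le
    _ ≤ ∑ t ∈ T, 2 * ((degIn G t B : ℝ) / degIn G t X) :=
        Finset.sum_le_sum_of_subset_of_nonneg (Finset.filter_subset _ _) fun _ _ _ ↦ by positivity
    _ = 2 * ∑ x ∈ B, coverWeight G X T x := by rw [sum_coverWeight, Finset.mul_sum]

lemma card_filter_two_mul_degIn_sparseTo_lt_le (hκ : 0 < κ) (hC : C.Nonempty)
    (hload : ∀ y ∈ C, coverLoad G X T y ≤ μ * #T) :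
    (#{t ∈ T | 2 * degIn G t (sparseTo G κ C X) < degIn G t X} : ℝ) ≤ 2 * μ / κ * #T := by
  classical
  set B := X \ sparseTo G κ C X
  have : (0 : ℝ) < #C := by exact_mod_cast hC.card_pos
  have hB {x} (hx : x ∈ B) : κ * #C ≤ degIn G x C := by
    rw [Finset.mem_sdiff, mem_sparseTo] at hx
    exact (not_le.1 fun h ↦ hx.2 ⟨hx.1, h⟩).le
  have hweight : (∑ x ∈ B, coverWeight G X T x) * (κ * #C) ≤ μ * #T * #C :=
    calc (∑ x ∈ B, coverWeight G X T x) * (κ * #C)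
        ≤ ∑ x ∈ B, coverWeight G X T x * degIn G x C := by
          rw [Finset.sum_mul]
          exact Finset.sum_le_sum fun x hx ↦ mul_le_mul_of_nonneg_left (hB hx) coverWeight_nonneg
      _ ≤ ∑ x ∈ X, coverWeight G X T x * degIn G x C :=
          Finset.sum_le_sum_of_subset_of_nonneg Finset.sdiff_subset fun _ _ _ ↦
            mul_nonneg coverWeight_nonneg (Nat.cast_nonneg _)
      _ = ∑ y ∈ C, coverLoad G X T y := (sum_coverLoad X T C).symm
      _ ≤ μ * #T * #C := by
          simpa only [nsmul_eq_mul, mul_comm] using Finset.sum_le_card_nsmul _ _ _ hload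
  have hiff t : 2 * degIn G t (sparseTo G κ C X) < degIn G t X ↔ degIn G t X < 2 * degIn G t B := by
    have : degIn G t B + degIn G t (sparseTo G κ C X) = degIn G t X :=
      degIn_sdiff_add_degIn t (sparseTo_subset κ C X)
    omega
  simp only [hiff]
  refine (card_filter_degIn_lt_two_mul_le Finset.sdiff_subset).trans ?_
  rw [div_mul_eq_mul_div, le_div_iff₀ hκ]
  nlinarith

end CoverWeight

section PrivateCovers

open scoped Finset

variable {ι δ : Type*} {G : SimpleGraph V} {K ρ lam : ℝ} {J : Finset ι} {T : ι → Finset V}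
  {E : Finset δ} {target : δ → ι} {X : δ → Finset V} {U : δ → ℝ} {e₀ : δ} {j : ι}

/-- Pairwise sparsely linked sets `T j`, together with sources `X e` (`e ∈ E`), each sparsely
linked to the sets `T j` and dense to the set `T (target e)` it is to serve: up to the factor `ρ`,
the vertices of `T (target e)` have at least as many neighbours in `X e` as any vertex of another
set `T j`. The aim is to shrink everything until each `X e` covers `T (target e)` and is
anticomplete to the other sets. -/
structure PrivateCoverSystem (G : SimpleGraph V) (K : ℝ) (J : Finset ι) (T : ι → Finset V)
    (E : Finset δ) (target : δ → ι) (X : δ → Finset V) (U : δ → ℝ) (ρ lam : ℝ) : Prop where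
  card_index_le : (#J : ℝ) ≤ K
  card_source_le : (#E : ℝ) ≤ K
  nonempty : ∀ j ∈ J, (T j).Nonempty
  degIn_le : ∀ i ∈ J, ∀ j ∈ J, i ≠ j → ∀ t ∈ T i, (degIn G t (T j) : ℝ) ≤ lam * #(T j)
  target_mem : ∀ e ∈ E, target e ∈ J
  source_degIn_le : ∀ e ∈ E, ∀ x ∈ X e, ∀ i ∈ J, i ≠ target e →
    (degIn G x (T i) : ℝ) ≤ lam * #(T i)
  bound_pos : ∀ e ∈ E, 0 < U e
  le_degIn_source : ∀ e ∈ E, ∀ t ∈ T (target e), ρ * U e ≤ degIn G t (X e)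
  degIn_source_le : ∀ e ∈ E, ∀ i ∈ J, i ≠ target e → ∀ t ∈ T i, (degIn G t (X e) : ℝ) ≤ U e

/-- The sum over `i ∈ I` of the proportion of the set `T i` adjacent to `x`. -/
def totalLinkage (G : SimpleGraph V) (I : Finset ι) (T : ι → Finset V) (x : V) : ℝ :=
  ∑ i ∈ I, (degIn G x (T i) : ℝ) / #(T i)

lemma totalLinkage_nonneg {x : V} : 0 ≤ totalLinkage G J T x :=
  Finset.sum_nonneg fun _ _ ↦ by positivity

namespace PrivateCoverSystem

lemma card_pos (h : PrivateCoverSystem G K J T E target X U ρ lam) (hj : j ∈ J) :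
    (0 : ℝ) < #(T j) := by exact_mod_cast (h.nonempty j hj).card_pos

lemma one_le (h : PrivateCoverSystem G K J T E target X U ρ lam) (he₀ : e₀ ∈ E) : 1 ≤ K := by
  refine le_trans ?_ h.card_source_le
  exact_mod_cast Finset.card_pos.2 ⟨e₀, he₀⟩

lemma exists_half_lightly_loaded (h : PrivateCoverSystem G K J T E target X U ρ lam)
    (hlam : 0 < lam) (hK : 1 ≤ K) (hj : j ∈ J) :
    ∃ S ⊆ T j, (#(T j) : ℝ) / 2 ≤ #S ∧ ∀ y ∈ S, ∀ e ∈ E, target e ≠ j →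
      coverLoad G (X e) (T (target e)) y ≤ 2 * K * lam * #(T (target e)) := by
  classical
  let bad (y : V) : Prop := ∃ e ∈ E.filter (target · ≠ j),
    2 * K * lam * #(T (target e)) < coverLoad G (X e) (T (target e)) y
  have hbad : (#{y ∈ T j | bad y} : ℝ) ≤ K * (1 / (2 * K) * #(T j)) := by
    refine card_filter_exists_le (by positivity)
      (le_trans (by exact_mod_cast Finset.card_filter_le _ _) h.card_source_le) fun e he ↦ ?_
    obtain ⟨heE, hej⟩ := Finset.mem_filter.1 he
    refine (card_filter_lt_coverLoad_le (by positivity) (h.nonempty _ (h.target_mem e heE))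
      (fun x hx ↦ h.source_degIn_le e heE x hx j hj hej.symm) hlam.le).trans_eq ?_
    field_simp
  refine ⟨{y ∈ T j | ¬ bad y}, Finset.filter_subset _ _, ?_, fun y hy e he hej ↦ ?_⟩
  · have hsplit : (#{y ∈ T j | bad y} : ℝ) + #{y ∈ T j | ¬ bad y} = #(T j) := by
      exact_mod_cast Finset.card_filter_add_card_filter_not _
    have : K * (1 / (2 * K) * #(T j)) = (#(T j) : ℝ) / 2 := by field_simp
    linarith
  · by_contra! hlt
    exact (Finset.mem_filter.1 hy).2 ⟨e, Finset.mem_filter.2 ⟨he, hej⟩, hlt⟩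

lemma totalLinkage_le (h : PrivateCoverSystem G K J T E target X U ρ lam) (hlam : 0 < lam)
    (he₀ : e₀ ∈ E) {I : Finset ι} (hI : I ⊆ J) (hI₀ : target e₀ ∉ I) {x : V} (hx : x ∈ X e₀) :
    totalLinkage G I T x ≤ K * lam := by
  have hterm i (hi : i ∈ I) : (degIn G x (T i) : ℝ) / #(T i) ≤ lam :=
    (div_le_iff₀ (h.card_pos (hI hi))).2
      (h.source_degIn_le e₀ he₀ x hx i (hI hi) (ne_of_mem_of_not_mem hi hI₀))
  calc totalLinkage G I T x
      ≤ #I * lam := by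
        simpa only [totalLinkage, nsmul_eq_mul] using Finset.sum_le_card_nsmul _ _ _ hterm
    _ ≤ #J * lam := by gcongr
    _ ≤ K * lam := by gcongr; exact h.card_index_le

lemma sum_totalLinkage_le (h : PrivateCoverSystem G K J T E target X U ρ lam) (he₀ : e₀ ∈ E)
    {I : Finset ι} (hI : I ⊆ J) (hI₀ : target e₀ ∉ I) :
    ∑ x ∈ X e₀, totalLinkage G I T x ≤ K * U e₀ := by
  have hU := h.bound_pos e₀ he₀
  have hterm i (hi : i ∈ I) : ∑ x ∈ X e₀, (degIn G x (T i) : ℝ) / #(T i) ≤ U e₀ := by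
    rw [← Finset.sum_div, sum_degIn_comm, div_le_iff₀ (h.card_pos (hI hi)), mul_comm]
    simpa only [nsmul_eq_mul] using Finset.sum_le_card_nsmul _ _ _
      (h.degIn_source_le e₀ he₀ i (hI hi) (ne_of_mem_of_not_mem hi hI₀))
  calc ∑ x ∈ X e₀, totalLinkage G I T x
      = ∑ i ∈ I, ∑ x ∈ X e₀, (degIn G x (T i) : ℝ) / #(T i) := Finset.sum_comm
    _ ≤ #I * U e₀ := by simpa only [nsmul_eq_mul] using Finset.sum_le_card_nsmul _ _ _ hterm
    _ ≤ #J * U e₀ := by gcongr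
    _ ≤ K * U e₀ := by gcongr; exact h.card_index_le

lemma exists_source_subset (h : PrivateCoverSystem G K J T E target X U ρ lam) (hlam : 0 < lam)
    (hKlam : K * lam ≤ 1 / 4) (hρ : 0 < ρ) (hρ1 : ρ ≤ 1) (he₀ : e₀ ∈ E) {S : Finset V}
    (hS : S ⊆ T (target e₀)) (hcard : (#(T (target e₀)) : ℝ) / 2 ≤ #S) :
    ∃ Z ⊆ X e₀, ρ / (32 * K) * #(T (target e₀)) ≤ #(nbhdIn G Z S) ∧
      ∀ i ∈ J, i ≠ target e₀ → (#(nbhdIn G Z (T i)) : ℝ) ≤ #(T i) / 2 := by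
  classical
  have hK := h.one_le he₀
  have hU := h.bound_pos e₀ he₀
  have hI := Finset.erase_subset (target e₀) J
  have hI₀ := Finset.notMem_erase (target e₀) J
  obtain ⟨Z, hZX, hZs, hZS⟩ := exists_light_subset_large_nbhdIn (b := 1 / 4) (by norm_num)
    (by positivity) (by positivity) (fun _ _ ↦ totalLinkage_nonneg)
    (fun x hx ↦ (h.totalLinkage_le hlam he₀ hI hI₀ hx).trans hKlam)
    (h.sum_totalLinkage_le he₀ hI hI₀) fun t ht ↦ h.le_degIn_source e₀ he₀ t (hS ht)
  refine ⟨Z, hZX, ?_, fun i hi hie ↦ ?_⟩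
  · have hmin : min (1 / 2) (ρ * U e₀ / (4 * (K * U e₀)) * (1 / 4)) = ρ / (16 * K) := by
      rw [show ρ * U e₀ / (4 * (K * U e₀)) * (1 / 4) = ρ / (16 * K) by field_simp; norm_num]
      refine min_eq_right ?_
      rw [div_le_div_iff₀ (by positivity) (by norm_num)]
      linarith
    rw [hmin] at hZS
    calc ρ / (32 * K) * #(T (target e₀)) = ρ / (16 * K) * (#(T (target e₀)) / 2) := by ring
      _ ≤ ρ / (16 * K) * #S := by gcongr
      _ ≤ #(nbhdIn G Z S) := hZS
  · have hZi : ∑ x ∈ Z, (degIn G x (T i) : ℝ) / #(T i) ≤ 1 / 2 := by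
      refine le_trans (Finset.sum_le_sum fun x _ ↦ ?_) (hZs.trans_eq (by norm_num))
      exact Finset.single_le_sum (f := fun i ↦ (degIn G x (T i) : ℝ) / #(T i))
        (fun _ _ ↦ by positivity) (Finset.mem_erase.2 ⟨hie, hi⟩)
    rw [← Finset.sum_div, div_le_iff₀ (h.card_pos hi)] at hZi
    linarith [card_nbhdIn_le_sum (G := G) Z (T i)]

lemma card_filter_lt_degIn_le_eighth (hlam : 0 < lam) (hK : 1 ≤ K) {C R : Finset V}
    (hC : C.Nonempty) (hCR : ∀ y ∈ C, (degIn G y R : ℝ) ≤ lam * #R) :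
    (#{t ∈ R | 32 * K ^ 2 * lam * #C < degIn G t C} : ℝ) ≤ 1 / 8 * #R := by
  refine (card_filter_lt_degIn_le (by positivity) hC hCR).trans
    (mul_le_mul_of_nonneg_right ?_ (Nat.cast_nonneg _))
  have hK2 : 1 ≤ K ^ 2 := one_le_pow₀ hK
  rw [div_le_div_iff₀ (by positivity) (by norm_num)]
  nlinarith

open Classical in
lemma card_filter_sparseTo_le_eighth (h : PrivateCoverSystem G K J T E target X U ρ lam)
    (hlam : 0 < lam) (hK : 1 ≤ K) {C : Finset V} (hC : C.Nonempty)
    (hload : ∀ y ∈ C, ∀ e ∈ E, target e = j →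
      coverLoad G (X e) (T j) y ≤ 2 * K * lam * #(T j)) :
    (#{t ∈ T j | ∃ e ∈ E.filter (target · = j),
      2 * degIn G t (sparseTo G (32 * K ^ 2 * lam) C (X e)) < degIn G t (X e)} : ℝ) ≤
      1 / 8 * #(T j) := by
  have hK_mul : K * (1 / (8 * K) * #(T j)) = (1 / 8 * #(T j) : ℝ) := by field_simp
  rw [← hK_mul]
  refine card_filter_exists_le (p := fun e t ↦
      2 * degIn G t (sparseTo G (32 * K ^ 2 * lam) C (X e)) < degIn G t (X e)) (by positivity)
    (le_trans (by exact_mod_cast Finset.card_filter_le _ _) h.card_source_le) fun e he ↦ ?_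
  obtain ⟨heE, hej⟩ := Finset.mem_filter.1 he
  calc (#{t ∈ T j | 2 * degIn G t (sparseTo G (32 * K ^ 2 * lam) C (X e)) < degIn G t (X e)} : ℝ)
      ≤ 2 * (2 * K * lam) / (32 * K ^ 2 * lam) * #(T j) :=
        card_filter_two_mul_degIn_sparseTo_lt_le (by positivity) hC fun y hy ↦ hload y hy e heE hej
    _ = 1 / (8 * K) * #(T j) := by
        field_simp
        ring

-- Besides the vertices reached by `Z` (at most a half of `T j`), we discard those with many
-- neighbours in `C` and those with most of their neighbours in some `X e` outside
-- `sparseTo G _ C (X e)` (at most an eighth each).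
lemma exists_survivors (h : PrivateCoverSystem G K J T E target X U ρ lam) (hlam : 0 < lam)
    (hK : 1 ≤ K) {i : ι} (hi : i ∈ J) (hj : j ∈ J) (hij : i ≠ j) {Z C : Finset V}
    (hZ : (#(nbhdIn G Z (T j)) : ℝ) ≤ #(T j) / 2) (hC : C.Nonempty) (hCi : C ⊆ T i)
    (hload : ∀ y ∈ C, ∀ e ∈ E, target e = j →
      coverLoad G (X e) (T j) y ≤ 2 * K * lam * #(T j)) :
    ∃ S ⊆ T j, (#(T j) : ℝ) / 4 ≤ #S ∧ Anticomplete G Z S ∧ ∀ t ∈ S,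
      (degIn G t C : ℝ) ≤ 32 * K ^ 2 * lam * #C ∧ ∀ e ∈ E, target e = j →
        degIn G t (X e) ≤ 2 * degIn G t (sparseTo G (32 * K ^ 2 * lam) C (X e)) := by
  classical
  have hdense := card_filter_lt_degIn_le_eighth hlam hK hC
    fun y hy ↦ h.degIn_le i hi j hj hij y (hCi hy)
  have hdamaged := h.card_filter_sparseTo_le_eighth hlam hK hC hload
  set dense : Finset V := {t ∈ T j | 32 * K ^ 2 * lam * #C < degIn G t C} with hdense_def
  set damaged : Finset V := {t ∈ T j | ∃ e ∈ E.filter (target · = j),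
    2 * degIn G t (sparseTo G (32 * K ^ 2 * lam) C (X e)) < degIn G t (X e)} with hdamaged_def
  refine ⟨((T j \ nbhdIn G Z (T j)) \ dense) \ damaged, ?_, ?_, fun z hz t ht hzt ↦ ?_,
    fun t ht ↦ ?_⟩
  · exact (Finset.sdiff_subset.trans Finset.sdiff_subset).trans Finset.sdiff_subset
  · have hsum : #(T j) ≤ #(((T j \ nbhdIn G Z (T j)) \ dense) \ damaged) +
        #(nbhdIn G Z (T j)) + #dense + #damaged := by
      have h₁ := Finset.le_card_sdiff (nbhdIn G Z (T j)) (T j)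
      have h₂ := Finset.le_card_sdiff dense (T j \ nbhdIn G Z (T j))
      have h₃ := Finset.le_card_sdiff damaged ((T j \ nbhdIn G Z (T j)) \ dense)
      omega
    have : (#(T j) : ℝ) ≤ #(((T j \ nbhdIn G Z (T j)) \ dense) \ damaged) +
        #(nbhdIn G Z (T j)) + #dense + #damaged := by exact_mod_cast hsum
    linarith
  · simp only [Finset.coe_sdiff, Set.mem_sdiff, Finset.mem_coe, mem_nbhdIn] at ht
    exact ht.1.1.2 ⟨ht.1.1.1, z, hz, hzt⟩
  · simp only [Finset.mem_sdiff, hdense_def, hdamaged_def, Finset.mem_filter, not_and, not_lt,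
      not_exists, and_imp] at ht
    exact ⟨ht.1.2 ht.1.1.1, fun e he hej ↦ ht.2 ht.1.1.1 e he hej⟩

lemma shrink (h : PrivateCoverSystem G K J T E target X U ρ lam) {T' : ι → Finset V}
    {X' : δ → Finset V} {E' : Finset δ} {κ : ℝ} (hlam : 0 < lam) (hκ : 4 * lam ≤ κ) (hE : E' ⊆ E)
    (hT : ∀ i ∈ J, T' i ⊆ T i) (hX : ∀ e, X' e ⊆ X e) (hne : ∀ i ∈ J, (T' i).Nonempty)
    (hcard : ∀ i ∈ J, i ≠ j → (#(T i) : ℝ) / 4 ≤ #(T' i))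
    (hTj : ∀ i ∈ J, i ≠ j → ∀ t ∈ T' i, (degIn G t (T' j) : ℝ) ≤ κ * #(T' j))
    (hXj : ∀ e ∈ E', target e ≠ j → ∀ x ∈ X' e, (degIn G x (T' j) : ℝ) ≤ κ * #(T' j))
    (hdeg : ∀ e ∈ E', ∀ t ∈ T' (target e), degIn G t (X e) ≤ 2 * degIn G t (X' e)) :
    PrivateCoverSystem G K J T' E' target X' U (ρ / 2) κ := by
  have hlink {i x} (hi : i ∈ J) (hij : i ≠ j) (hx : (degIn G x (T i) : ℝ) ≤ lam * #(T i)) :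
      (degIn G x (T' i) : ℝ) ≤ κ * #(T' i) :=
    calc (degIn G x (T' i) : ℝ) ≤ degIn G x (T i) := by exact_mod_cast degIn_mono x (hT i hi)
      _ ≤ 4 * lam * (#(T i) / 4) := by linarith
      _ ≤ κ * #(T' i) := mul_le_mul hκ (hcard i hi hij) (by positivity) (by linarith)
  refine ⟨h.card_index_le, le_trans (by gcongr) h.card_source_le, hne,
    fun i hi i' hi' hii' t ht ↦ ?_, fun e he ↦ h.target_mem e (hE he),
    fun e he x hx i hi hie ↦ ?_, fun e he ↦ h.bound_pos e (hE he), fun e he t ht ↦ ?_,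
    fun e he i hi hie t ht ↦ ?_⟩
  · obtain rfl | hij := eq_or_ne i' j
    · exact hTj i hi hii' t ht
    · exact hlink hi' hij (h.degIn_le i hi i' hi' hii' t (hT i hi ht))
  · obtain rfl | hij := eq_or_ne i j
    · exact hXj e he hie.symm x hx
    · exact hlink hi hij (h.source_degIn_le e (hE he) x (hX e hx) i hi hie)
  · have hle := h.le_degIn_source e (hE he) t (hT _ (h.target_mem e (hE he)) ht)
    have : (degIn G t (X e) : ℝ) ≤ 2 * degIn G t (X' e) := by exact_mod_cast hdeg e he t ht
    linarith
  · refine le_trans ?_ (h.degIn_source_le e (hE he) i hi hie t (hT i hi ht))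
    exact_mod_cast degIn_mono t (hX e)

lemma exists_private_subset (h : PrivateCoverSystem G K J T E target X U ρ lam) (hlam : 0 < lam)
    (hKlam : K * lam ≤ 1 / 4) (hρ : 0 < ρ) (hρ1 : ρ ≤ 1) (he₀ : e₀ ∈ E) :
    ∃ Z ⊆ X e₀, ∃ T' : ι → Finset V, (∀ j ∈ J, T' j ⊆ T j) ∧ Covers G Z (T' (target e₀)) ∧
      (∀ i ∈ J, i ≠ target e₀ → Anticomplete G Z (T' i)) ∧
      (∀ j ∈ J, ρ / (32 * K) * #(T j) ≤ #(T' j)) ∧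
      ∀ i ∈ J, i ≠ target e₀ → (#(T i) : ℝ) / 4 ≤ #(T' i) ∧ ∀ t ∈ T' i,
        (degIn G t (T' (target e₀)) : ℝ) ≤ 32 * K ^ 2 * lam * #(T' (target e₀)) ∧
        ∀ e ∈ E, target e = i → degIn G t (X e) ≤
          2 * degIn G t (sparseTo G (32 * K ^ 2 * lam) (T' (target e₀)) (X e)) := by
  classical
  have hj₀ := h.target_mem e₀ he₀
  have hK := h.one_le he₀
  obtain ⟨S₀, hS₀, hS₀card, hload⟩ := h.exists_half_lightly_loaded hlam hK hj₀
  obtain ⟨Z, hZX, hCcard, hZ⟩ := h.exists_source_subset hlam hKlam hρ hρ1 he₀ hS₀ hS₀card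
  set C := nbhdIn G Z S₀
  have hCS₀ : C ⊆ S₀ := nbhdIn_subset Z S₀
  have hC : C.Nonempty := by
    have := h.card_pos hj₀
    rw [← Finset.card_pos, ← Nat.cast_pos (α := ℝ)]
    exact lt_of_lt_of_le (by positivity) hCcard
  have hsurvivors j (hj : j ∈ J) (hjj₀ : j ≠ target e₀) :=
    h.exists_survivors hlam hK hj₀ hj hjj₀.symm (hZ j hj hjj₀) hC (hCS₀.trans hS₀)
      fun y hy e he hej ↦ by simpa only [hej] using hload y (hCS₀ hy) e he (hej ▸ hjj₀)
  choose! S hSsub hScard hSanti hSdeg using hsurvivors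
  refine ⟨Z, hZX, Function.update S (target e₀) C, fun j hj ↦ ?_, ?_, fun i hi hij ↦ ?_,
    fun j hj ↦ ?_, fun i hi hij ↦ ?_⟩
  · obtain rfl | hjj₀ := eq_or_ne j (target e₀)
    · simpa only [Function.update_self] using hCS₀.trans hS₀
    · simpa only [Function.update_of_ne hjj₀] using hSsub j hj hjj₀
  · simpa only [Function.update_self] using covers_nbhdIn Z S₀
  · simpa only [Function.update_of_ne hij] using hSanti i hi hij
  · obtain rfl | hjj₀ := eq_or_ne j (target e₀)
    · rwa [Function.update_self]
    · rw [Function.update_of_ne hjj₀]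
      refine le_trans ?_ (hScard j hj hjj₀)
      rw [div_eq_inv_mul (#(T j) : ℝ)]
      gcongr
      rw [div_le_iff₀ (by positivity)]
      linarith
  · rw [Function.update_self, Function.update_of_ne hij]
    exact ⟨hScard i hi hij, hSdeg i hi hij⟩

open Classical in
lemma exists_privateCoverSystem_erase (h : PrivateCoverSystem G K J T E target X U ρ lam)
    (hlam : 0 < lam) (hKlam : K * lam ≤ 1 / 4) (hρ : 0 < ρ) (hρ1 : ρ ≤ 1) (he₀ : e₀ ∈ E) :
    ∃ Z ⊆ X e₀, ∃ (T' : ι → Finset V) (X' : δ → Finset V), (∀ j ∈ J, T' j ⊆ T j) ∧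
      (∀ e, X' e ⊆ X e) ∧
      PrivateCoverSystem G K J T' (E.erase e₀) target X' U (ρ / 2) (32 * K ^ 2 * lam) ∧
      Covers G Z (T' (target e₀)) ∧
      (∀ i ∈ J, i ≠ target e₀ → Anticomplete G Z (T' i)) ∧
      ∀ j ∈ J, ρ / (32 * K) * #(T j) ≤ #(T' j) := by
  obtain ⟨Z, hZX, T', hT', hcov, hanti, hcard, hother⟩ :=
    h.exists_private_subset hlam hKlam hρ hρ1 he₀
  have hK := h.one_le he₀
  have hK2 : 1 ≤ K ^ 2 := one_le_pow₀ hK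
  set X' : δ → Finset V := fun e ↦ if target e = target e₀ then X e else
    sparseTo G (32 * K ^ 2 * lam) (T' (target e₀)) (X e) with hX'_def
  have hX' e : X' e ⊆ X e := by
    simp only [hX'_def]
    split_ifs
    exacts [subset_rfl, sparseTo_subset _ _ _]
  have hne j (hj : j ∈ J) : (T' j).Nonempty := by
    have := h.card_pos hj
    rw [← Finset.card_pos, ← Nat.cast_pos (α := ℝ)]
    exact lt_of_lt_of_le (by positivity) (hcard j hj)
  refine ⟨Z, hZX, T', X', hT', hX', h.shrink hlam (by nlinarith) (E.erase_subset e₀) hT' hX' hne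
    (fun i hi hij ↦ (hother i hi hij).1) (fun i hi hij t ht ↦ ((hother i hi hij).2 t ht).1)
    (fun e _ hej x hx ↦ ?_) (fun e he t ht ↦ ?_), hcov, hanti, hcard⟩
  · exact (mem_sparseTo.1 (by simpa only [hX'_def, if_neg hej] using hx)).2
  · have heE := Finset.mem_of_mem_erase he
    simp only [hX'_def]
    split_ifs with hej
    · omega
    · exact ((hother _ (h.target_mem e heE) hej).2 t ht).2 e heE rfl

lemma exists_private_covers {N : ℕ} (hN : #E = N)
    (h : PrivateCoverSystem G K J T E target X U ρ lam) (hlam : 0 < lam)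
    (hKlam : K * (lam * (32 * K ^ 2) ^ N) ≤ 1 / 4) (hρ : 0 < ρ) (hρ1 : ρ ≤ 1) :
    ∃ (T' : ι → Finset V) (Y : δ → Finset V), (∀ j ∈ J, T' j ⊆ T j) ∧ (∀ e ∈ E, Y e ⊆ X e) ∧
      (∀ e ∈ E, Covers G (Y e) (T' (target e))) ∧
      (∀ e ∈ E, ∀ i ∈ J, i ≠ target e → Anticomplete G (Y e) (T' i)) ∧
      (∀ i ∈ J, ∀ j ∈ J, i ≠ j → ∀ t ∈ T' i,
        (degIn G t (T' j) : ℝ) ≤ lam * (32 * K ^ 2) ^ N * #(T' j)) ∧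
      ∀ j ∈ J, (ρ / (32 * K * 2 ^ N)) ^ N * #(T j) ≤ #(T' j) := by
  classical
  induction N generalizing T E X lam ρ with
  | zero =>
    obtain rfl := Finset.card_eq_zero.1 hN
    exact ⟨T, X, fun _ _ ↦ subset_rfl, by simp, by simp, by simp, by simpa using h.degIn_le,
      by simp⟩
  | succ N ih =>
    obtain ⟨e₀, he₀⟩ : E.Nonempty := Finset.card_pos.1 (by omega)
    have hK := h.one_le he₀
    have hpow : (1 : ℝ) ≤ (32 * K ^ 2) ^ (N + 1) := one_le_pow₀ (by nlinarith)
    have hKlam' : K * lam ≤ 1 / 4 := le_trans (by gcongr; exact le_mul_of_one_le_right hlam.le hpow)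
      hKlam
    obtain ⟨Z, hZX, T₁, X₁, hT₁, hX₁, h₁, hcov, hanti, hcard⟩ :=
      h.exists_privateCoverSystem_erase hlam hKlam' hρ hρ1 he₀
    have hlamN : 32 * K ^ 2 * lam * (32 * K ^ 2) ^ N = lam * (32 * K ^ 2) ^ (N + 1) := by ring
    obtain ⟨T', Y, hT', hY, hYcov, hYanti, hlink, hcard'⟩ := ih
      (by rw [Finset.card_erase_of_mem he₀, hN]; rfl) h₁ (by positivity) (by rwa [hlamN])
      (by linarith) (by linarith)
    have hY' {e} (he : e ∈ E) (hne : e ≠ e₀) : e ∈ E.erase e₀ := Finset.mem_erase.2 ⟨hne, he⟩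
    refine ⟨T', Function.update Y e₀ Z, fun j hj ↦ (hT' j hj).trans (hT₁ j hj), fun e he ↦ ?_,
      fun e he ↦ ?_, fun e he i hi hie ↦ ?_, hlamN ▸ hlink, fun j hj ↦ ?_⟩
    · obtain rfl | hne := eq_or_ne e e₀
      · rwa [Function.update_self]
      · simpa only [Function.update_of_ne hne] using (hY e (hY' he hne)).trans (hX₁ e)
    · obtain rfl | hne := eq_or_ne e e₀
      · rw [Function.update_self]
        exact fun t ht ↦ hcov t (hT' _ (h.target_mem e he) ht)
      · simpa only [Function.update_of_ne hne] using hYcov e (hY' he hne)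
    · obtain rfl | hne := eq_or_ne e e₀
      · rw [Function.update_self]
        exact fun z hz t ht ↦ hanti i hi hie z hz t (hT' i hi ht)
      · simpa only [Function.update_of_ne hne] using hYanti e (hY' he hne) i hi hie
    · have hle : ρ / (32 * K * 2 ^ (N + 1)) ≤ ρ / (32 * K) :=
        div_le_div_of_nonneg_left hρ.le (by positivity)
          (le_mul_of_one_le_right (by positivity) (one_le_pow₀ one_le_two))
      have heq : ρ / 2 / (32 * K * 2 ^ N) = ρ / (32 * K * 2 ^ (N + 1)) := by
        rw [div_div]
        ring
      calc (ρ / (32 * K * 2 ^ (N + 1))) ^ (N + 1) * (#(T j) : ℝ)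
          = (ρ / (32 * K * 2 ^ (N + 1))) ^ N * (ρ / (32 * K * 2 ^ (N + 1)) * #(T j)) := by ring
        _ ≤ (ρ / (32 * K * 2 ^ (N + 1))) ^ N * (ρ / (32 * K) * #(T j)) := by gcongr
        _ ≤ (ρ / (32 * K * 2 ^ (N + 1))) ^ N * #(T₁ j) := by gcongr; exact hcard j hj
        _ ≤ #(T' j) := heq ▸ hcard' j hj

end PrivateCoverSystem

end PrivateCovers

/-! ### Coherent blockades -/

section CoherentBlockade

open Filter
open scoped Finset

universe u

variable {ι : Type*} {G : SimpleGraph V} {n c σ lam : ℝ} {I : Finset ι} {A : ι → Finset V}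

/-- A blockade of linkage at most `lam` whose blocks have between `n ^ (1 - σ)` and `n` vertices,
and in which no two subsets of distinct blocks that have at least `n ^ (1 - c)` vertices each are
anticomplete. Here `n` plays the role of `|G|`, which makes the notion inherited by blockades inside
a subgraph. -/
structure CoherentBlockade (G : SimpleGraph V) (n c : ℝ) (I : Finset ι) (A : ι → Finset V)
    (σ lam : ℝ) : Prop where
  disjoint : ∀ i ∈ I, ∀ j ∈ I, i ≠ j → Disjoint (A i) (A j)
  le_card : ∀ i ∈ I, n ^ (1 - σ) ≤ #(A i)
  card_le : ∀ i ∈ I, (#(A i) : ℝ) ≤ n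
  degIn_le : ∀ i ∈ I, ∀ j ∈ I, i ≠ j → ∀ t ∈ A i, (degIn G t (A j) : ℝ) ≤ lam * #(A j)
  exists_adj : ∀ i ∈ I, ∀ j ∈ I, i ≠ j → ∀ X ⊆ A i, ∀ Z ⊆ A j, n ^ (1 - c) ≤ #X →
    n ^ (1 - c) ≤ #Z → ∃ x ∈ X, ∃ z ∈ Z, G.Adj x z

/-- Sets `Y j ⊆ X` (`j ∈ J`) such that each `Y j` covers `T j` and is anticomplete to the other
sets `T i`. -/
structure IsPrivateCover (G : SimpleGraph V) (J : Finset ι) (T : ι → Finset V) (X : Finset V)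
    (Y : ι → Finset V) : Prop where
  subset : ∀ j ∈ J, Y j ⊆ X
  covers : ∀ j ∈ J, Covers G (Y j) (T j)
  anticomplete : ∀ j ∈ J, ∀ i ∈ J, i ≠ j → Anticomplete G (Y j) (T i)

lemma degIn_le_div_mul {x : V} {B C : Finset V} {θ : ℝ} (hθ : 0 < θ) (hlam : 0 ≤ lam) (hCB : C ⊆ B)
    (hcard : θ * #B ≤ #C) (hx : (degIn G x B : ℝ) ≤ lam * #B) :
    (degIn G x C : ℝ) ≤ lam / θ * #C := by
  calc (degIn G x C : ℝ) ≤ degIn G x B := by exact_mod_cast degIn_mono x hCB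
    _ ≤ lam * #B := hx
    _ = lam / θ * (θ * #B) := by field_simp
    _ ≤ lam / θ * #C := by gcongr

namespace CoherentBlockade

variable {I' : Finset ι} {A' : ι → Finset V} {σ' lam' : ℝ}

lemma subblockade (h : CoherentBlockade G n c I A σ lam) (hI : I' ⊆ I) (hA : ∀ i ∈ I', A' i ⊆ A i)
    (hcard : ∀ i ∈ I', n ^ (1 - σ') ≤ #(A' i))
    (hlink : ∀ i ∈ I', ∀ j ∈ I', i ≠ j → ∀ t ∈ A' i, (degIn G t (A' j) : ℝ) ≤ lam' * #(A' j)) :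
    CoherentBlockade G n c I' A' σ' lam' where
  disjoint i hi j hj hij := (h.disjoint i (hI hi) j (hI hj) hij).mono (hA i hi) (hA j hj)
  le_card := hcard
  card_le i hi := le_trans (by exact_mod_cast Finset.card_le_card (hA i hi)) (h.card_le i (hI hi))
  degIn_le := hlink
  exists_adj i hi j hj hij X hX Z hZ :=
    h.exists_adj i (hI hi) j (hI hj) hij X (hX.trans (hA i hi)) Z (hZ.trans (hA j hj))

lemma shrink (h : CoherentBlockade G n c I A σ lam) {Δ θ : ℝ} (hn : 0 < n) (hθ : 0 < θ)
    (hlam : 0 ≤ lam) (hΔ : n ^ (-Δ) ≤ θ) (hI : I' ⊆ I) (hA : ∀ i ∈ I', A' i ⊆ A i)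
    (hcard : ∀ i ∈ I', θ * #(A i) ≤ #(A' i)) :
    CoherentBlockade G n c I' A' (σ + Δ) (lam / θ) := by
  refine h.subblockade hI hA (fun i hi ↦ ?_) fun i hi j hj hij t ht ↦ degIn_le_div_mul hθ hlam
    (hA j hj) (hcard j hj) (h.degIn_le i (hI hi) j (hI hj) hij t (hA i hi ht))
  calc n ^ (1 - (σ + Δ)) = n ^ (-Δ) * n ^ (1 - σ) := by
        rw [← Real.rpow_add hn]
        ring_nf
    _ ≤ θ * #(A i) := by
        gcongr
        exact h.le_card i (hI hi)
    _ ≤ #(A' i) := hcard i hi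

lemma mono (h : CoherentBlockade G n c I A σ lam) (hI : I' ⊆ I) (hn : 1 ≤ n) (hσ : σ ≤ σ')
    (hlam : lam ≤ lam') : CoherentBlockade G n c I' A σ' lam' :=
  h.subblockade hI (fun _ _ ↦ subset_rfl)
    (fun i hi ↦ (Real.rpow_le_rpow_of_exponent_le hn (by linarith)).trans (h.le_card i (hI hi)))
    fun i hi j hj hij t ht ↦ (h.degIn_le i (hI hi) j (hI hj) hij t ht).trans (by gcongr)

lemma card_sub_le_card_nbhdIn (h : CoherentBlockade G n c I A σ lam) {i j : ι} (hi : i ∈ I)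
    (hj : j ∈ I) (hij : i ≠ j) {X Z : Finset V} (hX : X ⊆ A i) (hZ : Z ⊆ A j)
    (hXcard : n ^ (1 - c) ≤ #X) : (#Z : ℝ) - n ^ (1 - c) ≤ #(nbhdIn G X Z) := by
  classical
  by_contra! hlt
  have hcard : (#(Z \ nbhdIn G X Z) : ℝ) = #Z - #(nbhdIn G X Z) := by
    rw [Finset.cast_card_sdiff (nbhdIn_subset X Z)]
  obtain ⟨x, hx, z, hz, hxz⟩ := h.exists_adj i hi j hj hij X hX (Z \ nbhdIn G X Z)
    (Finset.sdiff_subset.trans hZ) hXcard (by linarith)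
  obtain ⟨hzZ, hzX⟩ := Finset.mem_sdiff.1 hz
  exact hzX (mem_nbhdIn.2 ⟨hzZ, x, hx, hxz⟩)

lemma nonempty (h : CoherentBlockade G n c I A σ lam) (hn : 0 < n) {i : ι} (hi : i ∈ I) :
    (A i).Nonempty := by
  refine Finset.card_pos.1 ?_
  exact_mod_cast (Real.rpow_pos_of_pos hn _).trans_le (h.le_card i hi)

end CoherentBlockade

lemma eventually_rpow_neg_le {θ Δ : ℝ} (hθ : 0 < θ) (hΔ : 0 < Δ) :
    ∀ᶠ n : ℝ in atTop, n ^ (-Δ) ≤ θ :=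
  (tendsto_rpow_neg_atTop hΔ).eventually_le_const hθ

/-! ### Private covers in coherent blockades -/

lemma exists_common_fiber {γ : Type*} [Fintype γ] [Nonempty γ] [DecidableEq γ] (f : ι → V → γ)
    (A : ι → Finset V) {k : ℕ} (hI : Fintype.card γ * k ≤ #I) :
    ∃ g, ∃ I' ⊆ I, #I' = k ∧
      ∀ i ∈ I', (Fintype.card γ : ℝ)⁻¹ * #(A i) ≤ #{t ∈ A i | f i t = g} := by
  have hfiber (i : ι) : ∃ g, (Fintype.card γ : ℝ)⁻¹ * #(A i) ≤ #{t ∈ A i | f i t = g} := by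
    obtain ⟨g, -, hg⟩ := Finset.exists_le_card_fiber_of_nsmul_le_card_of_maps_to
      (s := A i) (t := Finset.univ) (f := f i) (b := (Fintype.card γ : ℝ)⁻¹ * #(A i))
      (fun _ _ ↦ Finset.mem_univ _) Finset.univ_nonempty (by simp)
    exact ⟨g, hg⟩
  choose g hg using hfiber
  obtain ⟨g₀, -, hg₀⟩ := Finset.exists_le_card_fiber_of_mul_le_card_of_maps_to
    (f := g) (fun _ _ ↦ Finset.mem_univ _) Finset.univ_nonempty hI
  obtain ⟨I', hI', hcard⟩ := Finset.exists_subset_card_eq hg₀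
  refine ⟨g₀, I', hI'.trans (Finset.filter_subset _ _), hcard, fun i hi ↦ ?_⟩
  rw [← (Finset.mem_filter.1 (hI' hi)).2]
  exact hg i

lemma exists_fin_pow_near {η d : ℝ} (hn : 1 < n) (hη : 0 < η) (hd : 1 ≤ d) (hdn : d ≤ n) :
    ∃ b : Fin (⌊1 / η⌋₊ + 1), (n ^ η) ^ (b : ℕ) ≤ d ∧ d ≤ (n ^ η) ^ (b + 1 : ℕ) := by
  obtain ⟨b, hbd, hdb⟩ := exists_nat_pow_near hd (Real.one_lt_rpow hn hη)
  refine ⟨⟨b, Nat.lt_succ_of_le (Nat.le_floor ?_)⟩, hbd, hdb.le⟩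
  have hpow : n ^ (η * b) ≤ n ^ (1 : ℝ) := by
    rw [Real.rpow_mul_natCast (by positivity), Real.rpow_one]
    exact hbd.trans hdn
  rw [le_div_iff₀ hη, mul_comm]
  exact (Real.rpow_le_rpow_left_iff hn).1 hpow

variable {α : Type*} [Fintype α] {J : Finset ι} {T : ι → Finset V} {X : α → Finset V} {η : ℝ}

-- Sort the vertices according to the order of magnitude of their degrees to the sets `X a`.
lemma exists_uniform_degIn {k : ℕ} (hn : 1 < n) (hη : 0 < η)
    (hJ : (⌊1 / η⌋₊ + 1) ^ Fintype.card α * k ≤ #J) (hX : ∀ a, (#(X a) : ℝ) ≤ n)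
    (hcov : ∀ a, ∀ j ∈ J, Covers G (X a) (T j)) :
    ∃ (g : α → ℕ) (J' : Finset ι) (T' : ι → Finset V), J' ⊆ J ∧ #J' = k ∧ (∀ j, T' j ⊆ T j) ∧
      (∀ j ∈ J', (((⌊1 / η⌋₊ + 1) ^ Fintype.card α : ℕ) : ℝ)⁻¹ * #(T j) ≤ #(T' j)) ∧
      ∀ j ∈ J', ∀ t ∈ T' j, ∀ a, (n ^ η) ^ g a ≤ degIn G t (X a) ∧
        (degIn G t (X a) : ℝ) ≤ (n ^ η) ^ (g a + 1) := by
  classical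
  have hbucket t a : ∃ b : Fin (⌊1 / η⌋₊ + 1), 0 < degIn G t (X a) →
      (n ^ η) ^ (b : ℕ) ≤ degIn G t (X a) ∧ (degIn G t (X a) : ℝ) ≤ (n ^ η) ^ (b + 1 : ℕ) := by
    by_cases hpos : 0 < degIn G t (X a)
    · have hle : (degIn G t (X a) : ℝ) ≤ n :=
        le_trans (by exact_mod_cast Finset.card_filter_le _ _) (hX a)
      exact (exists_fin_pow_near hn hη (by exact_mod_cast hpos) hle).imp fun _ hb _ ↦ hb
    · exact ⟨0, fun h ↦ absurd h hpos⟩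
  choose f hf using hbucket
  have hcard : Fintype.card (α → Fin (⌊1 / η⌋₊ + 1)) = (⌊1 / η⌋₊ + 1) ^ Fintype.card α := by simp
  obtain ⟨g, J', hJ', hJ'card, hT⟩ := exists_common_fiber (fun _ ↦ f) T (hcard ▸ hJ)
  refine ⟨fun a ↦ g a, J', fun j ↦ {t ∈ T j | f t = g}, hJ', hJ'card,
    fun _ ↦ Finset.filter_subset _ _, hcard ▸ hT, fun j hj t ht a ↦ ?_⟩
  obtain ⟨htT, rfl⟩ := Finset.mem_filter.1 ht
  obtain ⟨x, hx, hxt⟩ := hcov a j (hJ' hj) t htT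
  exact hf t a (Finset.card_pos.2 ⟨x, Finset.mem_filter.2 ⟨hx, hxt.symm⟩⟩)

lemma CoherentBlockade.privateCoverSystem (h : CoherentBlockade G n c J T σ lam) (hn : 0 < n)
    (hlam : 0 ≤ lam) (hX : ∀ a, ∀ x ∈ X a, ∀ j ∈ J, (degIn G x (T j) : ℝ) ≤ lam * #(T j))
    {K θ m : ℝ} (hθ : 0 < θ) (hm : 0 < m) {J' : Finset ι} {T' : ι → Finset V} {g : α → ℕ}
    (hJ' : J' ⊆ J) (hJK : (#J' : ℝ) ≤ K) (hEK : (Fintype.card α * #J' : ℝ) ≤ K)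
    (hT' : ∀ j, T' j ⊆ T j) (hcard : ∀ j ∈ J', θ * #(T j) ≤ #(T' j))
    (hdeg : ∀ j ∈ J', ∀ t ∈ T' j, ∀ a, m ^ g a ≤ degIn G t (X a) ∧
      (degIn G t (X a) : ℝ) ≤ m ^ (g a + 1)) :
    PrivateCoverSystem G K J' T' (Finset.univ ×ˢ J') Prod.snd (fun e ↦ X e.1)
      (fun e ↦ m ^ (g e.1 + 1)) m⁻¹ (lam / θ) where
  card_index_le := hJK
  card_source_le := by simpa using hEK
  nonempty j hj := by
    have hpos : (0 : ℝ) < #(T j) := by exact_mod_cast (h.nonempty hn (hJ' hj)).card_pos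
    refine Finset.card_pos.1 ?_
    exact_mod_cast (mul_pos hθ hpos).trans_le (hcard j hj)
  degIn_le i hi j hj hij t ht := degIn_le_div_mul hθ hlam (hT' j) (hcard j hj)
    (h.degIn_le i (hJ' hi) j (hJ' hj) hij t (hT' i ht))
  target_mem e he := (Finset.mem_product.1 he).2
  source_degIn_le e _ x hx i hi _ := degIn_le_div_mul hθ hlam (hT' i) (hcard i hi)
    (hX e.1 x hx i (hJ' hi))
  bound_pos _ _ := by positivity
  le_degIn_source e he t ht := by
    rw [pow_succ', inv_mul_cancel_left₀ hm.ne']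
    exact (hdeg e.2 (Finset.mem_product.1 he).2 t ht e.1).1
  degIn_source_le e _ i hi _ t ht := (hdeg i hi t ht e.1).2

lemma CoherentBlockade.exists_isPrivateCover (h : CoherentBlockade G n c J T σ lam) (hn : 1 < n)
    (hη : 0 < η) (hlam : 0 < lam) (hXcard : ∀ a, (#(X a) : ℝ) ≤ n)
    (hX : ∀ a, ∀ x ∈ X a, ∀ j ∈ J, (degIn G x (T j) : ℝ) ≤ lam * #(T j))
    (hcov : ∀ a, ∀ j ∈ J, Covers G (X a) (T j)) {k N Q : ℕ} {K : ℝ}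
    (hQ : Q = (⌊1 / η⌋₊ + 1) ^ Fintype.card α) (hN : N = Fintype.card α * k) (hkK : (k : ℝ) ≤ K)
    (hNK : (N : ℝ) ≤ K) (hJ : Q * k ≤ #J) (hK : K * (lam * Q * (32 * K ^ 2) ^ N) ≤ 1 / 4) :
    ∃ J' ⊆ J, #J' = k ∧ ∃ T' : ι → Finset V, (∀ j ∈ J', T' j ⊆ T j) ∧
      (∃ Y : α → ι → Finset V, ∀ a, IsPrivateCover G J' T' (X a) (Y a)) ∧
      (∀ i ∈ J', ∀ j ∈ J', i ≠ j → ∀ t ∈ T' i,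
        (degIn G t (T' j) : ℝ) ≤ lam * Q * (32 * K ^ 2) ^ N * #(T' j)) ∧
      ∀ j ∈ J', ((n ^ η)⁻¹ / (32 * K * 2 ^ N)) ^ N * ((Q : ℝ)⁻¹ * #(T j)) ≤ #(T' j) := by
  have hm : 1 ≤ n ^ η := Real.one_le_rpow hn.le hη.le
  have hQpos : (0 : ℝ) < Q := by rw [hQ]; positivity
  obtain ⟨g, J', T₁, hJ', rfl, hT₁, hT₁card, hdeg⟩ :=
    exists_uniform_degIn hn hη (hQ ▸ hJ) hXcard hcov
  rw [← hQ] at hT₁card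
  have hsys := h.privateCoverSystem (by positivity) hlam.le hX (inv_pos.2 hQpos) (by positivity)
    hJ' hkK (by exact_mod_cast hN ▸ hNK) hT₁ hT₁card hdeg
  rw [div_inv_eq_mul] at hsys
  obtain ⟨T', Y, hT', hY, hYcov, hYanti, hlink, hcard⟩ := hsys.exists_private_covers
    (N := N) (by simp [hN]) (by positivity) hK (by positivity) (inv_le_one_of_one_le₀ hm)
  have hmem (a : α) {j} (hj : j ∈ J') : (a, j) ∈ Finset.univ ×ˢ J' := by simpa using hj
  have hKpos : 0 ≤ K := (Nat.cast_nonneg _).trans hkK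
  exact ⟨J', hJ', rfl, T', fun j hj ↦ (hT' j hj).trans (hT₁ j), ⟨fun a j ↦ Y (a, j), fun a ↦
    { subset j hj := hY _ (hmem a hj)
      covers j hj := hYcov _ (hmem a hj)
      anticomplete j hj := hYanti _ (hmem a hj) }⟩, hlink, fun j hj ↦
    (mul_le_mul_of_nonneg_left (hT₁card j hj) (by positivity)).trans (hcard j hj)⟩

lemma exists_blockade_with_private_covers (α : Type*) [Finite α] (ι : Type*) (k : ℕ) {Δ lam' : ℝ}
    (hΔ : 0 < Δ) (hlam' : 0 < lam') :
    ∃ (K : ℕ) (lam : ℝ), 0 < lam ∧ ∀ᶠ n : ℝ in atTop,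
    ∀ ⦃V : Type u⦄ ⦃G : SimpleGraph V⦄ ⦃c σ : ℝ⦄ ⦃J : Finset ι⦄ ⦃T : ι → Finset V⦄
      ⦃X : α → Finset V⦄, CoherentBlockade G n c J T σ lam → K ≤ #J →
      (∀ a, (#(X a) : ℝ) ≤ n) →
      (∀ a, ∀ x ∈ X a, ∀ j ∈ J, (degIn G x (T j) : ℝ) ≤ lam * #(T j)) →
      (∀ a, ∀ j ∈ J, Covers G (X a) (T j)) →
      ∃ J' ⊆ J, #J' = k ∧ ∃ T' : ι → Finset V, (∀ j ∈ J', T' j ⊆ T j) ∧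
        CoherentBlockade G n c J' T' (σ + Δ) lam' ∧
        ∃ Y : α → ι → Finset V, ∀ a, IsPrivateCover G J' T' (X a) (Y a) := by
  have := Fintype.ofFinite α
  obtain ⟨N, hN⟩ : ∃ N : ℕ, N = Fintype.card α * k := ⟨_, rfl⟩
  obtain ⟨K, hkK, hNK, hKpos⟩ : ∃ K : ℝ, k ≤ K ∧ N ≤ K ∧ 0 < K :=
    ⟨N + k + 1, by linarith [N.cast_nonneg (α := ℝ)], by linarith [k.cast_nonneg (α := ℝ)],
      by positivity⟩
  obtain ⟨η, hη, hηN⟩ : ∃ η : ℝ, 0 < η ∧ η * N ≤ Δ / 2 :=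
    ⟨Δ / (2 * (N + 1)), by positivity, by
      rw [div_mul_eq_mul_div, div_le_div_iff₀ (by positivity) two_pos]
      linarith⟩
  obtain ⟨Q, hQ⟩ : ∃ Q : ℕ, Q = (⌊1 / η⌋₊ + 1) ^ Fintype.card α := ⟨_, rfl⟩
  have hQpos : (0 : ℝ) < Q := by rw [hQ]; positivity
  have hθ : 0 < (1 / (32 * K * 2 ^ N)) ^ N * (Q : ℝ)⁻¹ := by positivity
  obtain ⟨lam, hlam, hlam_eq⟩ : ∃ lam : ℝ, 0 < lam ∧
      lam * Q * (32 * K ^ 2) ^ N = min lam' (1 / (4 * K)) :=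
    ⟨min lam' (1 / (4 * K)) / (Q * (32 * K ^ 2) ^ N), by positivity, by field_simp⟩
  refine ⟨Q * k, lam, hlam, ?_⟩
  filter_upwards [eventually_rpow_neg_le hθ (half_pos hΔ), eventually_gt_atTop 1]
    with n hnθ hn V G c σ J T X hT hJ hXcard hX hcov
  have hn0 : 0 < n := by positivity
  obtain ⟨J', hJ', hJ'card, T', hT', hY, hlink, hcard⟩ := hT.exists_isPrivateCover hn hη hlam
    hXcard hX hcov hQ hN hkK hNK hJ (by
      rw [hlam_eq]
      calc K * min lam' (1 / (4 * K)) ≤ K * (1 / (4 * K)) := by gcongr; exact min_le_right _ _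
        _ = 1 / 4 := by field_simp)
  refine ⟨J', hJ', hJ'card, T', hT', hT.subblockade hJ' hT' (fun j hj ↦ ?_)
    fun i hi j hj hij t ht ↦ ?_, hY⟩
  · calc n ^ (1 - (σ + Δ)) = n ^ (-(Δ / 2)) * (n ^ (-(Δ / 2)) * n ^ (1 - σ)) := by
          rw [← Real.rpow_add hn0, ← Real.rpow_add hn0]
          ring_nf
      _ ≤ n ^ (-(η * N)) * ((1 / (32 * K * 2 ^ N)) ^ N * (Q : ℝ)⁻¹ * #(T j)) := by
          gcongr
          · exact hn.le
          · exact hT.le_card j (hJ' hj)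
      _ = ((n ^ η)⁻¹ / (32 * K * 2 ^ N)) ^ N * ((Q : ℝ)⁻¹ * #(T j)) := by
          rw [Real.rpow_neg hn0.le, Real.rpow_mul_natCast hn0.le, div_eq_mul_one_div (n ^ η)⁻¹,
            mul_pow, inv_pow]
          ring
      _ ≤ #(T' j) := hcard j hj
  · refine (hlink i hi j hj hij t ht).trans ?_
    rw [hlam_eq]
    gcongr
    exact min_le_left _ _

end CoherentBlockade

/-! ### Expanding subblocks -/

section Expansion

open scoped Finset

variable {ι : Type*} {G : SimpleGraph V} {A : ι → Finset V} {I : Finset ι} {m τ : ℝ}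
  {U U' : ι × ι → Finset V} {i j : ι} {X : Finset V}

/-- `B` expands to `C` if every set of at most `m` vertices of `B` has at least `τ` times as many
neighbours in `C`. -/
def ExpandsTo (G : SimpleGraph V) (m τ : ℝ) (B C : Finset V) : Prop :=
  ∀ X ⊆ B, (#X : ℝ) ≤ m → τ * #X ≤ #(nbhdIn G X C)

open Classical in
/-- What is left of the block `A i` when all sets `U (i, j)` are removed from it. -/
def remainder (A : ι → Finset V) (I : Finset ι) (U : ι × ι → Finset V) (i : ι) : Finset V :=
  A i \ I.biUnion fun j ↦ U (i, j)

/-- Sets `U (i, j) ⊆ A i` of at most `m` vertices that fail to expand by a factor `τ` into what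
remains of `A j`. A family of largest total size leaves behind blocks that expand to each other. -/
structure ContractingFamily (G : SimpleGraph V) (A : ι → Finset V) (I : Finset ι) (m τ : ℝ)
    (U : ι × ι → Finset V) : Prop where
  subset : ∀ i ∈ I, ∀ j ∈ I, U (i, j) ⊆ A i
  card_le : ∀ i ∈ I, ∀ j ∈ I, (#(U (i, j)) : ℝ) ≤ m
  card_nbhdIn_le : ∀ i ∈ I, ∀ j ∈ I, i ≠ j →
    (#(nbhdIn G (U (i, j)) (remainder A I U j)) : ℝ) ≤ τ * #(U (i, j))

lemma remainder_subset : remainder A I U i ⊆ A i := by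
  classical exact Finset.sdiff_subset

lemma remainder_anti (h : ∀ p, U p ⊆ U' p) : remainder A I U' i ⊆ remainder A I U i := by
  classical exact Finset.sdiff_subset_sdiff subset_rfl (Finset.biUnion_mono fun j _ ↦ h (i, j))

lemma disjoint_remainder (hj : j ∈ I) : Disjoint (U (i, j)) (remainder A I U i) := by
  classical
  exact Finset.disjoint_sdiff.mono_left (Finset.subset_biUnion_of_mem (fun j ↦ U (i, j)) hj)

namespace ContractingFamily

lemma card_sub_le_card_remainder (hU : ContractingFamily G A I m τ U) (hi : i ∈ I) :
    (#(A i) : ℝ) - #I * m ≤ #(remainder A I U i) := by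
  classical
  have hremoved : (#(I.biUnion fun j ↦ U (i, j)) : ℝ) ≤ #I * m :=
    calc (#(I.biUnion fun j ↦ U (i, j)) : ℝ) ≤ ∑ j ∈ I, (#(U (i, j)) : ℝ) := by
          exact_mod_cast Finset.card_biUnion_le
      _ ≤ #I * m := by
          simpa only [nsmul_eq_mul] using Finset.sum_le_card_nsmul I _ m fun j ↦ hU.card_le i hi j
  have hcard : (#(A i) : ℝ) ≤ #(remainder A I U i) + #(I.biUnion fun j ↦ U (i, j)) := by
    exact_mod_cast Nat.sub_le_iff_le_add.1 (Finset.le_card_sdiff _ _)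
  linarith

lemma card_nbhdIn_union_le [DecidableEq V] (hU : ContractingFamily G A I m τ U) (hi : i ∈ I)
    (hj : j ∈ I) (hij : i ≠ j) (hX : X ⊆ remainder A I U i)
    (hcontract : (#(nbhdIn G X (remainder A I U j)) : ℝ) ≤ τ * #X) :
    (#(nbhdIn G (U (i, j) ∪ X) (remainder A I U j)) : ℝ) ≤ τ * #(U (i, j) ∪ X) := by
  rw [nbhdIn_union, Finset.card_union_of_disjoint ((disjoint_remainder hj).mono_right hX)]
  calc (#(nbhdIn G (U (i, j)) (remainder A I U j) ∪ nbhdIn G X (remainder A I U j)) : ℝ)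
      ≤ #(nbhdIn G (U (i, j)) (remainder A I U j)) + #(nbhdIn G X (remainder A I U j)) := by
        exact_mod_cast Finset.card_union_le _ _
    _ ≤ τ * #(U (i, j)) + τ * #X := add_le_add (hU.card_nbhdIn_le i hi j hj hij) hcontract
    _ = τ * ((#(U (i, j)) + #X : ℕ) : ℝ) := by push_cast; ring

lemma update_union [DecidableEq V] [DecidableEq ι] (hU : ContractingFamily G A I m τ U)
    (hi : i ∈ I) (hj : j ∈ I) (hij : i ≠ j) (hX : X ⊆ remainder A I U i)
    (hcontract : (#(nbhdIn G X (remainder A I U j)) : ℝ) ≤ τ * #X)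
    (hcard : (#(U (i, j) ∪ X) : ℝ) ≤ m) :
    ContractingFamily G A I m τ (Function.update U (i, j) (U (i, j) ∪ X)) := by
  have hrem (b : ι) : remainder A I (Function.update U (i, j) (U (i, j) ∪ X)) b ⊆
      remainder A I U b := remainder_anti fun p ↦ by
    rcases eq_or_ne p (i, j) with rfl | hp
    · simp only [Function.update_self, Finset.subset_union_left]
    · rw [Function.update_of_ne hp]
  refine ⟨fun a ha b hb ↦ ?_, fun a ha b hb ↦ ?_, fun a ha b hb hab ↦ le_trans
    (Nat.cast_le.2 (Finset.card_le_card (nbhdIn_mono subset_rfl (hrem b)))) ?_⟩ <;>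
  rcases eq_or_ne (a, b) (i, j) with hp | hp
  · obtain ⟨rfl, rfl⟩ := Prod.mk.inj hp
    rw [Function.update_self]
    exact Finset.union_subset (hU.subset a ha b hb) (hX.trans remainder_subset)
  · rw [Function.update_of_ne hp]
    exact hU.subset a ha b hb
  · rwa [hp, Function.update_self]
  · rw [Function.update_of_ne hp]
    exact hU.card_le a ha b hb
  · obtain ⟨rfl, rfl⟩ := Prod.mk.inj hp
    rw [Function.update_self]
    exact hU.card_nbhdIn_union_le ha hb hab hX hcontract
  · rw [Function.update_of_ne hp]
    exact hU.card_nbhdIn_le a ha b hb hab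

lemma exists_maximal (hm : 0 ≤ m) : ∃ U, ContractingFamily G A I m τ U ∧
    ∀ U', ContractingFamily G A I m τ U' → ∑ p ∈ I ×ˢ I, #(U' p) ≤ ∑ p ∈ I ×ˢ I, #(U p) := by
  let totals : Set ℕ := {k | ∃ U, ContractingFamily G A I m τ U ∧ ∑ p ∈ I ×ˢ I, #(U p) = k}
  have hempty : ContractingFamily G A I m τ fun _ ↦ ∅ :=
    ⟨by simp, by simpa using fun _ _ _ _ ↦ hm, by simp [nbhdIn]⟩
  have hbdd : BddAbove totals := by
    refine ⟨∑ p ∈ I ×ˢ I, #(A p.1), ?_⟩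
    rintro k ⟨U, hU, rfl⟩
    exact Finset.sum_le_sum fun p hp ↦ Finset.card_le_card
      (hU.subset p.1 (Finset.mem_product.1 hp).1 p.2 (Finset.mem_product.1 hp).2)
  obtain ⟨U, hU, hUtotal⟩ := Nat.sSup_mem (s := totals) ⟨_, _, hempty, rfl⟩ hbdd
  exact ⟨U, hU, fun U' hU' ↦ hUtotal ▸ le_csSup hbdd ⟨U', hU', rfl⟩⟩

lemma lt_card_union_of_maximal [DecidableEq V] (hU : ContractingFamily G A I m τ U)
    (hmax : ∀ U', ContractingFamily G A I m τ U' →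
      ∑ p ∈ I ×ˢ I, #(U' p) ≤ ∑ p ∈ I ×ˢ I, #(U p))
    (hi : i ∈ I) (hj : j ∈ I) (hij : i ≠ j) (hX : X ⊆ remainder A I U i) (hne : X.Nonempty)
    (hcontract : (#(nbhdIn G X (remainder A I U j)) : ℝ) ≤ τ * #X) :
    m < #(U (i, j) ∪ X) := by
  classical
  by_contra! hcard
  have hlt : #(U (i, j)) < #(U (i, j) ∪ X) := by
    rw [Finset.card_union_of_disjoint ((disjoint_remainder hj).mono_right hX)]
    exact Nat.lt_add_of_pos_right hne.card_pos
  refine (hmax _ (hU.update_union hi hj hij hX hcontract hcard)).not_gt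
    (Finset.sum_lt_sum (fun p _ ↦ ?_) ⟨(i, j), Finset.mk_mem_product hi hj, ?_⟩)
  · rcases eq_or_ne p (i, j) with rfl | hp
    · rw [Function.update_self]
      exact hlt.le
    · rw [Function.update_of_ne hp]
  · rwa [Function.update_self]

end ContractingFamily

lemma CoherentBlockade.exists_expanding_subblocks {n c σ lam : ℝ}
    (h : CoherentBlockade G n c I A σ lam) (hn : 0 ≤ n) (hτ : 0 ≤ τ)
    (hI : #I * n ^ (1 - c) ≤ n ^ (1 - σ) / 2) (hτc : 2 * τ * n ^ (1 - c) ≤ n ^ (1 - σ) / 4)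
    (hc : n ^ (1 - c) < n ^ (1 - σ) / 4) :
    ∃ B : ι → Finset V, (∀ i, B i ⊆ A i) ∧
      (∀ i ∈ I, (#(A i) : ℝ) - #I * n ^ (1 - c) ≤ #(B i)) ∧
      ∀ i ∈ I, ∀ j ∈ I, i ≠ j → ExpandsTo G (n ^ (1 - c)) τ (B i) (B j) := by
  classical
  obtain ⟨U, hU, hmax⟩ := ContractingFamily.exists_maximal (G := G) (A := A) (I := I) (τ := τ)
    (Real.rpow_nonneg hn (1 - c))
  refine ⟨remainder A I U, fun _ ↦ remainder_subset, fun i hi ↦ hU.card_sub_le_card_remainder hi,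
    fun i hi j hj hij X hX hXcard ↦ ?_⟩
  by_contra! hcontract
  have hne : X.Nonempty := by
    rw [Finset.nonempty_iff_ne_empty]
    rintro rfl
    simp [nbhdIn] at hcontract
  have hlarge := hU.lt_card_union_of_maximal hmax hi hj hij hX hne hcontract.le
  have hcohere := h.card_sub_le_card_nbhdIn hi hj hij
    (Finset.union_subset (hU.subset i hi j hj) (hX.trans remainder_subset))
    (remainder_subset (U := U) (I := I)) hlarge.le
  have hsmall : τ * #(U (i, j) ∪ X) ≤ τ * (2 * n ^ (1 - c)) := by
    refine mul_le_mul_of_nonneg_left ?_ hτ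
    calc (#(U (i, j) ∪ X) : ℝ) ≤ #(U (i, j)) + #X := by exact_mod_cast Finset.card_union_le _ _
      _ ≤ 2 * n ^ (1 - c) := by linarith [hU.card_le i hi j hj]
  linarith [hU.card_nbhdIn_union_le hi hj hij hX hcontract.le, hU.card_sub_le_card_remainder hj,
    h.le_card j hj, Real.rpow_nonneg hn (1 - c)]

end Expansion

/-! ### Levellings -/

section Levelling

open scoped Finset

variable {ι : Type*} {G : SimpleGraph V} {C : Finset V} {L L' : ℕ → Finset V} {i j : ℕ} {z : V}

open Classical in
/-- The vertices of `C` that have a neighbour in one of the levels `L 0, …, L (i - 1)`. -/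
def nbhdBelow (G : SimpleGraph V) (L : ℕ → Finset V) (i : ℕ) (C : Finset V) : Finset V :=
  {z ∈ C | ∃ a < i, ∃ x ∈ L a, G.Adj x z}

open Classical in
/-- The vertices of `C` for which `L i` is the first level that contains a neighbour. -/
def newNbhd (G : SimpleGraph V) (L : ℕ → Finset V) (i : ℕ) (C : Finset V) : Finset V :=
  nbhdBelow G L (i + 1) C \ nbhdBelow G L i C

open Classical in
lemma mem_nbhdBelow : z ∈ nbhdBelow G L i C ↔ z ∈ C ∧ ∃ a < i, ∃ x ∈ L a, G.Adj x z :=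
  Finset.mem_filter

lemma nbhdBelow_subset : nbhdBelow G L i C ⊆ C := fun _ hz ↦ (mem_nbhdBelow.1 hz).1

@[simp]
lemma nbhdBelow_zero : nbhdBelow G L 0 C = ∅ := by
  simp [nbhdBelow]

lemma nbhdBelow_mono (h : i ≤ j) : nbhdBelow G L i C ⊆ nbhdBelow G L j C := fun _ hz ↦ by
  obtain ⟨hzC, a, ha, hza⟩ := mem_nbhdBelow.1 hz
  exact mem_nbhdBelow.2 ⟨hzC, a, ha.trans_le h, hza⟩

lemma nbhdBelow_congr (h : ∀ a < i, L a = L' a) : nbhdBelow G L i C = nbhdBelow G L' i C := by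
  ext z
  simp only [mem_nbhdBelow, and_congr_right_iff]
  exact fun _ ↦ exists_congr fun a ↦ and_congr_right fun ha ↦ by rw [h a ha]

lemma nbhdIn_subset_nbhdBelow : nbhdIn G (L i) C ⊆ nbhdBelow G L (i + 1) C := fun _ hz ↦
  mem_nbhdBelow.2 ⟨(mem_nbhdIn.1 hz).1, i, i.lt_succ_self, (mem_nbhdIn.1 hz).2⟩

lemma newNbhd_subset : newNbhd G L i C ⊆ C := by
  classical exact Finset.sdiff_subset.trans nbhdBelow_subset

lemma card_newNbhd :
    (#(newNbhd G L i C) : ℝ) = #(nbhdBelow G L (i + 1) C) - #(nbhdBelow G L i C) := by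
  classical exact Finset.cast_card_sdiff (nbhdBelow_mono i.le_succ)

lemma covers_newNbhd : Covers G (L i) (newNbhd G L i C) := fun z hz ↦ by
  classical
  obtain ⟨hz, hzbelow⟩ := Finset.mem_sdiff.1 hz
  obtain ⟨hzC, a, ha, hza⟩ := mem_nbhdBelow.1 hz
  obtain rfl : a = i := by
    by_contra hai
    exact hzbelow (mem_nbhdBelow.2 ⟨hzC, a, by omega, hza⟩)
  exact hza

lemma anticomplete_newNbhd (h : j < i) : Anticomplete G (L j) (newNbhd G L i C) :=
    fun x hx z hz hxz ↦ by
  classical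
  obtain ⟨hz, hzbelow⟩ := Finset.mem_sdiff.1 hz
  exact hzbelow (mem_nbhdBelow.2 ⟨nbhdBelow_subset hz, j, h, x, hx, hxz⟩)

lemma exists_card_le_mul_card_newNbhd {m : ℝ} {k R : ℕ} (hk : k ≤ R) (hm : m * (R + 2) ≤ #C)
    (hcard : #C - m ≤ #(nbhdIn G (L k) C)) :
    ∃ i ≤ k, (#C : ℝ) ≤ (R + 2) * #(newNbhd G L i C) := by
  have hsum : ∑ i ∈ Finset.range (k + 1), (#(newNbhd G L i C) : ℝ) =
      #(nbhdBelow G L (k + 1) C) := by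
    simp only [card_newNbhd, Finset.sum_range_sub (fun i ↦ (#(nbhdBelow G L i C) : ℝ)),
      nbhdBelow_zero, Finset.card_empty, Nat.cast_zero, sub_zero]
  have hlarge : ∑ _i ∈ Finset.range (k + 1), (#C : ℝ) / (R + 2) ≤
      ∑ i ∈ Finset.range (k + 1), (#(newNbhd G L i C) : ℝ) := by
    rw [hsum, Finset.sum_const, Finset.card_range, nsmul_eq_mul]
    calc ((k + 1 : ℕ) : ℝ) * (#C / (R + 2)) ≤ (R + 1) * (#C / (R + 2)) := by
          gcongr
          exact_mod_cast Nat.succ_le_succ hk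
      _ = #C - #C / (R + 2) := by field_simp; ring
      _ ≤ #C - m := sub_le_sub_left ((le_div_iff₀ (by positivity)).2 hm) _
      _ ≤ #(nbhdIn G (L k) C) := hcard
      _ ≤ #(nbhdBelow G L (k + 1) C) := by
          exact_mod_cast Finset.card_le_card nbhdIn_subset_nbhdBelow
  obtain ⟨i, hi, hcardi⟩ := Finset.exists_le_of_sum_le Finset.nonempty_range_add_one hlarge
  exact ⟨i, Nat.lt_succ_iff.1 (Finset.mem_range.1 hi), (div_le_iff₀' (by positivity)).1 hcardi⟩

/-- Sets `L 0 = {v}, L 1, …, L k`, with `L 1, …, L k` contained in distinct blocks `B (q a)`, such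
that each level covers the next one and non-consecutive levels are anticomplete. In contrast to
`IsLevelling` the levels are finite sets, and `L 0` need not lie in a block. -/
structure RootedLevelling (G : SimpleGraph V) (B : ι → Finset V) (I : Finset ι) (v : V)
    (L : ℕ → Finset V) (q : ℕ → ι) (k : ℕ) : Prop where
  level_zero : L 0 = {v}
  mem : ∀ a ∈ Set.Icc 1 k, q a ∈ I
  subset : ∀ a ∈ Set.Icc 1 k, L a ⊆ B (q a)
  injOn : Set.InjOn q (Set.Icc 1 k)
  covers : ∀ a < k, Covers G (L a) (L (a + 1))
  anticomplete : ∀ a b, a + 2 ≤ b → b ≤ k → Anticomplete G (L a) (L b)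

namespace RootedLevelling

variable {B : ι → Finset V} {I : Finset ι} {v : V} {q : ℕ → ι} {k : ℕ} {τ : ℝ} {p : ι}

lemma zero (p : ι) : RootedLevelling G B I v (fun _ ↦ {v}) (fun _ ↦ p) 0 where
  level_zero := rfl
  mem := by simp
  subset := by simp
  injOn := by simp
  covers := by simp
  anticomplete a b hab hb := by omega

lemma snoc (hL : RootedLevelling G B I v L q k) (hp : p ∈ I) (hq : p ∉ q '' Set.Icc 1 k) :
    RootedLevelling G B I v (Function.update L (k + 1) (newNbhd G L k (B p)))
      (Function.update q (k + 1) p) (k + 1) := by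
  have hIcc : Set.Icc 1 (k + 1) = insert (k + 1) (Set.Icc 1 k) := by
    ext
    simp only [Set.mem_Icc, Set.mem_insert_iff]
    omega
  have hLold (a : ℕ) (ha : a ≤ k) : Function.update L (k + 1) (newNbhd G L k (B p)) a = L a :=
    Function.update_of_ne (by omega) _ _
  have hqold : Set.EqOn (Function.update q (k + 1) p) q (Set.Icc 1 k) :=
    fun a ha ↦ Function.update_of_ne (ha.2.trans_lt k.lt_succ_self).ne _ _
  refine ⟨(hLold 0 k.zero_le).trans hL.level_zero, ?_, ?_, ?_, fun a ha ↦ ?_, fun a b hab hb ↦ ?_⟩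
  · rw [hIcc, Set.forall_mem_insert, Function.update_self]
    exact ⟨hp, fun a ha ↦ hqold ha ▸ hL.mem a ha⟩
  · rw [hIcc, Set.forall_mem_insert, Function.update_self, Function.update_self]
    exact ⟨newNbhd_subset, fun a ha ↦ hqold ha ▸ hLold a ha.2 ▸ hL.subset a ha⟩
  · rw [hIcc, Set.injOn_insert (by simp), Function.update_self, hqold.image_eq]
    exact ⟨hqold.injOn_iff.2 hL.injOn, hq⟩
  · rw [hLold a (Nat.lt_succ_iff.1 ha)]
    rcases (Nat.lt_succ_iff.1 ha).eq_or_lt with rfl | hak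
    · rw [Function.update_self]
      exact covers_newNbhd
    · rw [hLold (a + 1) hak]
      exact hL.covers a hak
  · rw [hLold a (by omega)]
    rcases hb.eq_or_lt with rfl | hbk
    · rw [Function.update_self]
      exact anticomplete_newNbhd (by omega)
    · rw [hLold b (Nat.lt_succ_iff.1 hbk)]
      exact hL.anticomplete a b hab (Nat.lt_succ_iff.1 hbk)

-- The next level is taken in the unused block `p` that maximizes the new neighbourhood; then
-- the bound on `nbhdBelow`, by which at least half of the expansion is new, persists.
lemma exists_snoc (hL : RootedLevelling G B I v L q k) (hτ : 4 ≤ τ) (hk : k < #I)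
    (hbelow : ∀ p ∈ I, p ∉ q '' Set.Icc 1 k → (#(nbhdBelow G L k (B p)) : ℝ) ≤ 2 * #(L k))
    (hexpand : ∀ p ∈ I, p ∉ q '' Set.Icc 1 k → τ * #(L k) ≤ #(nbhdIn G (L k) (B p))) :
    ∃ L' r, RootedLevelling G B I v L' r (k + 1) ∧ τ / 2 * #(L k) ≤ #(L' (k + 1)) ∧
      ∀ p ∈ I, p ∉ r '' Set.Icc 1 (k + 1) →
        (#(nbhdBelow G L' (k + 1) (B p)) : ℝ) ≤ 2 * #(L' (k + 1)) := by
  classical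
  have hunused : (I \ (Finset.Icc 1 k).image q).Nonempty := by
    refine Finset.card_pos.1 ((Nat.sub_pos_of_lt (lt_of_le_of_lt ?_ hk)).trans_le
      (Finset.le_card_sdiff _ I))
    simpa using Finset.card_image_le (s := Finset.Icc 1 k) (f := q)
  obtain ⟨p, hp, hmax⟩ := Finset.exists_max_image _ (fun p ↦ #(newNbhd G L k (B p))) hunused
  have hmem (p : ι) : p ∈ I \ (Finset.Icc 1 k).image q ↔ p ∈ I ∧ p ∉ q '' Set.Icc 1 k := by
    simp
  obtain ⟨hpI, hpq⟩ := (hmem p).1 hp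
  have hnew : (τ - 2) * #(L k) ≤ #(newNbhd G L k (B p)) := by
    have hnbhd : (#(nbhdIn G (L k) (B p)) : ℝ) ≤ #(nbhdBelow G L (k + 1) (B p)) := by
      exact_mod_cast Finset.card_le_card nbhdIn_subset_nbhdBelow
    linarith [card_newNbhd (G := G) (L := L) (i := k) (C := B p), hbelow p hpI hpq,
      hexpand p hpI hpq]
  have hcard : (0 : ℝ) ≤ #(L k) := Nat.cast_nonneg _
  refine ⟨_, _, hL.snoc hpI hpq, ?_, fun p' hp'I hp'q ↦ ?_⟩
  · rw [Function.update_self]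
    nlinarith [hcard]
  · have hp'q : p' ∉ q '' Set.Icc 1 k := by
      rintro ⟨a, ha, rfl⟩
      exact hp'q ⟨a, ⟨ha.1, ha.2.trans k.le_succ⟩,
        Function.update_of_ne (ha.2.trans_lt k.lt_succ_self).ne _ _⟩
    have hmax' : (#(newNbhd G L k (B p')) : ℝ) ≤ #(newNbhd G L k (B p)) := by
      exact_mod_cast hmax p' ((hmem p').2 ⟨hp'I, hp'q⟩)
    rw [Function.update_self, ← nbhdBelow_congr (L := L) fun a ha ↦
      (Function.update_of_ne ha.ne _ _).symm]
    nlinarith [hcard, card_newNbhd (G := G) (L := L) (i := k) (C := B p'), hbelow p' hp'I hp'q]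

end RootedLevelling

lemma exists_rootedLevelling {B : ι → Finset V} {I : Finset ι} {v : V} {m τ : ℝ} {R : ℕ} {i₀ : ι}
    (hv : v ∈ B i₀) (hi₀ : i₀ ∉ I) (hRI : R ≤ #I) (hm : 1 < m) (hτ : 4 ≤ τ)
    (hmR : m ≤ (τ / 2) ^ R)
    (hexpand : ∀ i ∈ insert i₀ (I : Set ι), ∀ j ∈ I, i ≠ j → ExpandsTo G m τ (B i) (B j)) :
    ∃ k L q, 1 ≤ k ∧ k ≤ R ∧ RootedLevelling G B I v L q k ∧ m ≤ #(L k) := by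
  by_contra! hsmall
  have hgrow (k : ℕ) (hk : k ≤ R) : ∃ L q, RootedLevelling G B I v L q k ∧
      (τ / 2) ^ k ≤ #(L k) ∧ ∀ p ∈ I, p ∉ q '' Set.Icc 1 k →
        (#(nbhdBelow G L k (B p)) : ℝ) ≤ 2 * #(L k) := by
    induction k with
    | zero => exact ⟨_, _, RootedLevelling.zero i₀, by simp, by simp⟩
    | succ k ih =>
      obtain ⟨L, q, hL, hcard, hbelow⟩ := ih (Nat.le_of_succ_le hk)
      have hLm : (#(L k) : ℝ) ≤ m := by
        rcases k.eq_zero_or_pos with rfl | hk0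
        · simpa [hL.level_zero] using hm.le
        · exact (hsmall k L q hk0 (Nat.le_of_succ_le hk) hL).le
      have hblock (p : ι) (hp : p ∈ I) (hpq : p ∉ q '' Set.Icc 1 k) :
          ∃ i ∈ insert i₀ (I : Set ι), i ≠ p ∧ L k ⊆ B i := by
        rcases k.eq_zero_or_pos with rfl | hk0
        · refine ⟨i₀, Set.mem_insert _ _, fun h ↦ hi₀ (h ▸ hp), ?_⟩
          rwa [hL.level_zero, Finset.singleton_subset_iff]
        · have hk1 : k ∈ Set.Icc 1 k := ⟨hk0, le_rfl⟩
          exact ⟨q k, Set.mem_insert_of_mem _ (hL.mem k hk1), fun h ↦ hpq ⟨k, hk1, h⟩,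
            hL.subset k hk1⟩
      obtain ⟨L', q', hL', hcard', hbelow'⟩ := hL.exists_snoc hτ (by omega) hbelow fun p hp hpq ↦ by
        obtain ⟨i, hi, hip, hLi⟩ := hblock p hp hpq
        exact hexpand i hi p hp hip _ hLi hLm
      refine ⟨L', q', hL', le_trans ?_ hcard', hbelow'⟩
      rw [pow_succ']
      gcongr
  obtain ⟨L, q, hL, hcard, -⟩ := hgrow R le_rfl
  have hR : 1 ≤ R := by
    by_contra! hR
    obtain rfl := Nat.lt_one_iff.1 hR
    linarith [pow_zero (τ / 2)]
  exact (hsmall R L q hR le_rfl hL).not_ge (hmR.trans hcard)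

end Levelling

/-! ### Labelled paths and fans -/

section Fan

open scoped Finset
open Filter

universe u

variable {ι : Type*} {G : SimpleGraph V} {A B C : ι → Finset V} {I J U U' : Finset ι}
  {p : ℕ → V} {κ : ℕ → ι} {l : ℕ} {t v : V}

/-- The vertices `p 0, …, p l` form a walk of `G` in this order, and its interior vertices lie in
distinct blocks `A (κ a)` with labels `κ a ∈ U`. Values of `p` beyond `l`, and of `κ` outside the
interior, are irrelevant. -/
structure LabelledWalk (G : SimpleGraph V) (A : ι → Finset V) (U : Finset ι) (p : ℕ → V)
    (κ : ℕ → ι) (l : ℕ) : Prop where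
  adj : ∀ a < l, G.Adj (p a) (p (a + 1))
  label_mem : ∀ a ∈ Set.Ioo 0 l, κ a ∈ U
  mem_block : ∀ a ∈ Set.Ioo 0 l, p a ∈ A (κ a)
  injOn : Set.InjOn κ (Set.Ioo 0 l)

/-- A labelled walk that is an induced path of `G`; these are the paths along which rainbow copies
of subdivided graphs are built. -/
structure LabelledPath (G : SimpleGraph V) (A : ι → Finset V) (U : Finset ι) (p : ℕ → V)
    (κ : ℕ → ι) (l : ℕ) : Prop extends LabelledWalk G A U p κ l where
  not_adj : ∀ a b, a + 2 ≤ b → b ≤ l → ¬ G.Adj (p a) (p b)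

/-- Every vertex of every `C j` is joined to the centre `r` by a labelled path of length `l` that,
apart from its first vertex, has no neighbours in the other sets `C i`. -/
def Fan (G : SimpleGraph V) (A : ι → Finset V) (U J : Finset ι) (C : ι → Finset V) (r : V)
    (l : ℕ) : Prop :=
  ∀ j ∈ J, ∀ t ∈ C j, ∃ p κ, LabelledPath G A U p κ l ∧ p 0 = t ∧ p l = r ∧
    ∀ a ∈ Set.Ioc 0 l, ∀ i ∈ J, i ≠ j → ∀ s ∈ C i, ¬ G.Adj (p a) s

lemma LabelledPath.mono (h : LabelledPath G A U p κ l) (hU : U ⊆ U') :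
    LabelledPath G A U' p κ l :=
  { h with label_mem := fun a ha ↦ hU (h.label_mem a ha) }

lemma LabelledPath.cons (h : LabelledPath G A U p κ l) (ht : G.Adj t (p 0))
    (htp : ∀ a ∈ Set.Ioc 0 l, ¬ G.Adj t (p a)) (hκ : 0 < l → κ 0 ∈ U) (hp : 0 < l → p 0 ∈ A (κ 0))
    (hκp : ∀ a ∈ Set.Ioo 0 l, κ a ≠ κ 0) :
    LabelledPath G A U (fun a ↦ a.casesOn t p) (fun a ↦ κ (a - 1)) (l + 1) where
  adj
    | 0, _ => ht
    | a + 1, ha => h.adj a (by omega)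
  not_adj
    | 0, b + 1, hb, hbl => htp b ⟨by omega, by omega⟩
    | a + 1, b + 1, hab, hb => h.not_adj a b (by omega) (by omega)
  label_mem
    | 1, ha => hκ (Nat.lt_of_succ_lt_succ ha.2)
    | a + 2, ha => h.label_mem (a + 1) ⟨a.succ_pos, Nat.lt_of_succ_lt_succ ha.2⟩
  mem_block
    | 1, ha => hp (Nat.lt_of_succ_lt_succ ha.2)
    | a + 2, ha => h.mem_block (a + 1) ⟨a.succ_pos, Nat.lt_of_succ_lt_succ ha.2⟩
  injOn
    | 1, _, 1, _, _ => rfl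
    | 1, _, b + 2, hb, hab => (hκp (b + 1) ⟨b.succ_pos, Nat.lt_of_succ_lt_succ hb.2⟩ hab.symm).elim
    | a + 2, ha, 1, _, hab => (hκp (a + 1) ⟨a.succ_pos, Nat.lt_of_succ_lt_succ ha.2⟩ hab).elim
    | a + 2, ha, b + 2, hb, hab =>
      congrArg (· + 1) (h.injOn ⟨a.succ_pos, Nat.lt_of_succ_lt_succ ha.2⟩
        ⟨b.succ_pos, Nat.lt_of_succ_lt_succ hb.2⟩ hab)

lemma Fan.mono {J' : Finset ι} {C' : ι → Finset V} {r : V} (h : Fan G A U J C r l) (hJ : J' ⊆ J)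
    (hC : ∀ j ∈ J', C' j ⊆ C j) : Fan G A U J' C' r l := fun j hj t ht ↦
  let ⟨p, κ, hp, hpt, hpr, hpC⟩ := h j (hJ hj) t (hC j hj ht)
  ⟨p, κ, hp, hpt, hpr, fun a ha i hi hij s hs ↦ hpC a ha i (hJ hi) hij s (hC i hi hs)⟩

lemma exists_descending_path {L : ℕ → Finset V} {i : ℕ} {y : V}
    (hcov : ∀ a < i, Covers G (L a) (L (a + 1))) (hy : y ∈ L i) :
    ∃ p : ℕ → V, p 0 = y ∧ (∀ a ≤ i, p a ∈ L (i - a)) ∧ ∀ a < i, G.Adj (p a) (p (a + 1)) := by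
  induction i generalizing y with
  | zero => exact ⟨fun _ ↦ y, rfl, fun a _ ↦ by simpa using hy, by simp⟩
  | succ i ih =>
    obtain ⟨x, hx, hxy⟩ := hcov i i.lt_succ_self y hy
    obtain ⟨p, hpx, hpL, hp⟩ := ih (fun a ha ↦ hcov a (by omega)) hx
    refine ⟨fun a ↦ a.casesOn y p, rfl, ?_, ?_⟩
    · rintro (_ | a) ha
      · exact hy
      · simpa using hpL a (by omega)
    · rintro (_ | a) ha
      · simpa [hpx] using hxy.symm
      · exact hp a (by omega)

namespace RootedLevelling

variable {L : ℕ → Finset V} {q : ℕ → ι} {i k : ℕ} {y : V}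

lemma mono (hL : RootedLevelling G B I v L q k) (hBA : ∀ i ∈ I, B i ⊆ A i) :
    RootedLevelling G A I v L q k :=
  { hL with subset := fun a ha ↦ (hL.subset a ha).trans (hBA _ (hL.mem a ha)) }

lemma take (hL : RootedLevelling G A I v L q k) (hi : i ≤ k) : RootedLevelling G A I v L q i where
  level_zero := hL.level_zero
  mem a ha := hL.mem a ⟨ha.1, ha.2.trans hi⟩
  subset a ha := hL.subset a ⟨ha.1, ha.2.trans hi⟩
  injOn := hL.injOn.mono (Set.Icc_subset_Icc_right hi)
  covers a ha := hL.covers a (ha.trans_le hi)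
  anticomplete a b hab hb := hL.anticomplete a b hab (hb.trans hi)

lemma exists_subset_block {i₀ : ι} (hL : RootedLevelling G A I v L q k) (hv : v ∈ A i₀) :
    ∃ i, (i = i₀ ∨ i ∈ I) ∧ L k ⊆ A i := by
  rcases k.eq_zero_or_pos with rfl | hk
  · exact ⟨i₀, .inl rfl, by simpa [hL.level_zero] using hv⟩
  · exact ⟨q k, .inr (hL.mem k ⟨hk, le_rfl⟩), hL.subset k ⟨hk, le_rfl⟩⟩

lemma exists_labelledPath (hL : RootedLevelling G A I v L q k) (hy : y ∈ L k) :
    ∃ p, LabelledPath G A I p (fun a ↦ q (k - a)) k ∧ p 0 = y ∧ p k = v ∧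
      ∀ a ≤ k, p a ∈ L (k - a) := by
  obtain ⟨p, hpy, hpL, hp⟩ := exists_descending_path hL.covers hy
  have hIcc (a : ℕ) (ha : a ∈ Set.Ioo 0 k) : k - a ∈ Set.Icc 1 k := by
    simp only [Set.mem_Ioo, Set.mem_Icc] at ha ⊢
    omega
  refine ⟨p, ⟨⟨hp, fun a ha ↦ hL.mem _ (hIcc a ha),
    fun a ha ↦ hL.subset _ (hIcc a ha) (hpL a ha.2.le), fun a ha b hb hab ↦ ?_⟩,
    fun a b hab hb h ↦ ?_⟩, hpy, ?_, hpL⟩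
  · have := hL.injOn (hIcc a ha) (hIcc b hb) hab
    have := ha.2
    have := hb.2
    omega
  · exact hL.anticomplete (k - b) (k - a) (by omega) (by omega) _ (hpL b hb) _
      (hpL a (by omega)) h.symm
  · simpa [hL.level_zero] using hpL k le_rfl

lemma fan {Y : ι → Finset V} (hL : RootedLevelling G A I v L q k)
    (hY : IsPrivateCover G J C (L k) Y)
    (hC : ∀ h < k, ∀ j ∈ J, Anticomplete G (L h) (C j)) : Fan G A I J C v (k + 1) := by
  intro j hj t ht
  obtain ⟨y, hy, hyt⟩ := hY.covers j hj t ht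
  obtain ⟨p, hp, hpy, hpv, hpL⟩ := hL.exists_labelledPath (hY.subset j hj hy)
  have hlevel (a : ℕ) (ha : a ∈ Set.Ioc 0 k) (j' : ι) (hj' : j' ∈ J) (s : V) (hs : s ∈ C j') :
      ¬ G.Adj (p a) s :=
    hC (k - a) (Nat.sub_lt_self ha.1 ha.2) j' hj' _ (hpL a ha.2) s hs
  refine ⟨_, _, hp.cons (hpy ▸ hyt.symm) (fun a ha h ↦ hlevel a ha j hj t ht h.symm)
    (fun hk ↦ hL.mem k ⟨hk, le_rfl⟩) (fun hk ↦ hL.subset k ⟨hk, le_rfl⟩ (hpL 0 k.zero_le))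
    (fun a ha h ↦ ?_), rfl, hpv, ?_⟩
  · have := hL.injOn (x₁ := k - a) (x₂ := k) ⟨Nat.sub_pos_of_lt ha.2, k.sub_le a⟩
      ⟨ha.1.trans ha.2, le_rfl⟩ h
    have := ha.1
    have := ha.2
    omega
  · rintro (_ | _ | a) ha j' hj' hjj' s hs h
    · exact absurd ha.1 (lt_irrefl 0)
    · exact hY.anticomplete j hj j' hj' hjj' y hy s hs (by simpa [hpy] using h)
    · exact hlevel (a + 1) ⟨a.succ_pos, Nat.succ_le_succ_iff.1 ha.2⟩ j' hj' s hs h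

end RootedLevelling

namespace CoherentBlockade

variable {n c σ lam : ℝ} {R : ℕ}

lemma exists_newNbhds {α : Type*} {L : α → ℕ → Finset V} {b : α → ι} {k : α → ℕ} {j : ι}
    (h : CoherentBlockade G n c I A σ lam) (hj : j ∈ I) (hk : ∀ a, k a ≤ R)
    (hb : ∀ a, b a ∈ I) (hbj : ∀ a, b a ≠ j) (hL : ∀ a, L a (k a) ⊆ A (b a))
    (hcard : ∀ a, n ^ (1 - c) ≤ #(L a (k a))) (S : Finset α) (hn : 0 ≤ n)
    (hS : n ^ (1 - c) * (R + 2) ^ #S ≤ #(A j)) :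
    ∃ f : (a : α) → Fin (k a + 1), ∃ T ⊆ A j, (#(A j) : ℝ) ≤ (R + 2) ^ #S * #T ∧
      ∀ a ∈ S, Covers G (L a (f a)) T ∧ ∀ i < (f a : ℕ), Anticomplete G (L a i) T := by
  classical
  induction S using Finset.induction_on with
  | empty => exact ⟨fun _ ↦ 0, A j, subset_rfl, by simp, by simp⟩
  | insert a S haS ih =>
    rw [Finset.card_insert_of_notMem haS, pow_succ] at hS
    have hm : (0 : ℝ) ≤ n ^ (1 - c) := Real.rpow_nonneg hn _
    obtain ⟨f, T, hTA, hTcard, hT⟩ := ih (le_trans (mul_le_mul_of_nonneg_left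
      (le_mul_of_one_le_right (by positivity) (by linarith [R.cast_nonneg (α := ℝ)])) hm) hS)
    have hTm : n ^ (1 - c) * (R + 2) ≤ #T :=
      le_of_mul_le_mul_left (a := ((R : ℝ) + 2) ^ #S) (by linarith) (by positivity)
    obtain ⟨i, hi, hTi⟩ := exists_card_le_mul_card_newNbhd (hk a) hTm
      (h.card_sub_le_card_nbhdIn (hb a) hj (hbj a) (hL a) hTA (hcard a))
    refine ⟨Function.update f a ⟨i, Nat.lt_succ_iff.2 hi⟩, newNbhd G (L a) i T,
      newNbhd_subset.trans hTA, hTcard.trans ?_, ?_⟩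
    · rw [Finset.card_insert_of_notMem haS, pow_succ, mul_assoc]
      exact mul_le_mul_of_nonneg_left hTi (by positivity)
    · rw [Finset.forall_mem_insert, Function.update_self]
      refine ⟨⟨covers_newNbhd, fun i' hi' ↦ anticomplete_newNbhd hi'⟩, fun a' ha' ↦ ?_⟩
      rw [Function.update_of_ne (ne_of_mem_of_not_mem ha' haS)]
      exact ⟨fun t ht ↦ (hT a' ha').1 t (newNbhd_subset ht),
        fun i' hi' x hx t ht ↦ (hT a' ha').2 i' hi' x hx t (newNbhd_subset ht)⟩

lemma exists_common_newNbhds {α : Type*} [Fintype α] {L : α → ℕ → Finset V} {b : α → ι}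
    {k : α → ℕ} {K : ℕ} (h : CoherentBlockade G n c I A σ lam) (hJ : J ⊆ I) (hk : ∀ a, k a ≤ R)
    (hb : ∀ a, b a ∈ I) (hbJ : ∀ a, b a ∉ J) (hL : ∀ a, L a (k a) ⊆ A (b a))
    (hcard : ∀ a, n ^ (1 - c) ≤ #(L a (k a))) (hn : 0 ≤ n)
    (hS : n ^ (1 - c) * (R + 2) ^ Fintype.card α ≤ n ^ (1 - σ))
    (hK : (R + 1) ^ Fintype.card α * K ≤ #J) :
    ∃ g : α → ℕ, (∀ a, g a ≤ k a) ∧ ∃ J' ⊆ J, K ≤ #J' ∧ ∃ T : ι → Finset V, ∀ j ∈ J',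
      T j ⊆ A j ∧ (#(A j) : ℝ) ≤ (R + 2) ^ Fintype.card α * #(T j) ∧
      ∀ a, Covers G (L a (g a)) (T j) ∧ ∀ i < g a, Anticomplete G (L a i) (T j) := by
  classical
  have hhit (j : ι) (hj : j ∈ J) := h.exists_newNbhds (hJ hj) hk hb
    (fun a ↦ (ne_of_mem_of_not_mem hj (hbJ a)).symm) hL hcard Finset.univ hn
    (hS.trans (h.le_card j (hJ hj)))
  choose! f T hTA hTcard hT using hhit
  obtain ⟨g, -, hg⟩ := Finset.exists_le_card_fiber_of_mul_le_card_of_maps_to (s := J)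
    (t := Finset.univ) (f := f) (n := K) (fun _ _ ↦ Finset.mem_univ _) Finset.univ_nonempty (by
      refine le_trans (Nat.mul_le_mul_right K ?_) hK
      rw [Finset.card_univ, Fintype.card_pi]
      simpa using Finset.prod_le_pow_card Finset.univ (fun a ↦ k a + 1) (R + 1)
        fun a _ ↦ Nat.succ_le_succ (hk a))
  refine ⟨fun a ↦ g a, fun a ↦ Nat.lt_succ_iff.1 (g a).2, _, Finset.filter_subset _ _, hg, T,
    fun j hj ↦ ?_⟩
  obtain ⟨hjJ, rfl⟩ := Finset.mem_filter.1 hj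
  exact ⟨hTA j hjJ, hTcard j hjJ, fun a ↦ hT j hjJ a (Finset.mem_univ a)⟩

end CoherentBlockade

lemma eventually_exists_rootedLevelling (ι : Type*) {R : ℕ} (N : ℕ) {c σ : ℝ} (hR : 1 ≤ R)
    (hc : c < 1) (hσ : 1 - c < R * (c - σ)) :
    ∀ᶠ n : ℝ in atTop, ∀ ⦃V : Type u⦄ ⦃G : SimpleGraph V⦄ ⦃I : Finset ι⦄ ⦃A : ι → Finset V⦄
      ⦃lam : ℝ⦄ ⦃i₀ : ι⦄, CoherentBlockade G n c I A σ lam → #I ≤ N → i₀ ∈ I →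
      ∃ v ∈ A i₀, ∀ U ⊆ I, i₀ ∉ U → R ≤ #U → ∃ k L q, 1 ≤ k ∧ k ≤ R ∧
        RootedLevelling G A U v L q k ∧ n ^ (1 - c) ≤ #(L k) := by
  have hR0 : (0 : ℝ) < R := by exact_mod_cast hR
  have hcσ : 0 < c - σ := pos_of_mul_pos_right (by linarith) hR0.le
  have hlarge (x : ℝ) : ∀ᶠ n : ℝ in atTop, x ≤ n ^ (c - σ) :=
    (tendsto_rpow_atTop hcσ).eventually_ge_atTop x
  filter_upwards [eventually_gt_atTop 1, hlarge 32, hlarge (2 * N),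
    (tendsto_rpow_atTop (sub_pos.2 hσ)).eventually_ge_atTop (16 ^ R)]
    with n hn1 hn32 hnN hn16 V G I A lam i₀ h hIN hi₀
  have hn0 : 0 < n := by linarith
  set m := n ^ (1 - c) with hm
  set x := n ^ (c - σ) with hx
  have hm1 : 1 < m := Real.one_lt_rpow hn1 (by linarith)
  have hw : n ^ (1 - σ) = x * m := by
    rw [hx, hm, ← Real.rpow_add hn0]
    ring_nf
  have hIm : #I * m ≤ x * m / 2 := by
    have : (#I : ℝ) ≤ N := by exact_mod_cast hIN
    nlinarith
  obtain ⟨B, hBA, hBcard, hexpand⟩ := h.exists_expanding_subblocks (τ := x / 8) hn0.le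
    (by positivity) (hw ▸ hIm) (by rw [hw]; linarith) (by rw [hw]; nlinarith)
  obtain ⟨v, hv⟩ : (B i₀).Nonempty := by
    refine Finset.card_pos.1 (Nat.cast_pos.1 (lt_of_lt_of_le ?_ (hBcard i₀ hi₀)))
    have := h.le_card i₀ hi₀
    nlinarith
  refine ⟨v, hBA i₀ hv, fun U hUI hi₀U hRU ↦ ?_⟩
  have hmR : m ≤ (x / 8 / 2) ^ R := by
    have hxR : x ^ R = m * n ^ (R * (c - σ) - (1 - c)) := by
      rw [hx, hm, ← Real.rpow_mul_natCast hn0.le, ← Real.rpow_add hn0]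
      ring_nf
    rw [div_div, div_pow, le_div_iff₀ (by positivity), hxR]
    norm_num only
    exact mul_le_mul_of_nonneg_left hn16 (by positivity)
  obtain ⟨k, L, q, hk, hkR, hL, hLm⟩ := exists_rootedLevelling hv hi₀U hRU hm1 (by linarith) hmR
    fun i hi j hj hij ↦ hexpand i (Set.insert_subset hi₀ hUI hi) j (hUI hj) hij
  exact ⟨k, L, q, hk, hkR, hL.mono fun i _ ↦ hBA i, hLm⟩

lemma exists_disjoint_labels (α : Type*) [Fintype α] {R : ℕ}
    (hI : 1 + Fintype.card α * R ≤ #I) :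
    ∃ I₀ ⊆ I, #I₀ = 1 + Fintype.card α * R ∧ ∃ i₀ ∈ I₀, ∃ U : α → Finset ι,
      (∀ a, U a ⊆ I₀ ∧ i₀ ∉ U a ∧ #(U a) = R) ∧ Pairwise (Function.onFun Disjoint U) := by
  classical
  obtain ⟨e⟩ : Nonempty (Option (α × Fin R) ↪ I) :=
    Function.Embedding.nonempty_of_card_le (by simp; omega)
  let e' : Option (α × Fin R) ↪ ι := e.trans (Function.Embedding.subtype _)
  refine ⟨Finset.univ.map e', fun i hi ↦ ?_, by simp [add_comm], e' none,
    Finset.mem_map_of_mem _ (Finset.mem_univ _),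
    fun a ↦ Finset.univ.map ((Function.Embedding.sectR a (Fin R)).trans (.trans .some e')),
    fun a ↦ ⟨fun i hi ↦ ?_, by simp, by simp⟩, fun a b hab ↦ ?_⟩
  · obtain ⟨x, -, rfl⟩ := Finset.mem_map.1 hi
    exact (e x).2
  · obtain ⟨r, -, rfl⟩ := Finset.mem_map.1 hi
    exact Finset.mem_map_of_mem _ (Finset.mem_univ _)
  · simp only [Function.onFun, Finset.disjoint_left, Finset.mem_map, not_exists]
    rintro _ ⟨r, -, rfl⟩ s ⟨-, hs⟩
    exact hab (Prod.ext_iff.1 (Option.some_injective _ (e'.injective hs))).1.symm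

lemma eventually_exists_levellings (α ι : Type*) [Fintype α] {R : ℕ} (K : ℕ) {c σ : ℝ}
    (hR : 1 ≤ R) (hc : c < 1) (hσ : 1 - c < R * (c - σ)) :
    ∀ᶠ n : ℝ in atTop, ∀ ⦃V : Type u⦄ ⦃G : SimpleGraph V⦄ ⦃I : Finset ι⦄ ⦃A : ι → Finset V⦄
      ⦃lam : ℝ⦄, CoherentBlockade G n c I A σ lam →
      1 + Fintype.card α * R + (R + 1) ^ Fintype.card α * K ≤ #I →
      ∃ i₀ ∈ I, ∃ v ∈ A i₀, ∃ U : α → Finset ι, (∀ a, U a ⊆ I ∧ i₀ ∉ U a) ∧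
        Pairwise (Function.onFun Disjoint U) ∧
        ∃ J ⊆ I, K ≤ #J ∧ i₀ ∉ J ∧ (∀ a, Disjoint (U a) J) ∧
        ∃ T : ι → Finset V, (∀ j ∈ J, T j ⊆ A j) ∧
        (∀ j ∈ J, (#(A j) : ℝ) ≤ (R + 2) ^ Fintype.card α * #(T j)) ∧
        ∀ a, ∃ k L q, k ≤ R ∧ RootedLevelling G A (U a) v L q k ∧ ∀ j ∈ J,
          Covers G (L k) (T j) ∧ ∀ i < k, Anticomplete G (L i) (T j) := by
  classical
  have hcσ : 0 < c - σ := pos_of_mul_pos_right (by linarith) R.cast_nonneg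
  filter_upwards [eventually_exists_rootedLevelling.{u} ι (1 + Fintype.card α * R) hR hc hσ,
    (tendsto_rpow_atTop hcσ).eventually_ge_atTop (((R : ℝ) + 2) ^ Fintype.card α),
    eventually_ge_atTop 1] with n hroot hnR hn V G I A lam h hI
  have hn0 : 0 < n := by linarith
  have hdegree : n ^ (1 - c) * (R + 2) ^ Fintype.card α ≤ n ^ (1 - σ) :=
    calc n ^ (1 - c) * (R + 2) ^ Fintype.card α ≤ n ^ (1 - c) * n ^ (c - σ) := by gcongr
      _ = n ^ (1 - σ) := by
        rw [← Real.rpow_add hn0]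
        ring_nf
  obtain ⟨I₀, hI₀I, hI₀card, i₀, hi₀, U, hU, hUdisj⟩ :=
    exists_disjoint_labels (I := I) α (R := R) (by omega)
  obtain ⟨v, hv, hroot⟩ := hroot (h.mono hI₀I hn le_rfl le_rfl) hI₀card.le hi₀
  choose k L q hk hkR hL hLcard using fun a ↦ hroot (U a) (hU a).1 (hU a).2.1 (hU a).2.2.ge
  have hkk (a : α) : k a ∈ Set.Icc 1 (k a) := ⟨hk a, le_rfl⟩
  have hq (a : α) : q a (k a) ∈ I₀ := (hU a).1 ((hL a).mem _ (hkk a))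
  obtain ⟨g, hgk, J, hJ, hJcard, T, hT⟩ := h.exists_common_newNbhds (J := I \ I₀) (K := K)
    Finset.sdiff_subset hkR (fun a ↦ hI₀I (hq a))
    (fun a ↦ Finset.notMem_sdiff_of_mem_right (hq a))
    (fun a ↦ (hL a).subset _ (hkk a)) hLcard hn0.le hdegree (by
      rw [Finset.card_sdiff_of_subset hI₀I]
      omega)
  have hJI₀ : Disjoint I₀ J := Finset.disjoint_of_subset_right hJ Finset.disjoint_sdiff
  exact ⟨i₀, hI₀I hi₀, v, hv, U, fun a ↦ ⟨(hU a).1.trans hI₀I, (hU a).2.1⟩, hUdisj, J,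
    hJ.trans Finset.sdiff_subset, hJcard, Finset.disjoint_left.1 hJI₀ hi₀,
    fun a ↦ Finset.disjoint_of_subset_left (hU a).1 hJI₀, T, fun j hj ↦ (hT j hj).1,
    fun j hj ↦ (hT j hj).2.1, fun a ↦ ⟨g a, L a, q a, (hgk a).trans (hkR a), (hL a).take (hgk a),
      fun j hj ↦ (hT j hj).2.2 a⟩⟩

theorem exists_fans (α ι : Type*) [Finite α] {R : ℕ} (k : ℕ) {c σ Δ lam' : ℝ} (hR : 1 ≤ R)
    (hc : c < 1) (hσ : 1 - c < R * (c - σ)) (hΔ : 0 < Δ) (hlam' : 0 < lam') :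
    ∃ (K : ℕ) (lam : ℝ), 0 < lam ∧ ∀ᶠ n : ℝ in atTop, ∀ ⦃V : Type u⦄ ⦃G : SimpleGraph V⦄
      ⦃I : Finset ι⦄ ⦃A : ι → Finset V⦄, CoherentBlockade G n c I A σ lam → K ≤ #I →
      ∃ i₀ ∈ I, ∃ v ∈ A i₀, ∃ U : α → Finset ι, (∀ a, U a ⊆ I ∧ i₀ ∉ U a) ∧
        Pairwise (Function.onFun Disjoint U) ∧
        ∃ J ⊆ I, #J = k ∧ i₀ ∉ J ∧ (∀ a, Disjoint (U a) J) ∧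
        ∃ C : ι → Finset V, (∀ j ∈ J, C j ⊆ A j) ∧ CoherentBlockade G n c J C (σ + Δ) lam' ∧
        ∀ a, ∃ l, 1 ≤ l ∧ l ≤ R + 1 ∧ Fan G A (U a) J C v l := by
  have := Fintype.ofFinite α
  obtain ⟨K, lam, hlam, hcover⟩ :=
    exists_blockade_with_private_covers.{u} α ι k (half_pos hΔ) hlam'
  set θ : ℝ := (((R : ℝ) + 2) ^ Fintype.card α)⁻¹
  have hθ0 : 0 < θ := by positivity
  have hlamθ : lam * θ / θ = lam := mul_div_cancel_right₀ _ hθ0.ne'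
  refine ⟨1 + Fintype.card α * R + (R + 1) ^ Fintype.card α * K, lam * θ, by positivity, ?_⟩
  filter_upwards [hcover, eventually_rpow_neg_le hθ0 (half_pos hΔ),
    eventually_exists_levellings.{u} α ι K hR hc hσ, eventually_gt_atTop 0]
    with n hcover hnθ hlevel hn V G I A h hI
  obtain ⟨i₀, hi₀, v, hv, U, hU, hUdisj, J, hJ, hJcard, hi₀J, hUJ, T, hTA, hTcard, hlevel⟩ :=
    hlevel h hI
  choose m L q hmR hL hT using hlevel
  replace hTcard (j : ι) (hj : j ∈ J) : θ * #(A j) ≤ #(T j) :=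
    (inv_mul_le_iff₀ (by positivity)).2 (hTcard j hj)
  choose b hb hLb using fun a ↦ (hL a).exists_subset_block hv
  have hbI (a : α) : b a ∈ I := (hb a).elim (· ▸ hi₀) fun h ↦ (hU a).1 h
  have hbJ (a : α) : b a ∉ J := (hb a).elim (· ▸ hi₀J) fun h ↦ Finset.disjoint_left.1 (hUJ a) h
  obtain ⟨J', hJ', hJ'card, C, hCT, hC, Y, hY⟩ := hcover (X := fun a ↦ L a (m a))
    (hlamθ ▸ h.shrink hn hθ0 (by positivity) hnθ hJ hTA hTcard) hJcard
    (fun a ↦ le_trans (Nat.cast_le.2 (Finset.card_le_card (hLb a))) (h.card_le _ (hbI a)))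
    (fun a x hx j hj ↦ hlamθ ▸ degIn_le_div_mul hθ0 (by positivity) (hTA j hj) (hTcard j hj)
      (h.degIn_le _ (hbI a) j (hJ hj) (ne_of_mem_of_not_mem hj (hbJ a)).symm x (hLb a hx)))
    (fun a j hj ↦ (hT a j hj).1)
  refine ⟨i₀, hi₀, v, hv, U, hU, hUdisj, J', hJ'.trans hJ, hJ'card, fun h ↦ hi₀J (hJ' h),
    fun a ↦ Finset.disjoint_of_subset_right hJ' (hUJ a), C,
    fun j hj ↦ (hCT j hj).trans (hTA j (hJ' hj)), by simpa [add_assoc] using hC,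
    fun a ↦ ⟨m a + 1, by omega, Nat.succ_le_succ (hmR a), (hL a).fan (hY a) ?_⟩⟩
  exact fun i hi j hj x hx t ht ↦ (hT a j (hJ' hj)).2 i hi x hx t (hCT j hj ht)

end Fan

/-! ### Concatenating labelled walks -/

section LabelledWalk

variable {ι : Type*} {G : SimpleGraph V} {A : ι → Finset V} {U U₁ U₂ : Finset ι}
  {p q w : ℕ → V} {κ μ : ℕ → ι} {l m : ℕ} {i₀ : ι} {v : V}

/-- The vertices `p 0, …, p l` form an induced path of `G` in this order. -/
structure IsInducedPath (G : SimpleGraph V) (p : ℕ → V) (l : ℕ) : Prop where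
  adj : ∀ a < l, G.Adj (p a) (p (a + 1))
  not_adj : ∀ a b, a + 2 ≤ b → b ≤ l → ¬ G.Adj (p a) (p b)
  injOn : Set.InjOn p (Set.Iic l)

lemma IsInducedPath.take (hp : IsInducedPath G p l) (hm : m ≤ l) : IsInducedPath G p m where
  adj a ha := hp.adj a (ha.trans_le hm)
  not_adj a b hab hb := hp.not_adj a b hab (hb.trans hm)
  injOn := hp.injOn.mono (Set.Iic_subset_Iic.2 hm)

lemma IsInducedPath.snoc (hp : IsInducedPath G p l) (hv : G.Adj (p l) v)
    (hpv : ∀ a < l, p a ≠ v ∧ ¬ G.Adj (p a) v) :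
    IsInducedPath G (Function.update p (l + 1) v) (l + 1) := by
  have hlt (a : ℕ) (ha : a ≤ l) : Function.update p (l + 1) v a = p a :=
    Function.update_of_ne (by omega) v p
  have hlast : Function.update p (l + 1) v (l + 1) = v := Function.update_self ..
  have hne (a : ℕ) (ha : a ≤ l) : p a ≠ v := by
    rcases ha.lt_or_eq with ha | rfl
    exacts [(hpv a ha).1, hv.ne]
  refine ⟨fun a ha ↦ ?_, fun a b hab hb ↦ ?_, fun a ha b hb hab ↦ ?_⟩
  · rcases (Nat.lt_succ_iff.1 ha).lt_or_eq with hal | rfl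
    · rw [hlt a hal.le, hlt (a + 1) hal]
      exact hp.adj a hal
    · rwa [hlt a le_rfl, hlast]
  · rw [hlt a (by omega)]
    rcases hb.lt_or_eq with hbl | rfl
    · rw [hlt b (by omega)]
      exact hp.not_adj a b hab (by omega)
    · rw [hlast]
      exact (hpv a (by omega)).2
  · rcases (show a ≤ l + 1 from ha).lt_or_eq with hal | rfl <;>
      rcases (show b ≤ l + 1 from hb).lt_or_eq with hbl | rfl
    · rw [hlt a (by omega), hlt b (by omega)] at hab
      exact hp.injOn (show a ≤ l by omega) (show b ≤ l by omega) hab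
    · exact absurd (by rwa [hlt a (by omega), hlast] at hab) (hne a (by omega))
    · exact absurd (by rwa [hlast, hlt b (by omega), eq_comm] at hab) (hne b (by omega))
    · rfl

lemma exists_isInducedPath_of_walk (hw : ∀ a < l, G.Adj (w a) (w (a + 1))) :
    ∃ m ≤ l, ∃ p, IsInducedPath G p m ∧ p 0 = w 0 ∧ p m = w l ∧ ∀ a ≤ m, ∃ b ≤ l, p a = w b := by
  classical
  induction l with
  | zero =>
    exact ⟨0, le_rfl, w, ⟨fun _ h ↦ by omega, fun _ _ _ _ ↦ by omega,
      fun a ha b hb _ ↦ (Nat.le_zero.1 ha).trans (Nat.le_zero.1 hb).symm⟩, rfl, rfl,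
      fun a ha ↦ ⟨a, ha, rfl⟩⟩
  | succ l ih =>
    obtain ⟨m, hml, p, hp, hp0, hpm, hpw⟩ := ih fun a ha ↦ hw a (ha.trans l.lt_succ_self)
    set z := w (l + 1)
    -- Leave `p` at the first vertex `p a` that equals `z` or is adjacent to it.
    have hmz : G.Adj (p m) z := hpm ▸ hw l l.lt_succ_self
    have hex : ∃ a, p a = z ∨ G.Adj (p a) z := ⟨m, .inr hmz⟩
    obtain ⟨a, haz, hmin⟩ : ∃ a, (p a = z ∨ G.Adj (p a) z) ∧ ∀ b < a, p b ≠ z ∧ ¬ G.Adj (p b) z :=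
      ⟨Nat.find hex, Nat.find_spec hex, fun b hb ↦ not_or.1 (Nat.find_min hex hb)⟩
    have ham : a ≤ m := not_lt.1 fun h ↦ (hmin m h).2 hmz
    have hpw' (b : ℕ) (hb : b ≤ a) : ∃ d ≤ l + 1, p b = w d :=
      let ⟨d, hd, h⟩ := hpw b (hb.trans ham)
      ⟨d, hd.trans l.le_succ, h⟩
    rcases haz with haz | haz
    · exact ⟨a, by omega, p, hp.take ham, hp0, haz, hpw'⟩
    refine ⟨a + 1, by omega, _, (hp.take ham).snoc haz hmin, ?_, Function.update_self .., ?_⟩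
    · simpa using hp0
    · intro b hb
      rcases hb.lt_or_eq with hba | rfl
      · simpa [Function.update_of_ne hba.ne] using hpw' b (by omega)
      · exact ⟨l + 1, le_rfl, Function.update_self ..⟩

lemma LabelledWalk.exists_labelledPath (hw : LabelledWalk G A U w μ l) (hne : w 0 ≠ w l) :
    ∃ m ∈ Set.Icc 1 l, ∃ p κ, LabelledPath G A U p κ m ∧ p 0 = w 0 ∧ p m = w l ∧
      ∀ a ∈ Set.Ioo 0 m, ∃ b ∈ Set.Ioo 0 l, p a = w b := by
  obtain ⟨m, hml, p, hp, hp0, hpm, hpw⟩ := exists_isInducedPath_of_walk hw.adj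
  have hm : 0 < m := Nat.pos_of_ne_zero fun h ↦ hne (by rw [← hp0, ← hpm, h])
  have hinner (a : ℕ) (ha : a ∈ Set.Ioo 0 m) : ∃ b ∈ Set.Ioo 0 l, p a = w b := by
    obtain ⟨b, hb, hab⟩ := hpw a ha.2.le
    refine ⟨b, ⟨Nat.pos_of_ne_zero fun h ↦ ?_, hb.lt_of_ne fun h ↦ ?_⟩, hab⟩
    · exact ha.1.ne' (hp.injOn ha.2.le m.zero_le (by rw [hab, h, hp0]))
    · exact ha.2.ne (hp.injOn ha.2.le Set.self_mem_Iic (by rw [hab, h, hpm]))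
  choose! b hb hpb using hinner
  exact ⟨m, ⟨hm, hml⟩, p, μ ∘ b, ⟨⟨hp.adj, fun a ha ↦ hw.label_mem _ (hb a ha),
    fun a ha ↦ hpb a ha ▸ hw.mem_block _ (hb a ha),
    fun a ha d hd had ↦ hp.injOn ha.2.le hd.2.le <| by
      rw [hpb a ha, hpb d hd, hw.injOn (hb a ha) (hb d hd) had]⟩, hp.not_adj⟩, hp0, hpm,
    fun a ha ↦ ⟨b a, hb a ha, hpb a ha⟩⟩

lemma injOn_glue {ν : ℕ → ι} (hκ : Set.InjOn κ (Set.Ioo 0 l)) (hμ : Set.InjOn μ (Set.Ioo 0 m))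
    (hκU : ∀ a ∈ Set.Ioo 0 l, κ a ∈ U₁) (hμU : ∀ a ∈ Set.Ioo 0 m, μ a ∈ U₂) (h₁ : i₀ ∉ U₁)
    (h₂ : i₀ ∉ U₂) (hU : Disjoint U₁ U₂) (hνκ : ∀ a < l, ν a = κ a) (hνl : ν l = i₀)
    (hνμ : ∀ a, l < a → ν a = μ (l + m - a)) : Set.InjOn ν (Set.Ioo 0 (l + m)) := by
  have hleft (a : ℕ) (ha : a ∈ Set.Ioo 0 (l + m)) (hal : a < l) : ν a ∈ U₁ :=
    hνκ a hal ▸ hκU a ⟨ha.1, hal⟩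
  have hright (a : ℕ) (ha : a ∈ Set.Ioo 0 (l + m)) (hal : l < a) :
      l + m - a ∈ Set.Ioo 0 m ∧ ν a ∈ U₂ := by
    have hmem : l + m - a ∈ Set.Ioo 0 m := by
      simp only [Set.mem_Ioo] at ha ⊢
      omega
    exact ⟨hmem, hνμ a hal ▸ hμU _ hmem⟩
  suffices hlt : ∀ a ∈ Set.Ioo 0 (l + m), ∀ b ∈ Set.Ioo 0 (l + m), a < b → ν a ≠ ν b by
    intro a ha b hb hab
    by_contra hne
    rcases Nat.lt_or_gt_of_ne hne with h | h
    exacts [hlt a ha b hb h hab, hlt b hb a ha h hab.symm]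
  intro a ha b hb hlt hab
  rcases lt_trichotomy b l with hbl | rfl | hbl
  · exact hlt.ne (hκ ⟨ha.1, hlt.trans hbl⟩ ⟨hb.1, hbl⟩
      (by rw [← hνκ a (hlt.trans hbl), hab, hνκ b hbl]))
  · exact h₁ (hνl ▸ hab ▸ hleft a ha hlt)
  obtain ⟨hbm, hbU⟩ := hright b hb hbl
  rcases lt_trichotomy a l with hal | rfl | hal
  · exact Finset.disjoint_left.1 hU (hleft a ha hal) (hab ▸ hbU)
  · exact h₂ (hνl ▸ hab ▸ hbU)
  · have := hμ (hright a ha hal).1 hbm (by rw [← hνμ a hal, hab, hνμ b hbl])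
    have := ha.2
    omega

open Classical in
lemma LabelledWalk.exists_glue (hp : LabelledWalk G A U₁ p κ l) (hq : LabelledWalk G A U₂ q μ m)
    (hpq : p l = q m) (hpA : p l ∈ A i₀) (h₁ : i₀ ∉ U₁) (h₂ : i₀ ∉ U₂) (hU : Disjoint U₁ U₂) :
    ∃ w ν, LabelledWalk G A (insert i₀ (U₁ ∪ U₂)) w ν (l + m) ∧ (∀ a ≤ l, w a = p a) ∧
      ∀ a ≤ m, w (l + m - a) = q a := by
  obtain ⟨w, hwp, hwq⟩ : ∃ w : ℕ → V, (∀ a ≤ l, w a = p a) ∧ ∀ a, l ≤ a → w a = q (l + m - a) := by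
    refine ⟨fun a ↦ if a ≤ l then p a else q (l + m - a), fun a ha ↦ if_pos ha, fun a ha ↦ ?_⟩
    rcases ha.lt_or_eq with ha | rfl
    · exact if_neg ha.not_ge
    · simp [hpq]
  obtain ⟨ν, hνκ, hνl, hνμ⟩ : ∃ ν : ℕ → ι, (∀ a < l, ν a = κ a) ∧ ν l = i₀ ∧
      ∀ a, l < a → ν a = μ (l + m - a) :=
    ⟨fun a ↦ if a < l then κ a else if a = l then i₀ else μ (l + m - a), fun a ha ↦ if_pos ha,
      by simp, fun a ha ↦ by simp [ha.not_gt, ha.ne']⟩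
  have hcases (a : ℕ) (ha : a ∈ Set.Ioo 0 (l + m)) :
      (a ∈ Set.Ioo 0 l ∧ w a = p a ∧ ν a = κ a) ∨ (a = l ∧ w a = p l ∧ ν a = i₀) ∨
        (l < a ∧ l + m - a ∈ Set.Ioo 0 m ∧ w a = q (l + m - a) ∧ ν a = μ (l + m - a)) := by
    have := ha.2
    rcases lt_trichotomy a l with hal | rfl | hal
    · exact .inl ⟨⟨ha.1, hal⟩, hwp a hal.le, hνκ a hal⟩
    · exact .inr (.inl ⟨rfl, hwp a le_rfl, hνl⟩)
    · exact .inr (.inr ⟨hal, ⟨by omega, by omega⟩, hwq a hal.le, hνμ a hal⟩)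
  refine ⟨w, ν, ⟨fun a ha ↦ ?_, fun a ha ↦ ?_, fun a ha ↦ ?_, injOn_glue hp.injOn hq.injOn
    hp.label_mem hq.label_mem h₁ h₂ hU hνκ hνl hνμ⟩, hwp, fun a ha ↦ ?_⟩
  · rcases lt_or_ge a l with hal | hal
    · rw [hwp a hal.le, hwp (a + 1) hal]
      exact hp.adj a hal
    · rw [hwq a hal, hwq (a + 1) (by omega), show l + m - a = l + m - (a + 1) + 1 by omega]
      exact (hq.adj _ (by omega)).symm
  · rcases hcases a ha with ⟨hal, -, h⟩ | ⟨-, -, h⟩ | ⟨-, hal, -, h⟩ <;> rw [h]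
    · simp [hp.label_mem a hal]
    · simp
    · simp [hq.label_mem _ hal]
  · rcases hcases a ha with ⟨hal, hwa, h⟩ | ⟨-, hwa, h⟩ | ⟨-, hal, hwa, h⟩ <;> rw [h, hwa]
    exacts [hp.mem_block a hal, hpA, hq.mem_block _ hal]
  · rw [hwq _ (by omega), Nat.sub_sub_self (by omega)]

open Classical in
lemma LabelledPath.exists_glue (hp : LabelledPath G A U₁ p κ l) (hq : LabelledPath G A U₂ q μ m)
    (hpq : p l = q m) (hpA : p l ∈ A i₀) (h₁ : i₀ ∉ U₁) (h₂ : i₀ ∉ U₂) (hU : Disjoint U₁ U₂)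
    (hadj : ∀ a < l, ∀ b < m, ¬ G.Adj (p a) (q b)) :
    ∃ w ν, LabelledPath G A (insert i₀ (U₁ ∪ U₂)) w ν (l + m) ∧ (∀ a ≤ l, w a = p a) ∧
      ∀ a ≤ m, w (l + m - a) = q a := by
  obtain ⟨w, ν, hw, hwp, hwq⟩ :=
    hp.toLabelledWalk.exists_glue hq.toLabelledWalk hpq hpA h₁ h₂ hU
  refine ⟨w, ν, ⟨hw, fun a b hab hb ↦ ?_⟩, hwp, hwq⟩
  rcases le_or_gt b l with hbl | hbl
  · rw [hwp a (by omega), hwp b hbl]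
    exact hp.not_adj a b hab hbl
  have hwb : w b = q (l + m - b) := by rw [← hwq _ (by omega), Nat.sub_sub_self hb]
  rcases lt_or_ge a l with hal | hal
  · rw [hwp a hal.le, hwb]
    exact hadj a hal _ (by omega)
  · have hwa : w a = q (l + m - a) := by rw [← hwq _ (by omega), Nat.sub_sub_self (by omega)]
    rw [hwa, hwb, G.adj_comm]
    exact hq.not_adj _ _ (by omega) (by omega)

end LabelledWalk

/-! ### Lengthening fans and linking blocks -/

section Linkage

open scoped Finset
open Filter

universe u

variable {ι : Type*} {G : SimpleGraph V} {A B C C' : ι → Finset V} {I J J' U U₁ U₂ : Finset ι}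
  {l l₁ l₂ m : ℕ} {b i₀ : ι} {r v : V} {n c σ lam Δ lam' : ℝ}

lemma CoherentBlockade.half_card_le_card_nbhdIn (h : CoherentBlockade G n c I A σ lam)
    (hn : 0 < n) (hnσ : 2 ≤ n ^ (c - σ)) {i j : ι} (hi : i ∈ I) (hj : j ∈ I) (hij : i ≠ j) :
    (1 / 2 : ℝ) * #(A j) ≤ #(nbhdIn G (A i) (A j)) := by
  have hn1c : 0 < n ^ (1 - c) := by positivity
  have hsplit : n ^ (1 - σ) = n ^ (c - σ) * n ^ (1 - c) := by
    rw [← Real.rpow_add hn]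
    ring_nf
  have hAi := h.le_card i hi
  have hAj := h.le_card j hj
  rw [hsplit] at hAi hAj
  have := h.card_sub_le_card_nbhdIn hi hj hij subset_rfl subset_rfl (by nlinarith)
  nlinarith

lemma exists_block_with_private_covers (ι : Type*) (k : ℕ) (hσ : σ < c) (hΔ : 0 < Δ)
    (hlam' : 0 < lam') :
    ∃ (K : ℕ) (lam : ℝ), 0 < lam ∧ ∀ᶠ n : ℝ in atTop, ∀ ⦃V : Type u⦄ ⦃G : SimpleGraph V⦄
      ⦃J : Finset ι⦄ ⦃C : ι → Finset V⦄, CoherentBlockade G n c J C σ lam → K ≤ #J →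
      ∃ b ∈ J, ∃ J' ⊆ J, b ∉ J' ∧ #J' = k ∧ ∃ C' : ι → Finset V, (∀ j ∈ J', C' j ⊆ C j) ∧
        CoherentBlockade G n c J' C' (σ + Δ) lam' ∧ ∃ Y, IsPrivateCover G J' C' (C b) Y := by
  classical
  obtain ⟨K, lam, hlam, hcover⟩ :=
    exists_blockade_with_private_covers.{u} Unit ι k (half_pos hΔ) hlam'
  have hlam2 : lam / 2 / (1 / 2) = lam := by ring
  refine ⟨K + 1, lam / 2, half_pos hlam, ?_⟩
  filter_upwards [hcover, eventually_rpow_neg_le one_half_pos (half_pos hΔ),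
    eventually_gt_atTop 0, (tendsto_rpow_atTop (sub_pos.2 hσ)).eventually_ge_atTop 2]
    with n hcover hnΔ hn hnσ V G J C h hJ
  obtain ⟨b, hb⟩ : J.Nonempty := Finset.card_pos.1 (K.succ_pos.trans_le hJ)
  have hmem (j : ι) (hj : j ∈ J.erase b) : j ∈ J ∧ b ≠ j :=
    ⟨Finset.mem_of_mem_erase hj, (Finset.ne_of_mem_erase hj).symm⟩
  have hsub (j : ι) : nbhdIn G (C b) (C j) ⊆ C j := nbhdIn_subset _ _
  have hcard (j : ι) (hj : j ∈ J.erase b) :=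
    h.half_card_le_card_nbhdIn hn hnσ hb (hmem j hj).1 (hmem j hj).2
  obtain ⟨J', hJ', hJ'card, C', hC', hblock, Y, hY⟩ := hcover (X := fun _ ↦ C b)
    (hlam2 ▸ h.shrink hn one_half_pos (half_pos hlam).le hnΔ (J.erase_subset b)
      (fun j _ ↦ hsub j) hcard)
    (by rw [Finset.card_erase_of_mem hb]; omega) (fun _ ↦ h.card_le b hb)
    (fun _ x hx j hj ↦ hlam2 ▸ degIn_le_div_mul one_half_pos (half_pos hlam).le (hsub j)
      (hcard j hj) (h.degIn_le b hb j (hmem j hj).1 (hmem j hj).2 x hx))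
    (fun _ j _ ↦ covers_nbhdIn _ _)
  exact ⟨b, hb, J', hJ'.trans (J.erase_subset b), fun h ↦ J.notMem_erase b (hJ' h), hJ'card, C',
    fun j hj ↦ (hC' j hj).trans (hsub j), by rwa [add_assoc, add_halves] at hblock, Y (), hY ()⟩

lemma LabelledPath.update_zero {p : ℕ → V} {κ : ℕ → ι}
    (h : LabelledPath G A U p κ l) (b : ι) : LabelledPath G A U p (Function.update κ 0 b) l := by
  have hκ : Set.EqOn κ (Function.update κ 0 b) (Set.Ioo 0 l) :=
    fun a ha ↦ (Function.update_of_ne ha.1.ne' b κ).symm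
  exact ⟨⟨h.adj, fun a ha ↦ hκ ha ▸ h.label_mem a ha, fun a ha ↦ hκ ha ▸ h.mem_block a ha,
    hκ.injOn_iff.1 h.injOn⟩, h.not_adj⟩

open Classical in
lemma Fan.extend (h : Fan G A U J C r l) {Y : ι → Finset V} (hUJ : Disjoint U J) (hb : b ∈ J)
    (hCb : C b ⊆ A b) (hJ' : J' ⊆ J) (hbJ' : b ∉ J') (hC' : ∀ j ∈ J', C' j ⊆ C j)
    (hY : IsPrivateCover G J' C' (C b) Y) : Fan G A (insert b U) J' C' r (l + 1) := by
  intro j hj t ht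
  obtain ⟨y, hy, hyt⟩ := hY.covers j hj t ht
  have hyb : y ∈ C b := hY.subset j hj hy
  obtain ⟨p, κ, hp, hpy, hpr, hpC⟩ := h b hb y hyb
  have hpC' (a : ℕ) (ha : a ∈ Set.Ioc 0 l) (i : ι) (hi : i ∈ J') (s : V) (hs : s ∈ C' i) :
      ¬ G.Adj (p a) s :=
    hpC a ha i (hJ' hi) (ne_of_mem_of_not_mem hi hbJ') s (hC' i hi hs)
  have hbU : b ∉ U := Finset.disjoint_right.1 hUJ hb
  refine ⟨_, _, ((hp.mono (U.subset_insert b)).update_zero b).cons (hpy ▸ hyt.symm)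
    (fun a ha hta ↦ hpC' a ha j hj t ht hta.symm) (by simp) (by simpa [hpy] using fun _ ↦ hCb hyb)
    (fun a ha ↦ ?_), rfl, hpr, ?_⟩
  · simpa [ha.1.ne'] using ne_of_mem_of_not_mem (hp.label_mem a ha) hbU
  · rintro (_ | _ | a) ha i hi hij s hs hps
    · exact absurd ha.1 (lt_irrefl 0)
    · exact hY.anticomplete j hj i hi hij y hy s hs (by simpa [hpy] using hps)
    · exact hpC' (a + 1) ⟨a.succ_pos, Nat.succ_le_succ_iff.1 ha.2⟩ i hi s hs hps

lemma exists_lengthened_fan (ι : Type*) (E k : ℕ) {c σ Δ lam' : ℝ} (hσ : σ + Δ < c) (hΔ : 0 < Δ)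
    (hlam' : 0 < lam') :
    ∃ (K : ℕ) (lam : ℝ), 0 < lam ∧ ∀ᶠ n : ℝ in atTop, ∀ ⦃V : Type u⦄ ⦃G : SimpleGraph V⦄
      ⦃A : ι → Finset V⦄ ⦃r : V⦄ ⦃l : ℕ⦄ ⦃U J : Finset ι⦄ ⦃C : ι → Finset V⦄,
      CoherentBlockade G n c J C σ lam → K ≤ #J → Fan G A U J C r l → Disjoint U J →
      (∀ j ∈ J, C j ⊆ A j) → ∀ e ≤ E,
      ∃ U', (∀ i ∈ U', i ∈ U ∨ i ∈ J) ∧ ∃ J' ⊆ J, Disjoint U' J' ∧ k ≤ #J' ∧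
        ∃ C' : ι → Finset V, (∀ j ∈ J', C' j ⊆ C j) ∧
        CoherentBlockade G n c J' C' (σ + Δ) lam' ∧ Fan G A U' J' C' r (l + e) := by
  classical
  induction E generalizing k σ Δ lam' with
  | zero =>
    refine ⟨k, lam', hlam', ?_⟩
    filter_upwards [eventually_ge_atTop 1] with n hn V G A r l U J C h hJ hfan hUJ _ e he
    obtain rfl := Nat.le_zero.1 he
    exact ⟨U, fun _ ↦ .inl, J, subset_rfl, hUJ, hJ, C, fun _ _ ↦ subset_rfl,
      h.mono subset_rfl hn (by linarith) le_rfl, hfan⟩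
  | succ E ih =>
    obtain ⟨K₁, lam₁, hlam₁, hrest⟩ := ih k (σ := σ + Δ / 2) (by linarith) (half_pos hΔ) hlam'
    obtain ⟨K₂, lam₂, hlam₂, hstep⟩ := exists_block_with_private_covers.{u} ι K₁ (c := c) (σ := σ)
      (by linarith) (half_pos hΔ) hlam₁
    refine ⟨max K₂ k, min lam₂ lam', lt_min hlam₂ hlam', ?_⟩
    filter_upwards [eventually_ge_atTop 1, hrest, hstep]
      with n hn hrest hstep V G A r l U J C h hJ hfan hUJ hCA e he
    rcases e with _ | e
    · exact ⟨U, fun _ ↦ .inl, J, subset_rfl, hUJ, (le_max_right _ _).trans hJ, C,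
        fun _ _ ↦ subset_rfl, h.mono subset_rfl hn (by linarith) (min_le_right _ _), hfan⟩
    obtain ⟨b, hb, J₁, hJ₁, hbJ₁, hJ₁card, C₁, hC₁, hblock, Y, hY⟩ :=
      hstep (h.mono subset_rfl hn le_rfl (min_le_left _ _)) ((le_max_left _ _).trans hJ)
    obtain ⟨U', hU', J', hJ', hUJ', hJ'card, C', hC', hblock', hfan'⟩ := hrest hblock hJ₁card.ge
      (hfan.extend hUJ hb (hCA b hb) hJ₁ hbJ₁ hC₁ hY)
      (Finset.disjoint_insert_left.2 ⟨hbJ₁, Finset.disjoint_of_subset_right hJ₁ hUJ⟩)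
      (fun j hj ↦ (hC₁ j hj).trans (hCA j (hJ₁ hj))) e (Nat.le_of_succ_le_succ he)
    refine ⟨U', fun i hi ↦ ?_, J', hJ'.trans hJ₁, hUJ', hJ'card, C',
      fun j hj ↦ (hC' j hj).trans (hC₁ j (hJ' hj)), by rwa [add_assoc, add_halves] at hblock',
      by rwa [add_assoc, add_comm 1] at hfan'⟩
    rcases hU' i hi with hi | hi
    · rcases Finset.mem_insert.1 hi with rfl | hi
      exacts [.inr hb, .inl hi]
    · exact .inr (hJ₁ hi)

/-- Every vertex of every `C j` is joined to `r` by a labelled path of length `l` whose interior has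
no neighbours in the blocks `B i`, `i ∈ I`, other than `B j`. Unlike in a `Fan`, the centre `r` may
have neighbours in all blocks. -/
def WeakFan (G : SimpleGraph V) (A : ι → Finset V) (U J : Finset ι) (C : ι → Finset V)
    (I : Finset ι) (B : ι → Finset V) (r : V) (l : ℕ) : Prop :=
  ∀ j ∈ J, ∀ t ∈ C j, ∃ p κ, LabelledPath G A U p κ l ∧ p 0 = t ∧ p l = r ∧
    ∀ a ∈ Set.Ioo 0 l, ∀ i ∈ I, i ≠ j → ∀ s ∈ B i, ¬ G.Adj (p a) s

/-- Any two nonadjacent vertices in distinct blocks `C i`, `C j` are joined by a labelled path of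
length `l` with labels in `U`, whose interior has no neighbours in the remaining blocks. -/
def IsLinked (G : SimpleGraph V) (A : ι → Finset V) (U J : Finset ι) (C : ι → Finset V)
    (l : ℕ) : Prop :=
  ∀ i ∈ J, ∀ j ∈ J, i ≠ j → ∀ t ∈ C i, ∀ s ∈ C j, ¬ G.Adj t s →
    ∃ p κ, LabelledPath G A U p κ l ∧ p 0 = t ∧ p l = s ∧
      ∀ a ∈ Set.Ioo 0 l, ∀ b ∈ J, b ≠ i → b ≠ j → ∀ x ∈ C b, ¬ G.Adj (p a) x

open Classical in
lemma Fan.exists_path (h₁ : Fan G A U₁ J C v l₁) (h₂ : Fan G A U₂ J C v l₂) (hv : v ∈ A i₀)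
    (hi₁ : i₀ ∉ U₁) (hi₂ : i₀ ∉ U₂) (hU : Disjoint U₁ U₂) {j : ι} {t : V} (hj : j ∈ J)
    (ht : t ∈ C j) (hb : b ∈ J) (hr : r ∈ C b) (htr : t ≠ r) :
    ∃ l ≤ l₁ + l₂, ∃ p κ, LabelledPath G A (insert i₀ (U₁ ∪ U₂)) p κ l ∧ p 0 = t ∧ p l = r ∧
      ∀ a ∈ Set.Ioo 0 l, ∀ i ∈ J.erase b, i ≠ j → ∀ s ∈ C i, ¬ G.Adj (p a) s := by
  obtain ⟨p, κ, hp, hpt, hpv, hpC⟩ := h₁ j hj t ht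
  obtain ⟨q, μ, hq, hqr, hqv, hqC⟩ := h₂ b hb r hr
  obtain ⟨w, ν, hw, hwp, hwq⟩ := hp.toLabelledWalk.exists_glue hq.toLabelledWalk
    (hpv.trans hqv.symm) (hpv ▸ hv) hi₁ hi₂ hU
  have hw0 : w 0 = t := (hwp 0 l₁.zero_le).trans hpt
  have hwr : w (l₁ + l₂) = r := (hwq 0 l₂.zero_le).trans hqr
  obtain ⟨l, hl, x, ξ, hx, hx0, hxl, hxw⟩ := hw.exists_labelledPath (by rwa [hw0, hwr])
  refine ⟨l, hl.2, x, ξ, hx, hx0.trans hw0, hxl.trans hwr, fun a ha i hi hij s hs hxs ↦ ?_⟩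
  obtain ⟨hib, hi⟩ := Finset.mem_erase.1 hi
  obtain ⟨d, hd, hxd⟩ := hxw a ha
  rcases le_or_gt d l₁ with hdl | hdl
  · rw [hxd, hwp d hdl] at hxs
    exact hpC d ⟨hd.1, hdl⟩ i hi hij s hs hxs
  · have hwd : w d = q (l₁ + l₂ - d) := by rw [← hwq _ (by omega), Nat.sub_sub_self hd.2.le]
    rw [hxd, hwd] at hxs
    exact hqC _ ⟨Nat.sub_pos_of_lt hd.2, by omega⟩ i hi hib s hs hxs

open Classical in
lemma Fan.exists_weakFan (h₁ : Fan G A U₁ J C v l₁) (h₂ : Fan G A U₂ J C v l₂) (hv : v ∈ A i₀)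
    (hi₁ : i₀ ∉ U₁) (hi₂ : i₀ ∉ U₂) (hU : Disjoint U₁ U₂) (hb : b ∈ J) (hr : r ∈ C b)
    (hJ' : J' ⊆ J) (hC' : ∀ j ∈ J', C' j ⊆ C j) (hrC' : ∀ j ∈ J', r ∉ C' j) {L k : ℕ}
    (hL : l₁ + l₂ < L) (hk : L * k ≤ #J') :
    ∃ l < L, ∃ J₀ ⊆ J', #J₀ = k ∧ ∃ C₀ : ι → Finset V, (∀ j, C₀ j ⊆ C' j) ∧
      (∀ j ∈ J₀, (L : ℝ)⁻¹ * #(C' j) ≤ #(C₀ j)) ∧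
      WeakFan G A (insert i₀ (U₁ ∪ U₂)) J₀ C₀ (J.erase b) C r l := by
  have hpath (j : ι) (t : V) : ∃ l : Fin L, j ∈ J' → t ∈ C' j → ∃ p κ,
      LabelledPath G A (insert i₀ (U₁ ∪ U₂)) p κ l ∧ p 0 = t ∧ p l = r ∧
        ∀ a ∈ Set.Ioo 0 (l : ℕ), ∀ i ∈ J.erase b, i ≠ j → ∀ s ∈ C i, ¬ G.Adj (p a) s := by
    by_cases h : j ∈ J' ∧ t ∈ C' j
    · obtain ⟨l, hl, hp⟩ := h₁.exists_path h₂ hv hi₁ hi₂ hU (hJ' h.1) (hC' j h.1 h.2) hb hr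
        (ne_of_mem_of_not_mem h.2 (hrC' j h.1))
      exact ⟨⟨l, hl.trans_lt hL⟩, fun _ _ ↦ hp⟩
    · exact ⟨⟨0, by omega⟩, fun hj ht ↦ absurd ⟨hj, ht⟩ h⟩
  choose f hf using hpath
  have : NeZero L := ⟨by omega⟩
  obtain ⟨g, J₀, hJ₀, hJ₀card, hC₀⟩ := exists_common_fiber f C' (by simpa using hk)
  refine ⟨g, g.2, J₀, hJ₀, hJ₀card, fun j ↦ {t ∈ C' j | f j t = g},
    fun _ ↦ Finset.filter_subset _ _, by simpa using hC₀, fun j hj t ht ↦ ?_⟩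
  obtain ⟨htC, htg⟩ := Finset.mem_filter.1 ht
  exact htg ▸ hf j t (hJ₀ hj) htC

open Classical in
lemma WeakFan.isLinked (hF : WeakFan G A U₁ J C I B r l) (hM : Fan G B U₂ J C r m) (hr : r ∈ A b)
    (hbI : b ∉ I) (hbU : b ∉ U₁) (hBA : ∀ i ∈ I, B i ⊆ A i) (hJ : J ⊆ I)
    (hCB : ∀ j ∈ J, C j ⊆ B j) (hU₁ : Disjoint U₁ I) (hU₂ : U₂ ⊆ I) (hU₂J : Disjoint U₂ J) :
    IsLinked G A (insert b (U₁ ∪ U₂)) J C (l + m) := by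
  intro i hi j hj hij t ht s hs hts
  obtain ⟨p, κ, hp, hpt, hpr, hpB⟩ := hF i hi t ht
  obtain ⟨q, μ, hq, hqs, hqr, hqC⟩ := hM j hj s hs
  have hqA : LabelledPath G A U₂ q μ m :=
    ⟨⟨hq.adj, hq.label_mem, fun a ha ↦ hBA _ (hU₂ (hq.label_mem a ha)) (hq.mem_block a ha),
      hq.injOn⟩, hq.not_adj⟩
  have hpq (a : ℕ) (ha : a < l) (d : ℕ) (hd : d < m) : ¬ G.Adj (p a) (q d) := fun h ↦ by
    rcases a.eq_zero_or_pos with rfl | ha0 <;> rcases d.eq_zero_or_pos with rfl | hd0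
    · exact hts (hpt ▸ hqs ▸ h)
    · exact hqC d ⟨hd0, hd.le⟩ i hi hij t ht (hpt ▸ h.symm)
    · exact hpB a ⟨ha0, ha⟩ j (hJ hj) hij.symm s (hCB j hj hs) (hqs ▸ h)
    · have hμ := hq.label_mem d ⟨hd0, hd⟩
      exact hpB a ⟨ha0, ha⟩ (μ d) (hU₂ hμ) (ne_of_mem_of_not_mem hi
        (Finset.disjoint_left.1 hU₂J hμ)).symm _ (hq.mem_block d ⟨hd0, hd⟩) h
  obtain ⟨w, ν, hw, hwp, hwq⟩ := hp.exists_glue hqA (hpr.trans hqr.symm) (hpr ▸ hr) hbU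
    (fun h ↦ hbI (hU₂ h)) (Finset.disjoint_of_subset_right hU₂ hU₁) hpq
  refine ⟨w, ν, hw, (hwp 0 l.zero_le).trans hpt, (hwq 0 m.zero_le).trans hqs,
    fun a ha d hd hdi hdj x hx h ↦ ?_⟩
  rcases lt_or_ge a l with hal | hal
  · exact hpB a ⟨ha.1, hal⟩ d (hJ hd) hdi x (hCB d hd hx) (hwp a hal.le ▸ h)
  · have hwa : w a = q (l + m - a) := by rw [← hwq _ (by omega), Nat.sub_sub_self ha.2.le]
    exact hqC _ ⟨Nat.sub_pos_of_lt ha.2, by omega⟩ d hd hdj x hx (hwa ▸ h)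

lemma WeakFan.mono (h : WeakFan G A U J C I B r l) (hJ : J' ⊆ J) (hC : ∀ j ∈ J', C' j ⊆ C j) :
    WeakFan G A U J' C' I B r l :=
  fun j hj t ht ↦ h j (hJ hj) t (hC j hj ht)

lemma exists_weakFan_and_fan (ι : Type*) {R : ℕ} (k : ℕ) {c σ Δ lam' : ℝ} (hR : 1 ≤ R)
    (hc : c < 1) (hσ : 1 - c < R * (c - (σ + Δ))) (hΔ : 0 < Δ) (hlam' : 0 < lam') :
    ∃ (K : ℕ) (lam : ℝ), 0 < lam ∧ ∀ᶠ n : ℝ in atTop, ∀ ⦃V : Type u⦄ ⦃G : SimpleGraph V⦄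
      ⦃I : Finset ι⦄ ⦃A : ι → Finset V⦄, CoherentBlockade G n c I A σ lam → K ≤ #I →
      ∃ b ∈ I, ∃ r ∈ A b, ∃ U₁ ⊆ I, b ∉ U₁ ∧ ∃ I' ⊆ I, b ∉ I' ∧ Disjoint U₁ I' ∧
        ∃ B : ι → Finset V, (∀ i ∈ I', B i ⊆ A i) ∧ ∃ U₂ ⊆ I', ∃ J ⊆ I', Disjoint U₂ J ∧ #J = k ∧
        ∃ C : ι → Finset V, (∀ j ∈ J, C j ⊆ B j) ∧ CoherentBlockade G n c J C (σ + Δ) lam' ∧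
        (∃ l ≤ 2 * R + 2, WeakFan G A U₁ J C I' B r l) ∧ ∃ m ≤ R + 1, Fan G B U₂ J C r m := by
  classical
  have hR0 : (0 : ℝ) < R := by exact_mod_cast hR
  have hΔ3 : 0 < Δ / 3 := by linarith
  set θ : ℝ := ((2 * R + 3 : ℕ) : ℝ)⁻¹
  have hθ0 : 0 < θ := by positivity
  obtain ⟨K₂, lam₂, hlam₂, hfan₂⟩ := exists_fans.{u} Unit ι ((2 * R + 3) * k)
    (σ := σ + Δ / 3) hR hc (by nlinarith [mul_pos hR0 hΔ]) hΔ3 (mul_pos hlam' hθ0)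
  obtain ⟨K₁, lam₁, hlam₁, hfan₁⟩ := exists_fans.{u} Bool ι K₂ (σ := σ) hR hc
    (by nlinarith) hΔ3 hlam₂
  refine ⟨K₁, lam₁, hlam₁, ?_⟩
  filter_upwards [eventually_gt_atTop 0, hfan₁, hfan₂, eventually_rpow_neg_le hθ0 hΔ3]
    with n hn hfan₁ hfan₂ hnθ V G I A h hI
  obtain ⟨i₀, hi₀, v, hv, U, hU, hUdisj, J₁, hJ₁, hJ₁card, hi₀J₁, hUJ₁, C₁, hC₁, hblock₁, hfan₁⟩ :=
    hfan₁ h hI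
  obtain ⟨b, hb, r, hr, U', hU', -, J₂, hJ₂, hJ₂card, hbJ₂, hUJ₂, C₂, hC₂, hblock₂, hfan₂⟩ :=
    hfan₂ hblock₁ hJ₁card.ge
  obtain ⟨l₁, -, hl₁, hl₁fan⟩ := hfan₁ false
  obtain ⟨l₂, -, hl₂, hl₂fan⟩ := hfan₁ true
  obtain ⟨m, -, hm, hmfan⟩ := hfan₂ ()
  have hrC₂ (j : ι) (hj : j ∈ J₂) : r ∉ C₂ j := fun hrj ↦
    Finset.disjoint_left.1 (hblock₁.disjoint b hb j (hJ₂ hj) (ne_of_mem_of_not_mem hj hbJ₂).symm) hr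
      (hC₂ j hj hrj)
  obtain ⟨l, hl, J, hJ, hJcard, C, hC, hCcard, hweak⟩ := hl₁fan.exists_weakFan hl₂fan hv
    (hU false).2 (hU true).2 (hUdisj Bool.false_ne_true) hb hr hJ₂ hC₂ hrC₂
    (by omega : l₁ + l₂ < 2 * R + 3) hJ₂card.ge
  have hUJ₁' : Disjoint (insert i₀ (U false ∪ U true)) J₁ := by
    simp only [Finset.disjoint_insert_left, Finset.disjoint_union_left]
    exact ⟨hi₀J₁, hUJ₁ false, hUJ₁ true⟩
  refine ⟨b, hJ₁ hb, r, hC₁ b hb hr, insert i₀ (U false ∪ U true),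
    Finset.insert_subset hi₀ (Finset.union_subset (hU false).1 (hU true).1),
    Finset.disjoint_right.1 hUJ₁' hb, J₁.erase b, (J₁.erase_subset b).trans hJ₁,
    J₁.notMem_erase b, Finset.disjoint_of_subset_right (J₁.erase_subset b) hUJ₁', C₁,
    fun i hi ↦ hC₁ i (Finset.mem_of_mem_erase hi), U' (),
    Finset.subset_erase.2 (hU' ()), J, Finset.subset_erase.2 ⟨hJ.trans hJ₂, fun h ↦ hbJ₂ (hJ h)⟩,
    Finset.disjoint_of_subset_right hJ (hUJ₂ ()), hJcard, C,
    fun j hj ↦ (hC j).trans (hC₂ j (hJ hj)), ?_, ⟨l, by omega, hweak⟩,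
    m, hm, hmfan.mono hJ fun j _ ↦ hC j⟩
  have := hblock₂.shrink hn hθ0 (by positivity) hnθ hJ (fun j _ ↦ hC j) hCcard
  rwa [mul_div_cancel_right₀ _ hθ0.ne', show σ + Δ / 3 + Δ / 3 + Δ / 3 = σ + Δ by ring] at this

theorem exists_linked_blockade (ι : Type*) {R ℓ : ℕ} (k : ℕ) {c σ Δ lam' : ℝ} (hR : 1 ≤ R)
    (hc : c < 1) (hσ : 1 - c < R * (c - (σ + Δ))) (hℓ : 3 * R + 3 ≤ ℓ) (hΔ : 0 < Δ)
    (hlam' : 0 < lam') :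
    ∃ (K : ℕ) (lam : ℝ), 0 < lam ∧ ∀ᶠ n : ℝ in atTop, ∀ ⦃V : Type u⦄ ⦃G : SimpleGraph V⦄
      ⦃I : Finset ι⦄ ⦃A : ι → Finset V⦄, CoherentBlockade G n c I A σ lam → K ≤ #I →
      ∃ U ⊆ I, ∃ J ⊆ I, Disjoint U J ∧ k ≤ #J ∧ ∃ C : ι → Finset V, (∀ j ∈ J, C j ⊆ A j) ∧
        CoherentBlockade G n c J C (σ + Δ) lam' ∧ IsLinked G A U J C ℓ := by
  classical
  have hR0 : (0 : ℝ) < R := by exact_mod_cast hR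
  have hcσ : 0 < c - (σ + Δ) := pos_of_mul_pos_right (by linarith) hR0.le
  obtain ⟨K₂, lam₂, hlam₂, hlengthen⟩ := exists_lengthened_fan.{u} ι ℓ k (c := c)
    (σ := σ + Δ / 2) (by linarith) (half_pos hΔ) hlam'
  obtain ⟨K₁, lam₁, hlam₁, hfans⟩ := exists_weakFan_and_fan.{u} ι K₂ (σ := σ) hR hc
    (by nlinarith) (half_pos hΔ) hlam₂
  refine ⟨K₁, lam₁, hlam₁, ?_⟩
  filter_upwards [hfans, hlengthen] with n hfans hlengthen V G I A h hI
  obtain ⟨b, hb, r, hr, U₁, hU₁, hbU₁, I', hI', hbI', hUI', B, hB, U₂, hU₂, J, hJ, hUJ, hJcard, C,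
    hC, hblock, ⟨l, hl, hweak⟩, m, hm, hfan⟩ := hfans h hI
  obtain ⟨U, hU, J', hJ', hUJ', hJ'card, C', hC', hblock', hfan'⟩ :=
    hlengthen hblock hJcard.ge hfan hUJ hC (ℓ - l - m) (by omega)
  have hUI : U ⊆ I' := fun i hi ↦ (hU i hi).elim (hU₂ ·) (hJ ·)
  have hCB (j : ι) (hj : j ∈ J') : C' j ⊆ B j := (hC' j hj).trans (hC j (hJ' hj))
  have hlink := (hweak.mono hJ' hC').isLinked hfan' hr hbI' hbU₁ hB (hJ'.trans hJ) hCB hUI' hUI hUJ'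
  rw [show l + (m + (ℓ - l - m)) = ℓ by omega] at hlink
  refine ⟨insert b (U₁ ∪ U), Finset.insert_subset hb (Finset.union_subset hU₁ (hUI.trans hI')),
    J', hJ'.trans (hJ.trans hI'), ?_, hJ'card, C', fun j hj ↦ (hCB j hj).trans (hB j (hJ (hJ' hj))),
    by rwa [add_assoc, add_halves] at hblock', hlink⟩
  rw [Finset.disjoint_insert_left, Finset.disjoint_union_left]
  exact ⟨fun h ↦ hbI' (hJ (hJ' h)), Finset.disjoint_of_subset_right (hJ'.trans hJ) hUI', hUJ'⟩

end Linkage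

/-! ### Rainbow copies of weakly buildable graphs -/

section RainbowEmbedding

open scoped Finset
open Filter

universe u

variable {ι : Type*} {G : SimpleGraph V} {H : SimpleGraph W} {A C : ι → Finset V}
  {I J U : Finset ι} {S T : Set W} {f g : W → V} {P : ℕ → V} {q μ : W → ι} {p : ℕ → W} {κ : ℕ → ι}
  {R ℓ : ℕ} {c : ℝ}

/-- `f` embeds the induced subgraph `H[S]` into `G` with vertices in distinct blocks `A i`, `i ∈ I`;
the vertex `f w` lies in the block `A (q w)`. -/
structure IsRainbowEmbedding (H : SimpleGraph W) (S : Set W) (G : SimpleGraph V) (I : Finset ι)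
    (A : ι → Finset V) (f : W → V) (q : W → ι) : Prop where
  injOn : Set.InjOn q S
  index_mem : ∀ w ∈ S, q w ∈ I
  mem_block : ∀ w ∈ S, f w ∈ A (q w)
  adj_iff : ∀ a ∈ S, ∀ b ∈ S, G.Adj (f a) (f b) ↔ H.Adj a b

lemma IsRainbowEmbedding.mono (h : IsRainbowEmbedding H S G J C f q) (hJ : J ⊆ I)
    (hC : ∀ j ∈ J, C j ⊆ A j) : IsRainbowEmbedding H S G I A f q :=
  ⟨h.injOn, fun w hw ↦ hJ (h.index_mem w hw),
    fun w hw ↦ hC _ (h.index_mem w hw) (h.mem_block w hw), h.adj_iff⟩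

lemma isRainbowEmbedding_singleton {b : ι} {x : V} (hx : x ∈ A b) (v : W) :
    IsRainbowEmbedding H {v} G {b} A (fun _ ↦ x) fun _ ↦ b := by
  constructor <;> simp [hx]

open Classical in
lemma IsRainbowEmbedding.exists_union (hS : IsRainbowEmbedding H S G I A f q)
    (hT : IsRainbowEmbedding H T G J A g μ) (hST : Disjoint S T) (hIJ : Disjoint I J)
    (hadj : ∀ a ∈ S, ∀ b ∈ T, G.Adj (f a) (g b) ↔ H.Adj a b) :
    ∃ F Q, IsRainbowEmbedding H (S ∪ T) G (I ∪ J) A F Q := by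
  have hTS (w : W) (hw : w ∈ T) : w ∉ S := Set.disjoint_right.1 hST hw
  have hne (a : W) (ha : a ∈ S) (b : W) (hb : b ∈ T) : q a ≠ μ b := fun h ↦
    Finset.disjoint_left.1 hIJ (hS.index_mem a ha) (h ▸ hT.index_mem b hb)
  refine ⟨S.piecewise f g, S.piecewise q μ, ?_, ?_, ?_, ?_⟩
  · rintro a (ha | ha) b (hb | hb) hab <;>
      simp only [Set.piecewise_eq_of_mem, Set.piecewise_eq_of_notMem, ha, hb, hTS,
        not_false_eq_true] at hab
    exacts [hS.injOn ha hb hab, absurd hab (hne a ha b hb), absurd hab.symm (hne b hb a ha),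
      hT.injOn ha hb hab]
  · rintro w (hw | hw)
    · simpa [hw] using .inl (hS.index_mem w hw)
    · simpa [hTS w hw] using .inr (hT.index_mem w hw)
  · rintro w (hw | hw)
    · simpa [hw] using hS.mem_block w hw
    · simpa [hTS w hw] using hT.mem_block w hw
  · rintro a (ha | ha) b (hb | hb) <;>
      simp only [Set.piecewise_eq_of_mem, Set.piecewise_eq_of_notMem, ha, hb, hTS,
        not_false_eq_true]
    exacts [hS.adj_iff a ha b hb, hadj a ha b hb,
      by rw [G.adj_comm, H.adj_comm]; exact hadj b hb a ha, hT.adj_iff a ha b hb]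

/-- Every sufficiently long coherent blockade with sufficiently small `lam` on sufficiently many
vertices has a rainbow copy of `H[S]`, for every `σ` that leaves room for expansion to blocks of
full size in `R` steps. -/
def RainbowUnavoidable (ι : Type*) (H : SimpleGraph W) (R : ℕ) (c : ℝ) (S : Set W) : Prop :=
  ∀ σ : ℝ, 1 - c < R * (c - σ) → ∃ (K : ℕ) (lam : ℝ), 0 < lam ∧ ∀ᶠ n : ℝ in atTop,
    ∀ ⦃V : Type u⦄ ⦃G : SimpleGraph V⦄ ⦃I : Finset ι⦄ ⦃A : ι → Finset V⦄,
      CoherentBlockade G n c I A σ lam → K ≤ #I → ∃ f q, IsRainbowEmbedding H S G I A f q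

lemma exists_pos_lt_mul_sub_add {a σ : ℝ} (hR : 1 ≤ R) (h : a < R * (c - σ)) :
    ∃ Δ : ℝ, 0 < Δ ∧ a < R * (c - (σ + Δ)) := by
  have hR0 : (0 : ℝ) < R := by exact_mod_cast hR
  refine ⟨(R * (c - σ) - a) / (2 * R), div_pos (by linarith) (by linarith), ?_⟩
  have : R * (c - (σ + (R * (c - σ) - a) / (2 * R))) = (R * (c - σ) + a) / 2 := by
    field_simp
    ring
  linarith

lemma rainbowUnavoidable_empty (ι : Type*) (H : SimpleGraph W) (R : ℕ) (c : ℝ) :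
    RainbowUnavoidable.{u} ι H R c ∅ := by
  refine fun σ _ ↦ ⟨1, 1, one_pos, ?_⟩
  filter_upwards [eventually_gt_atTop 0] with n hn V G I A h hI
  obtain ⟨i, hi⟩ : I.Nonempty := Finset.card_pos.1 hI
  obtain ⟨v, _⟩ := h.nonempty hn hi
  exact ⟨fun _ ↦ v, fun _ ↦ i, by constructor <;> simp⟩

lemma IsRainbowEmbedding.not_adj_of_isPrivateCover {X : Finset V} {Y : ι → Finset V} {j : ι} {x : V}
    {w : W} (h : IsRainbowEmbedding H S G J C f q) (hY : IsPrivateCover G J C X Y) (hj : j ∈ J)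
    (hx : x ∈ Y j) (hw : w ∈ S) (hwj : q w ≠ j) : ¬ G.Adj (f w) x := fun hwx ↦
  hY.anticomplete j hj (q w) (h.index_mem w hw) hwj x hx (f w) (h.mem_block w hw) hwx.symm

lemma exists_extendable_rainbowEmbedding [Finite W] {X : Finset V} {Y : ι → Finset V} {v : W}
    {k : ℕ} (hdeg : (S ∩ H.neighborSet v).ncard ≤ 1) (hJ : k + 1 ≤ #J)
    (hY : IsPrivateCover G J C X Y) (hC : ∀ j ∈ J, (C j).Nonempty)
    (hcopy : ∀ I ⊆ J, k ≤ #I → ∃ f q, IsRainbowEmbedding H S G I C f q) :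
    ∃ f q, IsRainbowEmbedding H S G J C f q ∧
      ∃ x ∈ X, ∀ w ∈ S, G.Adj (f w) x ↔ H.Adj w v := by
  classical
  by_cases hu : ∃ u ∈ S, H.Adj v u
  · obtain ⟨u, hu, huv⟩ := hu
    have huniq (w : W) (hw : w ∈ S) (hwv : H.Adj w v) : w = u :=
      (Set.ncard_le_one (Set.toFinite _)).1 hdeg w ⟨hw, hwv.symm⟩ u ⟨hu, huv⟩
    obtain ⟨f, q, h⟩ := hcopy J subset_rfl (by omega)
    have hqu := h.index_mem u hu
    obtain ⟨x, hx, hxu⟩ := hY.covers (q u) hqu (f u) (h.mem_block u hu)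
    refine ⟨f, q, h, x, hY.subset _ hqu hx, fun w hw ↦ ⟨fun hwx ↦ ?_, fun hwv ↦ ?_⟩⟩
    · by_contra hwv
      exact h.not_adj_of_isPrivateCover hY hqu hx hw
        (fun hq ↦ hwv (h.injOn hw hu hq ▸ huv.symm)) hwx
    · exact huniq w hw hwv ▸ hxu.symm
  · push Not at hu
    obtain ⟨j, hj⟩ : J.Nonempty := Finset.card_pos.1 (by omega)
    obtain ⟨f, q, h⟩ := hcopy (J.erase j) (J.erase_subset j)
      (by rw [Finset.card_erase_of_mem hj]; omega)
    have hJ := h.mono (A := C) (J.erase_subset j) fun _ _ ↦ subset_rfl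
    obtain ⟨t, ht⟩ := hC j hj
    obtain ⟨x, hx, -⟩ := hY.covers j hj t ht
    exact ⟨f, q, hJ, x, hY.subset j hj hx, fun w hw ↦
      ⟨fun hwx ↦ absurd hwx (hJ.not_adj_of_isPrivateCover hY hj hx hw
        (Finset.ne_of_mem_erase (h.index_mem w hw))), fun hwv ↦ absurd hwv.symm (hu w hw)⟩⟩

theorem RainbowUnavoidable.insert [Finite W] {v : W} (hS : RainbowUnavoidable.{u} ι H R c S)
    (hR : 1 ≤ R) (hc : c < 1) (hv : v ∉ S) (hdeg : (S ∩ H.neighborSet v).ncard ≤ 1) :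
    RainbowUnavoidable.{u} ι H R c (insert v S) := by
  classical
  intro σ hσ
  obtain ⟨Δ, hΔ, hσΔ⟩ := exists_pos_lt_mul_sub_add hR hσ
  have hcσ : 0 < c - σ := pos_of_mul_pos_right (by linarith) R.cast_nonneg
  obtain ⟨K₁, lam₁, hlam₁, hcopy⟩ := hS (σ + Δ) hσΔ
  obtain ⟨K₂, lam₂, hlam₂, hstar⟩ :=
    exists_block_with_private_covers.{u} ι (K₁ + 1) (sub_pos.1 hcσ) hΔ hlam₁
  refine ⟨K₂, lam₂, hlam₂, ?_⟩
  filter_upwards [eventually_ge_atTop 1, hcopy, hstar] with n hn hcopy hstar V G I A h hI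
  obtain ⟨b, hb, J, hJ, hbJ, hJcard, C, hCA, hblock, Y, hY⟩ := hstar h hI
  obtain ⟨f, q, hf, x, hx, hxadj⟩ := exists_extendable_rainbowEmbedding hdeg hJcard.ge hY
    (fun j hj ↦ hblock.nonempty (one_pos.trans_le hn) hj)
    fun J' hJ' ↦ hcopy (hblock.mono hJ' hn le_rfl le_rfl)
  obtain ⟨F, Q, hF⟩ := (hf.mono subset_rfl hCA).exists_union (isRainbowEmbedding_singleton hx v)
    (Set.disjoint_singleton_right.2 hv) (Finset.disjoint_singleton_right.2 hbJ)
    (by simpa using hxadj)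
  rw [Set.union_singleton] at hF
  exact ⟨F, Q, hF.mono (Finset.union_subset hJ (Finset.singleton_subset_iff.2 hb))
    fun _ _ ↦ subset_rfl⟩

lemma adj_iff_of_forall_adj_of_forall_not_adj {p : ℕ → V} (hadj : ∀ a < ℓ, G.Adj (p a) (p (a + 1)))
    (hnot : ∀ a b, a + 2 ≤ b → b ≤ ℓ → ¬ G.Adj (p a) (p b)) {a b : ℕ} (ha : a ≤ ℓ) (hb : b ≤ ℓ) :
    G.Adj (p a) (p b) ↔ a + 1 = b ∨ b + 1 = a := by
  refine ⟨fun h ↦ ?_, ?_⟩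
  · by_contra! hab
    rcases lt_trichotomy a b with hlt | rfl | hlt
    exacts [hnot a b (by omega) hb h, G.irrefl h, hnot b a (by omega) ha h.symm]
  · rintro (rfl | rfl)
    exacts [hadj a hb, (hadj b ha).symm]

lemma LabelledPath.adj_iff (hP : LabelledPath G A U P κ ℓ) (hp : IsInducedPath H p ℓ) {a b : ℕ}
    (ha : a ≤ ℓ) (hb : b ≤ ℓ) : G.Adj (P a) (P b) ↔ H.Adj (p a) (p b) := by
  rw [adj_iff_of_forall_adj_of_forall_not_adj hP.adj hP.not_adj ha hb,
    adj_iff_of_forall_adj_of_forall_not_adj hp.adj hp.not_adj ha hb]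

lemma LabelledPath.exists_isRainbowEmbedding (hP : LabelledPath G A U P κ ℓ)
    (hp : IsInducedPath H p ℓ) : ∃ g μ, IsRainbowEmbedding H (p '' Set.Ioo 0 ℓ) G U A g μ ∧
      ∀ a ∈ Set.Ioo 0 ℓ, g (p a) = P a := by
  have hinv (a : ℕ) (ha : a ∈ Set.Ioo 0 ℓ) : Function.invFunOn p (Set.Iic ℓ) (p a) = a :=
    hp.injOn.leftInvOn_invFunOn (Set.mem_Iic.2 ha.2.le)
  refine ⟨P ∘ Function.invFunOn p (Set.Iic ℓ), κ ∘ Function.invFunOn p (Set.Iic ℓ),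
    ⟨?_, ?_, ?_, ?_⟩, fun a ha ↦ congrArg P (hinv a ha)⟩
  · rintro _ ⟨a, ha, rfl⟩ _ ⟨b, hb, rfl⟩ hab
    simp only [Function.comp_apply, hinv a ha, hinv b hb] at hab
    exact congrArg p (hP.injOn ha hb hab)
  · rintro _ ⟨a, ha, rfl⟩
    simpa only [Function.comp_apply, hinv a ha] using hP.label_mem a ha
  · rintro _ ⟨a, ha, rfl⟩
    simpa only [Function.comp_apply, hinv a ha] using hP.mem_block a ha
  · rintro _ ⟨a, ha, rfl⟩ _ ⟨b, hb, rfl⟩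
    simpa only [Function.comp_apply, hinv a ha, hinv b hb] using hP.adj_iff hp ha.2.le hb.2.le

lemma IsHandle.isInducedPath (h : IsHandle H S ℓ p) : IsInducedPath H p ℓ :=
  have ⟨_, hinj, _, _, _, hadj, hnot, _⟩ := h
  ⟨hadj, hnot, fun a ha b hb ↦ hinj a ha b hb⟩

lemma IsHandle.union_eq (h : IsHandle H S ℓ p) :
    S ∪ {w | ∃ j ≤ ℓ, w = p j} = S ∪ p '' Set.Ioo 0 ℓ := by
  obtain ⟨-, -, h0, hℓ, -⟩ := h
  refine subset_antisymm (Set.union_subset Set.subset_union_left ?_)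
    (Set.union_subset_union_right S ?_)
  · rintro _ ⟨a, ha, rfl⟩
    rcases a.eq_zero_or_pos with rfl | ha0
    · exact .inl h0
    · rcases ha.lt_or_eq with ha | rfl
      exacts [.inr ⟨a, ⟨ha0, ha⟩, rfl⟩, .inl hℓ]
  · rintro _ ⟨a, ha, rfl⟩
    exact ⟨a, ha.2.le, rfl⟩

lemma IsHandle.eq_or_eq_of_adj (h : IsHandle H S ℓ p) {a : ℕ} {w : W} (ha : a ∈ Set.Ioo 0 ℓ)
    (hw : w ∈ S) (haw : H.Adj (p a) w) : w = p 0 ∨ w = p ℓ := by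
  obtain ⟨-, -, -, -, hinner, -, -, hdeg⟩ := h
  obtain ⟨ha0, haℓ⟩ := ha
  rcases hdeg a ha0 haℓ w (.inl hw) haw with rfl | rfl
  · rcases (a - 1).eq_zero_or_pos with h0 | h0
    exacts [.inl (congrArg p h0), absurd hw (hinner _ h0 (by omega))]
  · rcases (Nat.succ_le_of_lt haℓ).lt_or_eq with hlt | heq
    exacts [absurd hw (hinner _ a.succ_pos hlt), .inr (congrArg p heq)]

lemma IsRainbowEmbedding.exists_union_handle (hf : IsRainbowEmbedding H S G J C f q)
    (hh : IsHandle H S ℓ p) (hlink : IsLinked G A U J C ℓ) (hCA : ∀ j ∈ J, C j ⊆ A j)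
    (hUI : U ⊆ I) (hJI : J ⊆ I) (hUJ : Disjoint U J) :
    ∃ F Q, IsRainbowEmbedding H (S ∪ {w | ∃ j ≤ ℓ, w = p j}) G I A F Q := by
  classical
  have hp := hh.isInducedPath
  rw [hh.union_eq]
  have hadj := fun a ha w ↦ hh.eq_or_eq_of_adj (a := a) (w := w) ha
  obtain ⟨hℓ, -, h0, hpℓ, hinner, -⟩ := hh
  have hne : p 0 ≠ p ℓ := fun h ↦ by
    have := hp.injOn ℓ.zero_le Set.self_mem_Iic h
    omega
  obtain ⟨P, κ, hP, hP0, hPℓ, hPC⟩ := hlink _ (hf.index_mem _ h0) _ (hf.index_mem _ hpℓ)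
    (fun h ↦ hne (hf.injOn h0 hpℓ h)) _ (hf.mem_block _ h0) _ (hf.mem_block _ hpℓ)
    fun h ↦ hp.not_adj 0 ℓ (by omega) le_rfl ((hf.adj_iff _ h0 _ hpℓ).1 h)
  obtain ⟨g, μ, hg, hgP⟩ := hP.exists_isRainbowEmbedding hp
  have hdisj : Disjoint S (p '' Set.Ioo 0 ℓ) := by
    rw [Set.disjoint_right]
    rintro _ ⟨a, ha, rfl⟩
    exact hinner a ha.1 ha.2
  obtain ⟨F, Q, hF⟩ := (hf.mono subset_rfl hCA).exists_union hg hdisj hUJ.symm <| by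
    rintro w hw _ ⟨a, ha, rfl⟩
    rw [hgP a ha]
    by_cases hw0 : w = p 0
    · rw [hw0, ← hP0, hP.adj_iff hp ℓ.zero_le ha.2.le]
    by_cases hwℓ : w = p ℓ
    · rw [hwℓ, ← hPℓ, hP.adj_iff hp le_rfl ha.2.le]
    exact iff_of_false
      (fun h ↦ hPC a ha (q w) (hf.index_mem w hw) (fun h ↦ hw0 (hf.injOn hw h0 h))
        (fun h ↦ hwℓ (hf.injOn hw hpℓ h)) _ (hf.mem_block w hw) h.symm)
      fun h ↦ (hadj a ha w hw h.symm).elim hw0 hwℓ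
  exact ⟨F, Q, hF.mono (Finset.union_subset hJI hUI) fun _ _ ↦ subset_rfl⟩

theorem RainbowUnavoidable.union_handle (hS : RainbowUnavoidable.{u} ι H R c S) (hR : 1 ≤ R)
    (hc : c < 1) (hh : IsHandle H S ℓ p) (hℓ : 3 * R + 3 ≤ ℓ) :
    RainbowUnavoidable.{u} ι H R c (S ∪ {w | ∃ j ≤ ℓ, w = p j}) := by
  intro σ hσ
  obtain ⟨Δ, hΔ, hσΔ⟩ := exists_pos_lt_mul_sub_add hR hσ
  obtain ⟨K₁, lam₁, hlam₁, hcopy⟩ := hS (σ + Δ) hσΔ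
  obtain ⟨K₂, lam₂, hlam₂, hlinked⟩ := exists_linked_blockade.{u} ι K₁ hR hc hσΔ hℓ hΔ hlam₁
  refine ⟨K₂, lam₂, hlam₂, ?_⟩
  filter_upwards [hcopy, hlinked] with n hcopy hlinked V G I A h hI
  obtain ⟨U, hUI, J, hJI, hUJ, hJcard, C, hCA, hblock, hlink⟩ := hlinked h hI
  obtain ⟨f, q, hf⟩ := hcopy hblock hJcard
  exact hf.exists_union_handle hh hlink hCA hUI hJI hUJ

theorem WeaklyBuildableOn.rainbowUnavoidable [Finite W] (h : WeaklyBuildableOn H (3 * R + 3) S)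
    (hR : 1 ≤ R) (hc : c < 1) : RainbowUnavoidable.{u} ι H R c S := by
  induction h with
  | empty => exact rainbowUnavoidable_empty ι H R c
  | subleaf S v hv hdeg _ ih => exact ih.insert hR hc hv hdeg
  | handle S ℓ p _ hh hℓ ih => exact ih.union_handle hR hc hh hℓ

end RainbowEmbedding

/-! ### Graphs of small congestion -/

section Congestion

open scoped Finset

variable {H : SimpleGraph W} {Z : Finset W} {u v w x : W}

open Classical in
lemma two_le_degIn (hu : u ∈ Z) (hw : w ∈ Z) (huw : u ≠ w) (hvu : H.Adj v u) (hvw : H.Adj v w) :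
    2 ≤ degIn H v Z :=
  Finset.one_lt_card.2
    ⟨u, Finset.mem_filter.2 ⟨hu, hvu⟩, w, Finset.mem_filter.2 ⟨hw, hvw⟩, huw⟩

open Classical in
lemma eq_or_eq_of_degIn_eq_two (hv : degIn H v Z = 2) (hu : u ∈ Z) (hw : w ∈ Z) (huw : u ≠ w)
    (hvu : H.Adj v u) (hvw : H.Adj v w) (hx : x ∈ Z) (hvx : H.Adj v x) : x = u ∨ x = w := by
  by_contra! hne
  have : 2 < degIn H v Z := Finset.two_lt_card.2
    ⟨x, Finset.mem_filter.2 ⟨hx, hvx⟩, u, Finset.mem_filter.2 ⟨hu, hvu⟩,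
      w, Finset.mem_filter.2 ⟨hw, hvw⟩, hne.1, hne.2, huw⟩
  omega

open Classical in
lemma exists_adj_ne_of_two_le_degIn (hv : 2 ≤ degIn H v Z) (u : W) :
    ∃ w ∈ Z, H.Adj v w ∧ w ≠ u := by
  obtain ⟨w, hw, hwu⟩ := Finset.exists_mem_ne hv u
  exact ⟨w, (Finset.mem_filter.1 hw).1, (Finset.mem_filter.1 hw).2, hwu⟩

section

variable [Finite W]

lemma bddAbove_congestion (H : SimpleGraph W) :
    BddAbove ({0} ∪ {x : ℝ | ∃ J : H.Subgraph, J.edgeSet.Nonempty ∧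
      x = 1 - ((J.verts.ncard : ℝ) - 1) / (J.edgeSet.ncard : ℝ)}) := by
  refine ⟨1, ?_⟩
  rintro x (rfl | ⟨J, ⟨e, he⟩, rfl⟩)
  · exact zero_le_one
  · induction e with | _ a b =>
    have : (1 : ℝ) ≤ J.verts.ncard := by
      exact_mod_cast (Set.ncard_pos (Set.toFinite _)).2 ⟨a, J.edge_vert he⟩
    exact sub_le_self _ (div_nonneg (by linarith) (Nat.cast_nonneg _))

lemma congestion_nonneg (H : SimpleGraph W) : 0 ≤ congestion H :=
  le_csSup (bddAbove_congestion H) (Or.inl rfl)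

lemma le_congestion {J : H.Subgraph} (hJ : J.edgeSet.Nonempty) :
    1 - ((J.verts.ncard : ℝ) - 1) / J.edgeSet.ncard ≤ congestion H :=
  le_csSup (bddAbove_congestion H) (Or.inr ⟨J, hJ, rfl⟩)

lemma sum_degIn_eq_two_mul_ncard_edgeSet (H : SimpleGraph W) (Z : Finset W) :
    ∑ v ∈ Z, degIn H v Z = 2 * ((⊤ : H.Subgraph).induce Z).edgeSet.ncard := by
  classical
  have := Fintype.ofFinite W
  set J := (⊤ : H.Subgraph).induce (Z : Set W)
  have hdeg (v : W) : J.spanningCoe.degree v = if v ∈ Z then degIn H v Z else 0 := by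
    rw [← SimpleGraph.card_neighborFinset_eq_degree, degIn]
    split_ifs with hv
    · congr 1
      ext z
      simp [J, hv]
    · refine Finset.card_eq_zero.2 (Finset.eq_empty_of_forall_notMem fun z ↦ ?_)
      simp [J, hv]
  calc ∑ v ∈ Z, degIn H v Z = ∑ v, J.spanningCoe.degree v := by
        simp only [hdeg, Finset.sum_ite_mem, Finset.univ_inter]
    _ = 2 * #J.spanningCoe.edgeFinset := J.spanningCoe.sum_degrees_eq_twice_card_edges
    _ = 2 * J.edgeSet.ncard := by
        rw [← Set.ncard_coe_finset, SimpleGraph.coe_edgeFinset, Subgraph.edgeSet_spanningCoe]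

lemma one_sub_congestion_mul_sum_degIn_le (hv : v ∈ Z) (hpos : 0 < degIn H v Z) :
    (1 - congestion H) * ∑ v ∈ Z, (degIn H v Z : ℝ) ≤ 2 * (#Z - 1) := by
  classical
  set J := (⊤ : H.Subgraph).induce (Z : Set W)
  obtain ⟨w, hw⟩ := Finset.card_pos.1 hpos
  obtain ⟨hwZ, hvw⟩ := Finset.mem_filter.1 hw
  have hJ : J.edgeSet.Nonempty := ⟨s(v, w), hv, hwZ, hvw⟩
  have hJpos : (0 : ℝ) < J.edgeSet.ncard := by
    exact_mod_cast (Set.ncard_pos (Set.toFinite _)).2 hJ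
  have hle : 1 - congestion H ≤ (#Z - 1) / J.edgeSet.ncard := by
    have hJle := le_congestion hJ
    rw [Subgraph.induce_verts, Set.ncard_coe_finset] at hJle
    linarith
  have hsum : ∑ v ∈ Z, (degIn H v Z : ℝ) = 2 * J.edgeSet.ncard := by
    exact_mod_cast sum_degIn_eq_two_mul_ncard_edgeSet H Z
  rw [le_div_iff₀ hJpos] at hle
  rw [hsum]
  linarith

lemma one_le_congestion_mul_card (hZ : Z.Nonempty) (hdeg : ∀ v ∈ Z, 2 ≤ degIn H v Z) :
    1 ≤ congestion H * #Z := by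
  by_contra! hlt
  obtain ⟨v, hv⟩ := hZ
  have hcard : (1 : ℝ) ≤ #Z := by exact_mod_cast Finset.card_pos.2 ⟨v, hv⟩
  have hκ : congestion H ≤ 1 := by nlinarith [congestion_nonneg H]
  have hsum : (#Z * 2 : ℝ) ≤ ∑ v ∈ Z, (degIn H v Z : ℝ) := by
    exact_mod_cast Finset.card_nsmul_le_sum Z (degIn H · Z) 2 hdeg
  have := one_sub_congestion_mul_sum_degIn_le hv (two_pos.trans_le (hdeg v hv))
  nlinarith [mul_le_mul_of_nonneg_left hsum (sub_nonneg.2 hκ)]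

end

/-- An infinite walk of `H` inside `S` that never returns at once along the edge just used. -/
structure IsNonbacktracking (H : SimpleGraph W) (S : Finset W) (p : ℕ → W) : Prop where
  mem : ∀ i, p i ∈ S
  adj : ∀ i, H.Adj (p i) (p (i + 1))
  ne : ∀ i, p i ≠ p (i + 2)

namespace IsNonbacktracking

variable {S : Finset W} {p q : ℕ → W} {β i j k m : ℕ}

lemma injOn_of_not_adj (hp : IsNonbacktracking H S p)
    (h : ∀ i j, i + 2 ≤ j → j < m → ¬ H.Adj (p i) (p j)) : Set.InjOn p (Set.Iic m) := by
  have hlt (i j : ℕ) (hij : i < j) (hj : j ≤ m) : p i ≠ p j := by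
    intro heq
    obtain rfl | rfl | h3 : j = i + 1 ∨ j = i + 2 ∨ i + 3 ≤ j := by omega
    · exact (hp.adj i).ne heq
    · exact hp.ne i heq
    · refine h i (j - 1) (by omega) (by omega) ?_
      have hadj := hp.adj (j - 1)
      rw [Nat.sub_add_cancel (by omega), ← heq] at hadj
      exact hadj.symm
  intro i hi j hj heq
  rcases lt_trichotomy i j with hij | hij | hij
  · exact absurd heq (hlt i j hij hj)
  · exact hij
  · exact absurd heq.symm (hlt j i hij hi)

open Classical in
lemma two_le_degIn_image_Icc (hp : IsNonbacktracking H S p) (hinj : Set.InjOn p (Set.Iic j))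
    (hij : i + 2 ≤ j) (hadj : H.Adj (p i) (p j)) :
    ∀ v ∈ (Finset.Icc i j).image p, 2 ≤ degIn H v ((Finset.Icc i j).image p) := by
  have hmem (e : ℕ) (hie : i ≤ e) (hej : e ≤ j) : p e ∈ (Finset.Icc i j).image p :=
    Finset.mem_image_of_mem p (Finset.mem_Icc.2 ⟨hie, hej⟩)
  have hne (a b : ℕ) (hab : a < b) (hb : b ≤ j) : p a ≠ p b :=
    fun h ↦ hab.ne (hinj (hab.le.trans hb) hb h)
  simp only [Finset.forall_mem_image, Finset.mem_Icc]
  rintro e ⟨hie, hej⟩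
  obtain rfl | hie := hie.eq_or_lt
  · exact two_le_degIn (hmem (i + 1) (by omega) (by omega)) (hmem j (by omega) le_rfl)
      (hne _ _ (by omega) le_rfl) (hp.adj i) hadj
  obtain ⟨e, rfl⟩ := Nat.exists_eq_add_of_lt hie
  obtain rfl | hej := hej.eq_or_lt
  · exact two_le_degIn (hmem (i + e) (by omega) (by omega)) (hmem i le_rfl (by omega))
      (hne _ _ (by omega) (by omega)).symm (hp.adj _).symm hadj.symm
  · exact two_le_degIn (hmem (i + e) (by omega) (by omega)) (hmem (i + e + 2) (by omega) hej)
      (hp.ne _) (hp.adj _).symm (hp.adj _)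

-- By minimality of `j`, a chord from `p i` to `p j` closes a cycle of length at most `β + 1`.
lemma not_adj [Finite W] (hp : IsNonbacktracking H S p) (hβ : congestion H * (β + 1) < 1) :
    ∀ i j, i + 2 ≤ j → j ≤ β → ¬ H.Adj (p i) (p j) := by
  classical
  intro i j
  induction j using Nat.strong_induction_on generalizing i with | _ j ih =>
  intro hij hj hadj
  have hinj : Set.InjOn p (Set.Iic j) :=
    hp.injOn_of_not_adj fun a b hab hb ↦ ih b hb a hab (hb.le.trans hj)
  have hlarge := one_le_congestion_mul_card ((Finset.nonempty_Icc.2 (by omega)).image p)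
    (hp.two_le_degIn_image_Icc hinj hij hadj)
  have hcard : (#((Finset.Icc i j).image p) : ℝ) ≤ β + 1 := by
    have : #((Finset.Icc i j).image p) ≤ j + 1 - i :=
      Finset.card_image_le.trans (Nat.card_Icc i j).le
    exact_mod_cast (by omega : #((Finset.Icc i j).image p) ≤ β + 1)
  linarith [mul_le_mul_of_nonneg_left hcard (congestion_nonneg H)]

lemma isInducedPath [Finite W] (hp : IsNonbacktracking H S p)
    (hβ : congestion H * (β + 1) < 1) : IsInducedPath H p β where
  adj a _ := hp.adj a
  not_adj := hp.not_adj hβ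
  injOn := hp.injOn_of_not_adj fun i j hij hj ↦ hp.not_adj hβ i j hij hj.le

lemma cons (hp : IsNonbacktracking H S p) (hv : v ∈ S) (hadj : H.Adj v (p 0)) (hne : v ≠ p 1) :
    IsNonbacktracking H S (fun | 0 => v | i + 1 => p i) where
  mem | 0 => hv | i + 1 => hp.mem i
  adj | 0 => hadj | i + 1 => hp.adj i
  ne | 0 => hne | i + 1 => hp.ne i

lemma eq_and_eq_of_eq (hp : IsNonbacktracking H S p) (hq : IsNonbacktracking H S q)
    (hdeg : ∀ i, 0 < i → i ≤ k → degIn H (p i) S = 2) (hk : p k = q k)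
    (hk' : p (k + 1) = q (k + 1)) : p 0 = q 0 ∧ p 1 = q 1 := by
  induction k with
  | zero => exact ⟨hk, hk'⟩
  | succ k ih =>
    refine ih (fun i hi hik ↦ hdeg i hi (by omega)) ?_ hk
    have hadj : H.Adj (p (k + 1)) (q k) := hk ▸ (hq.adj k).symm
    rcases eq_or_eq_of_degIn_eq_two (hdeg (k + 1) k.succ_pos le_rfl) (hp.mem k) (hp.mem (k + 2))
      (hp.ne k) (hp.adj k).symm (hp.adj (k + 1)) (hq.mem k) hadj with h | h
    · exact h.symm
    · exact absurd (h.trans hk') (hq.ne k)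

end IsNonbacktracking

lemma exists_isNonbacktracking {S : Finset W} (hmin : ∀ v ∈ S, 2 ≤ degIn H v S) (hu : u ∈ S)
    (hv : v ∈ S) (huv : H.Adj u v) : ∃ p, IsNonbacktracking H S p ∧ p 0 = u ∧ p 1 = v := by
  choose! next hnextS hadj hne using
    fun a b (hb : b ∈ S) ↦ exists_adj_ne_of_two_le_degIn (hmin b hb) a
  let arc : ℕ → W × W := fun k ↦ (fun e ↦ (e.2, next e.1 e.2))^[k] (u, v)
  have harc_succ (k : ℕ) : arc (k + 1) = ((arc k).2, next (arc k).1 (arc k).2) :=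
    Function.iterate_succ_apply' _ _ _
  have harc (k : ℕ) : (arc k).1 ∈ S ∧ (arc k).2 ∈ S ∧ H.Adj (arc k).1 (arc k).2 := by
    induction k with
    | zero => exact ⟨hu, hv, huv⟩
    | succ k ih =>
      rw [harc_succ]
      exact ⟨ih.2.1, hnextS _ _ ih.2.1, hadj _ _ ih.2.1⟩
  refine ⟨fun k ↦ (arc k).1, ⟨fun k ↦ (harc k).1, fun k ↦ ?_, fun k ↦ ?_⟩, rfl, rfl⟩
  · rw [harc_succ]
    exact (harc k).2.2
  · rw [harc_succ, harc_succ]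
    exact (hne _ _ (harc k).2.1).symm

end Congestion

/-! ### Threads -/

section Threads

open scoped Finset

variable {H : SimpleGraph W} {S : Finset W} {p : ℕ → W} {u v : W} {β : ℕ}

/-- A nonbacktracking walk `p` of `H` inside `S`, all of whose vertices strictly between `p 0` and
`p β` have exactly two neighbours in `S`; for small congestion, its initial segment of length `β`
is a handle. -/
structure IsThread (H : SimpleGraph W) (S : Finset W) (β : ℕ) (p : ℕ → W) : Prop
    extends IsNonbacktracking H S p where
  degIn_eq_two : ∀ i ∈ Set.Ioo 0 β, degIn H (p i) S = 2

lemma exists_walk_to_branch (hmin : ∀ v ∈ S, 2 ≤ degIn H v S) (hno : ∀ p, ¬ IsThread H S β p)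
    (hu : u ∈ S) (hv : v ∈ S) (huv : H.Adj u v) (hdeg : degIn H u S = 2) :
    ∃ p, ∃ k < β - 2, IsNonbacktracking H S p ∧ p 0 = u ∧ p 1 = v ∧
      (∀ i ≤ k, degIn H (p i) S = 2) ∧ degIn H (p (k + 1)) S ≠ 2 := by
  classical
  obtain ⟨p, hp, rfl, rfl⟩ := exists_isNonbacktracking hmin hu hv huv
  have hbranch : ∃ i, i < β - 1 ∧ degIn H (p i) S ≠ 2 := by
    by_contra! hall
    obtain ⟨w, hw, hadj, hne⟩ := exists_adj_ne_of_two_le_degIn (hmin _ hu) (p 1)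
    refine hno _ ⟨hp.cons hw hadj.symm hne, ?_⟩
    rintro (_ | i) ⟨hi, hiβ⟩
    · exact absurd hi (lt_irrefl 0)
    · exact hall i (by omega)
  obtain ⟨hlt, hne⟩ := Nat.find_spec hbranch
  obtain ⟨k, hk⟩ : ∃ k, Nat.find hbranch = k + 1 :=
    Nat.exists_eq_succ_of_ne_zero fun h0 ↦ hne (h0 ▸ hdeg)
  refine ⟨p, k, by omega, hp, rfl, rfl, fun i hi ↦ ?_, hk ▸ hne⟩
  by_contra hi2
  exact Nat.find_min hbranch (by omega) ⟨by omega, hi2⟩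

open Classical in
lemma card_filter_adj_product (H : SimpleGraph W) (Z S : Finset W) :
    #{e ∈ Z ×ˢ S | H.Adj e.1 e.2} = ∑ v ∈ Z, degIn H v S := by
  simp only [degIn, Finset.card_filter, Finset.sum_product]

open Classical in
-- A walk leaving a vertex of degree two is determined by the number of steps after which it first
-- meets a branch vertex, together with the arc along which it does so.
lemma sum_degIn_filter_eq_two_le (hmin : ∀ v ∈ S, 2 ≤ degIn H v S)
    (hno : ∀ p, ¬ IsThread H S β p) :
    ∑ v ∈ S with degIn H v S = 2, degIn H v S ≤
      (β - 2) * ∑ v ∈ S with degIn H v S ≠ 2, degIn H v S := by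
  rw [← card_filter_adj_product, ← card_filter_adj_product, ← Finset.card_range (β - 2),
    ← Finset.card_product]
  refine Finset.card_le_card_of_forall_subsingleton
    (fun e f ↦ ∃ p, IsNonbacktracking H S p ∧ (p 0, p 1) = e ∧
      (∀ i ≤ f.1, degIn H (p i) S = 2) ∧ (p (f.1 + 1), p f.1) = f.2) ?_ ?_
  · rintro ⟨u, v⟩ he
    simp only [Finset.mem_filter, Finset.mem_product] at he
    obtain ⟨⟨⟨hu, hdeg⟩, hv⟩, huv⟩ := he
    obtain ⟨p, k, hk, hp, hpu, hpv, hpk, hne⟩ := exists_walk_to_branch hmin hno hu hv huv hdeg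
    refine ⟨(k, p (k + 1), p k), ?_, p, hp, Prod.ext hpu hpv, hpk, rfl⟩
    simp only [Finset.mem_product, Finset.mem_range, Finset.mem_filter]
    exact ⟨hk, ⟨⟨hp.mem _, hne⟩, hp.mem _⟩, (hp.adj k).symm⟩
  · rintro f - _ ⟨-, p, hp, rfl, hpk, hpf⟩ _ ⟨-, q, hq, rfl, -, hqf⟩
    obtain ⟨hend, hlast⟩ := Prod.ext_iff.1 (hpf.trans hqf.symm)
    obtain ⟨h0, h1⟩ := hp.eq_and_eq_of_eq hq (fun i _ hi ↦ hpk i hi) hlast hend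
    exact Prod.ext h0 h1

-- With `a` vertices of degree two and `b` branch vertices, of total degree `D ≥ 3 b`, absence of
-- threads means `2 a ≤ (β - 2) D`, which makes the induced subgraph too dense for its congestion.
lemma exists_isThread [Finite W] (hβ : 2 ≤ β) (hκ : 3 * congestion H * (β - 1) ≤ 1)
    (hS : S.Nonempty) (hmin : ∀ v ∈ S, 2 ≤ degIn H v S) : ∃ p, IsThread H S β p := by
  classical
  by_contra! hno
  have hcount := sum_degIn_filter_eq_two_le hmin hno
  have hsum := Finset.sum_filter_add_sum_filter_not S (degIn H · S = 2) (degIn H · S)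
  have hcard := Finset.card_filter_add_card_filter_not (s := S) (degIn H · S = 2)
  have htwo : ∑ v ∈ S with degIn H v S = 2, degIn H v S = #{v ∈ S | degIn H v S = 2} * 2 :=
    Finset.sum_eq_card_nsmul fun v hv ↦ (Finset.mem_filter.1 hv).2
  have hbranch : #{v ∈ S | degIn H v S ≠ 2} * 3 ≤ ∑ v ∈ S with degIn H v S ≠ 2, degIn H v S := by
    refine Finset.card_nsmul_le_sum _ (degIn H · S) 3 fun v hv ↦ ?_
    obtain ⟨hvS, hv⟩ := Finset.mem_filter.1 hv
    exact (hmin v hvS).lt_of_ne' hv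
  obtain ⟨v, hv⟩ := hS
  have hdense := one_sub_congestion_mul_sum_degIn_le hv (two_pos.trans_le (hmin v hv))
  rw [← Nat.cast_sum, ← hsum, htwo, ← hcard] at hdense
  rw [htwo] at hcount
  set D := ∑ v ∈ S with degIn H v S ≠ 2, degIn H v S
  set a := #{v ∈ S | degIn H v S = 2}
  set b := #{v ∈ S | degIn H v S ≠ 2}
  have hcount' : (a * 2 : ℝ) ≤ (β - 2) * D := by
    rw [← Nat.cast_two, ← Nat.cast_sub hβ]
    exact_mod_cast hcount
  have hbranch' : (b * 3 : ℝ) ≤ D := by exact_mod_cast hbranch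
  push_cast at hdense
  nlinarith [mul_le_mul_of_nonneg_left hcount' (congestion_nonneg H),
    mul_le_mul_of_nonneg_right hκ D.cast_nonneg]

open Classical in
lemma IsThread.isHandle (hp : IsThread H S β p) (hβ : 2 ≤ β) (hpath : IsInducedPath H p β) :
    IsHandle H ↑(S \ (Finset.Ioo 0 β).image p) β p := by
  have hend {i : ℕ} (hi : i ≤ β) (hi' : ¬ (0 < i ∧ i < β)) :
      p i ∈ (↑(S \ (Finset.Ioo 0 β).image p) : Set W) := by
    refine Finset.mem_coe.2 (Finset.mem_sdiff.2 ⟨hp.mem i, fun h ↦ ?_⟩)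
    obtain ⟨j, hj, hji⟩ := Finset.mem_image.1 h
    rw [Finset.mem_Ioo] at hj
    exact hi' (hpath.injOn hj.2.le hi hji ▸ hj)
  refine ⟨hβ, fun i hi j hj ↦ hpath.injOn hi hj, hend β.zero_le (by omega), hend le_rfl (by omega),
    fun i hi hiβ hmem ↦ ?_, hpath.adj, hpath.not_adj, fun i hi hiβ w hw hadj ↦ ?_⟩
  · exact (Finset.mem_sdiff.1 hmem).2 (Finset.mem_image_of_mem p (Finset.mem_Ioo.2 ⟨hi, hiβ⟩))
  · have hwS : w ∈ S := by
      rcases hw with hw | ⟨j, -, rfl⟩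
      exacts [(Finset.mem_sdiff.1 hw).1, hp.mem j]
    obtain ⟨i, rfl⟩ := Nat.exists_eq_add_of_lt hi
    rw [zero_add] at *
    exact eq_or_eq_of_degIn_eq_two (hp.degIn_eq_two _ ⟨hi, hiβ⟩) (hp.mem i) (hp.mem (i + 2))
      (hp.ne i) (hp.adj i).symm (hp.adj _) hwS hadj

lemma weaklyBuildableOn_of_congestion [Finite W] (hβ : 2 ≤ β)
    (hκ : 3 * congestion H * (β - 1) ≤ 1) (hκ' : congestion H * (β + 1) < 1) (S : Finset W) :
    WeaklyBuildableOn H β S := by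
  classical
  induction S using Finset.strongInduction with | H S ih =>
  obtain rfl | hS := S.eq_empty_or_nonempty
  · exact Finset.coe_empty ▸ .empty
  by_cases hmin : ∀ v ∈ S, 2 ≤ degIn H v S
  · obtain ⟨p, hp⟩ := exists_isThread hβ hκ hS hmin
    have hhandle := hp.isHandle hβ (hp.isInducedPath hκ')
    have hsub : (Finset.Ioo 0 β).image p ⊆ S := Finset.image_subset_iff.2 fun i _ ↦ hp.mem i
    have hne : ((Finset.Ioo 0 β).image p).Nonempty :=
      ⟨p 1, Finset.mem_image_of_mem p (Finset.mem_Ioo.2 ⟨one_pos, hβ⟩)⟩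
    have hbuild := WeaklyBuildableOn.handle _ β p (ih _ (Finset.sdiff_ssubset hsub hne)) hhandle
      le_rfl
    rwa [hhandle.union_eq, ← Finset.coe_Ioo, ← Finset.coe_image, ← Finset.coe_union,
      Finset.sdiff_union_of_subset hsub] at hbuild
  · push Not at hmin
    obtain ⟨v, hv, hdeg⟩ := hmin
    have hncard : (↑(S.erase v) ∩ H.neighborSet v).ncard ≤ 1 := by
      have hsub : (↑(S.erase v) ∩ H.neighborSet v : Set W) ⊆ ↑({w ∈ S | H.Adj v w} : Finset W) :=
        fun w hw ↦ Finset.mem_filter.2 ⟨Finset.mem_of_mem_erase hw.1, hw.2⟩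
      have hle := Set.ncard_le_ncard hsub (Set.toFinite _)
      rw [Set.ncard_coe_finset] at hle
      exact hle.trans (Nat.lt_succ_iff.1 hdeg)
    have hbuild := WeaklyBuildableOn.subleaf _ v (Finset.notMem_erase v S) hncard
      (ih _ (Finset.erase_ssubset hv))
    rwa [← Finset.coe_insert, Finset.insert_erase hv] at hbuild

end Threads

/-! ### Sparse coherent graphs -/

section SparseCoherent

open Filter
open scoped Finset

universe u v

variable {G : SimpleGraph V} {H : SimpleGraph W} {x y : V} {γ ε c : ℝ} {R : ℕ}

lemma Coherent.one_lt_of_not_adj (h : Coherent G γ γ) (hxy : x ≠ y) (hadj : ¬ G.Adj x y) :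
    1 < γ := by
  by_contra! hγ
  refine h ⟨{x}, {y}, Set.disjoint_singleton.2 hxy, ?_, ?_, ?_⟩
  · rintro _ rfl _ rfl
    exact hadj
  all_goals rwa [Set.ncard_singleton, Nat.cast_one]

lemma EpsSparse.exists_not_adj [Fintype V] (hs : EpsSparse G ε) (hε : ε ≤ 1 / 2)
    (hV : 1 < Fintype.card V) : ∃ x y, x ≠ y ∧ ¬ G.Adj x y := by
  obtain ⟨x⟩ := Fintype.card_pos_iff.1 (zero_lt_one.trans hV)
  refine ⟨x, ?_⟩
  by_contra! hadj
  have hsub : ({x}ᶜ : Set V) ⊆ G.neighborSet x := fun y hy ↦ hadj y (Ne.symm hy)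
  have hle := Set.ncard_le_ncard hsub (Set.toFinite _)
  have hcompl := Set.ncard_add_ncard_compl ({x} : Set V)
  rw [Set.ncard_singleton, Nat.card_eq_fintype_card] at hcompl
  have hdeg : (Fintype.card V : ℝ) ≤ (G.neighborSet x).ncard + 1 := by
    exact_mod_cast (by omega : Fintype.card V ≤ (G.neighborSet x).ncard + 1)
  have hV' : (2 : ℝ) ≤ Fintype.card V := by exact_mod_cast hV
  linarith [hs x, mul_le_mul_of_nonneg_right hε (Nat.cast_nonneg (Fintype.card V))]

lemma EpsSparse.one_lt_of_coherent [Fintype V] (hs : EpsSparse G ε) (hε : ε ≤ 1 / 2)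
    (hV : 1 < Fintype.card V) (h : Coherent G γ γ) : 1 < γ := by
  obtain ⟨x, y, hxy, hadj⟩ := hs.exists_not_adj hε hV
  exact h.one_lt_of_not_adj hxy hadj

lemma exists_disjoint_card_le_mul_card [Fintype V] {K : ℕ} (hK : 0 < K)
    (hKV : K ≤ Fintype.card V) : ∃ A : ℕ → Finset V,
      (∀ i < K, ∀ j < K, i ≠ j → Disjoint (A i) (A j)) ∧
      ∀ i < K, Fintype.card V ≤ 2 * K * #(A i) := by
  classical
  set s := Fintype.card V / K
  have : Nonempty V := Fintype.card_pos_iff.1 (hK.trans_le hKV)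
  have hcard : (↑(Finset.range K ×ˢ Finset.range s) : Set (ℕ × ℕ)).encard ≤
      (Set.univ : Set V).encard := by
    rw [Set.encard_coe_eq_coe_finsetCard, Set.encard_univ, ENat.card_eq_coe_fintype_card,
      Finset.card_product, Finset.card_range, Finset.card_range]
    exact_mod_cast Nat.mul_div_le _ _
  obtain ⟨f, -, hf⟩ := (Finset.finite_toSet _).exists_injOn_of_encard_le hcard
  have hmem {i j : ℕ} (hi : i < K) (hj : j < s) :
      (i, j) ∈ (↑(Finset.range K ×ˢ Finset.range s) : Set (ℕ × ℕ)) :=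
    Finset.mk_mem_product (Finset.mem_range.2 hi) (Finset.mem_range.2 hj)
  refine ⟨fun i ↦ (Finset.range s).image fun j ↦ f (i, j), fun i hi j hj hij ↦ ?_, fun i hi ↦ ?_⟩
  · simp only [Finset.disjoint_left, Finset.mem_image, Finset.mem_range]
    rintro _ ⟨a, ha, rfl⟩ ⟨b, hb, heq⟩
    exact hij (Prod.ext_iff.1 (hf (hmem hj hb) (hmem hi ha) heq)).1.symm
  · rw [Finset.card_image_of_injOn, Finset.card_range]
    · have hs : 1 ≤ s := (Nat.one_le_div_iff hK).2 hKV
      have hlt : Fintype.card V < K * (s + 1) := Nat.lt_mul_div_succ _ hK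
      nlinarith
    · intro a ha b hb heq
      rw [Finset.mem_coe, Finset.mem_range] at ha hb
      exact (Prod.ext_iff.1 (hf (hmem hi ha) (hmem hi hb) heq)).2

lemma EpsSparse.coherentBlockade [Fintype V] [Nonempty V] {ι : Type*} {I : Finset ι}
    {A : ι → Finset V} {σ θ lam : ℝ} (hs : EpsSparse G ε)
    (hco : Coherent G (ε * (Fintype.card V : ℝ) ^ (1 - c)) (ε * (Fintype.card V : ℝ) ^ (1 - c)))
    (hε : 0 ≤ ε) (hε1 : ε ≤ 1) (hθ : θ ≤ (Fintype.card V : ℝ) ^ σ) (hlam : ε * θ ≤ lam)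
    (hdisj : ∀ i ∈ I, ∀ j ∈ I, i ≠ j → Disjoint (A i) (A j))
    (hA : ∀ i ∈ I, (Fintype.card V : ℝ) ≤ θ * #(A i)) :
    CoherentBlockade G (Fintype.card V) c I A σ lam where
  disjoint := hdisj
  le_card i hi := by
    have hn : (0 : ℝ) < Fintype.card V := by exact_mod_cast Fintype.card_pos
    refine le_of_mul_le_mul_left ?_ (Real.rpow_pos_of_pos hn σ)
    calc (Fintype.card V : ℝ) ^ σ * (Fintype.card V : ℝ) ^ (1 - σ) = Fintype.card V := by
          rw [← Real.rpow_add hn, add_sub_cancel, Real.rpow_one]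
      _ ≤ θ * #(A i) := hA i hi
      _ ≤ (Fintype.card V : ℝ) ^ σ * #(A i) := by gcongr
  card_le i _ := by exact_mod_cast Finset.card_le_univ (A i)
  degIn_le i _ j hj _ t _ := by
    classical
    have hdeg : degIn G t (A j) ≤ (G.neighborSet t).ncard := by
      rw [degIn, ← Set.ncard_coe_finset]
      exact Set.ncard_le_ncard (fun z hz ↦ (Finset.mem_filter.1 hz).2) (Set.toFinite _)
    calc (degIn G t (A j) : ℝ) ≤ (G.neighborSet t).ncard := by exact_mod_cast hdeg
      _ ≤ ε * Fintype.card V := (hs t).le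
      _ ≤ ε * (θ * #(A j)) := by gcongr; exact hA j hj
      _ = ε * θ * #(A j) := (mul_assoc _ _ _).symm
      _ ≤ lam * #(A j) := by gcongr
  exists_adj i hi j hj hij X hX Z hZ hXcard hZcard := by
    by_contra! hanti
    have hpow : ε * (Fintype.card V : ℝ) ^ (1 - c) ≤ (Fintype.card V : ℝ) ^ (1 - c) :=
      mul_le_of_le_one_left (by positivity) hε1
    refine hco ⟨X, Z, Finset.disjoint_coe.2 ((hdisj i hi j hj hij).mono hX hZ), hanti, ?_, ?_⟩
    · exact Set.ncard_coe_finset X ▸ hpow.trans hXcard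
    · exact Set.ncard_coe_finset Z ▸ hpow.trans hZcard

lemma IsRainbowEmbedding.contains {ι : Type*} {I : Finset ι} {A : ι → Finset V} {f : W → V}
    {q : W → ι} (h : IsRainbowEmbedding H Set.univ G I A f q)
    (hdisj : ∀ i ∈ I, ∀ j ∈ I, i ≠ j → Disjoint (A i) (A j)) : Contains G H := by
  refine ⟨⟨⟨f, fun a b hab ↦ ?_⟩, h.adj_iff _ trivial _ trivial⟩⟩
  by_contra hne
  have hq : q a ≠ q b := fun heq ↦ hne (h.injOn trivial trivial heq)
  exact Finset.disjoint_left.1 (hdisj _ (h.index_mem a trivial) _ (h.index_mem b trivial) hq)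
    (h.mem_block a trivial) (hab ▸ h.mem_block b trivial)

theorem RainbowUnavoidable.exists_forall_contains
    (h : RainbowUnavoidable.{u} ℕ H R c Set.univ) (hR : 1 ≤ R) (hc : 0 ≤ c)
    (hRc : 1 - c < R * c) :
    ∃ ε : ℝ, 0 < ε ∧ ∀ {V : Type u} [Fintype V] (G : SimpleGraph V),
      1 < Fintype.card V → EpsSparse G ε →
      Coherent G (ε * (Fintype.card V : ℝ) ^ (1 - c)) (ε * (Fintype.card V : ℝ) ^ (1 - c)) →
      Contains G H := by
  obtain ⟨σ, hσ, hRσ⟩ := exists_pos_lt_mul_sub_add (σ := 0) hR (by rwa [sub_zero])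
  rw [zero_add] at hRσ
  obtain ⟨K, lam, hlam, hembed⟩ := h σ hRσ
  set θ : ℝ := 2 * (K + 1) with hθ
  have hθ2 : 2 ≤ θ := by linarith [(Nat.cast_nonneg K : (0 : ℝ) ≤ K)]
  obtain ⟨N, hN⟩ := eventually_atTop.1
    (hembed.and ((tendsto_rpow_atTop hσ).eventually_ge_atTop θ))
  have hM : 0 < max N θ := lt_max_of_lt_right (by linarith)
  set ε := min (1 / max N θ) (lam / θ)
  have hε : 0 < ε := lt_min (by positivity) (by positivity)
  have hεM : ε * max N θ ≤ 1 := (le_div_iff₀ hM).1 (min_le_left _ _)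
  have hεlam : ε * θ ≤ lam := (le_div_iff₀ (by linarith)).1 (min_le_right _ _)
  have hε2 : ε ≤ 1 / 2 := by
    linarith [mul_le_mul_of_nonneg_left (hθ2.trans (le_max_right N θ)) hε.le]
  refine ⟨ε, hε, fun {V} _ G hV hs hco ↦ ?_⟩
  have : Nonempty V := Fintype.card_pos_iff.1 (zero_lt_one.trans hV)
  have hpow : (Fintype.card V : ℝ) ^ (1 - c) ≤ Fintype.card V :=
    Real.rpow_le_self_of_one_le (by exact_mod_cast hV.le) (by linarith)
  have hlarge : max N θ ≤ Fintype.card V := by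
    refine le_of_mul_le_mul_left ?_ hε
    linarith [hs.one_lt_of_coherent hε2 hV hco, mul_le_mul_of_nonneg_left hpow hε.le]
  have hKV : K + 1 ≤ Fintype.card V := by
    have := (le_max_right N θ).trans hlarge
    exact_mod_cast (by linarith : (K + 1 : ℝ) ≤ Fintype.card V)
  obtain ⟨A, hdisj, hA⟩ := exists_disjoint_card_le_mul_card K.succ_pos hKV
  simp only [← Finset.mem_range] at hdisj hA
  obtain ⟨hembed, hθV⟩ := hN _ ((le_max_left N θ).trans hlarge)
  have hblock := hs.coherentBlockade hco hε.le (by linarith) hθV hεlam hdisj fun i hi ↦ by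
    rw [hθ]
    exact_mod_cast hA i hi
  obtain ⟨f, q, hfq⟩ := hembed hblock (by simp)
  exact hfq.contains hdisj

lemma exists_weaklyBuildableOn_of_congestion_le [Finite W] (hc : 0 < c) (hc1 : c < 1)
    (hcong : congestion H ≤ c / (9 + 6 * c)) :
    ∃ R : ℕ, 1 ≤ R ∧ 1 - c < R * c ∧ WeaklyBuildableOn H (3 * R + 3) Set.univ := by
  classical
  have := Fintype.ofFinite W
  have hR : (⌊1 / c⌋₊ : ℝ) * c ≤ 1 := (le_div_iff₀ hc).1 (Nat.floor_le (by positivity))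
  have hR' : 1 < (⌊1 / c⌋₊ + 1) * c := (div_lt_iff₀ hc).1 (Nat.lt_floor_add_one _)
  set R := ⌊1 / c⌋₊
  have hκ : congestion H * (9 + 6 * c) ≤ c := (le_div_iff₀ (by positivity)).1 hcong
  have hκR : congestion H * (R * c) ≤ congestion H :=
    mul_le_of_le_one_right (congestion_nonneg H) hR
  refine ⟨R, Nat.le_floor (by simpa using (one_le_div hc).2 hc1.le), by linarith, ?_⟩
  rw [← Finset.coe_univ]
  refine weaklyBuildableOn_of_congestion (by omega) ?_ ?_ _
  · refine le_of_mul_le_mul_right ?_ hc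
    push_cast
    linarith
  · refine lt_of_mul_lt_mul_right ?_ hc.le
    push_cast
    linarith [congestion_nonneg H, mul_nonneg (congestion_nonneg H) hc.le]

theorem statement_3_general (c : ℝ) (hc : 0 < c) {W : Type v} [Finite W] (H : SimpleGraph W)
    (hcong : congestion H ≤ c / (9 + 6 * c)) :
    ∃ ε : ℝ, 0 < ε ∧ ∀ {V : Type u} [Fintype V] (G : SimpleGraph V),
      1 < Fintype.card V → EpsSparse G ε →
      Coherent G (ε * (Fintype.card V : ℝ) ^ (1 - c)) (ε * (Fintype.card V : ℝ) ^ (1 - c)) →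
      Contains G H := by
  rcases lt_or_ge c 1 with hc1 | hc1
  · obtain ⟨R, hR, hRc, hbuild⟩ := exists_weaklyBuildableOn_of_congestion_le hc hc1 hcong
    exact (hbuild.rainbowUnavoidable hR hc1).exists_forall_contains hR hc.le hRc
  · refine ⟨1 / 2, one_half_pos, fun {V} _ G hV hs hco ↦ ?_⟩
    have hpow : (Fintype.card V : ℝ) ^ (1 - c) ≤ 1 :=
      Real.rpow_le_one_of_one_le_of_nonpos (by exact_mod_cast hV.le) (by linarith)
    linarith [hs.one_lt_of_coherent le_rfl hV hco]

end SparseCoherent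

/-- if `H` has congestion at most `c/(9+15c)`, then there is `ε > 0`
such that every `ε`-sparse `(ε|G|^{1-c}, ε|G|^{1-c})`-coherent graph `G` with
`|G| > 1` contains `H`. -/
theorem statement_3 (c : ℝ) (hc : 0 < c) {W : Type} [Fintype W] (H : SimpleGraph W)
    (hcong : congestion H ≤ c / (9 + 15 * c)) :
    ∃ ε : ℝ, 0 < ε ∧ ∀ {V : Type} [Fintype V] (G : SimpleGraph V),
      1 < Fintype.card V → EpsSparse G ε →
      Coherent G (ε * (Fintype.card V : ℝ) ^ (1 - c))
        (ε * (Fintype.card V : ℝ) ^ (1 - c)) →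
      Contains G H := by
  exact statement_3_general c hc H
    (hcong.trans (div_le_div_of_nonneg_left hc.le (by positivity) (by linarith)))

end PurePairs
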